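/- arXiv:math/0511488 — 2 statements merged into one kernel-verified Lean document; each statement's English description precedes it below -/
import Mathlib

section
/- (Stenson; odd-dimensional case of Kalai's identity) For every polytope P of odd dimension d = 2k+1 (k ≥ 0): (k+2)·g_k(P) = Σ_{i=0}^{k} (i+1) · Σ_{F} g_i(F)·g_{k−i}(P/F), where the inner sum runs over all faces F of P with dim F = 2i. -/
open Classical Polynomial

section PolytopeDefs

variable {V : Type*} [AddCommGroup V] [Module ℝ V]

/-- A polytope: the convex hull of finitely many points. -/
def IsPolytope (P : Set V) : Prop := ∃ S : Finset V, P = convexHull ℝ (S : Set V)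

/-- Faces of a polytope (or of a cone): the set itself, the empty face, and the
sets of maximizers of linear functionals (equivalently, intersections with
supporting hyperplanes). -/
def IsFace (P F : Set V) : Prop :=
  F = P ∨ F = ∅ ∨ ∃ l : V →ₗ[ℝ] ℝ, F = {x | x ∈ P ∧ ∀ y ∈ P, l y ≤ l x}

/-- Dimension of a polytope: the dimension of its affine span, with the
convention `pdim ∅ = -1`. -/
noncomputable def pdim (P : Set V) : ℤ :=
  if P = ∅ then -1 else (Module.finrank ℝ (affineSpan ℝ P).direction : ℤ)

/-- The `g`-truncation: from the toric `h`-polynomial of a `d`-dimensional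
polytope to its toric `g`-polynomial, via `g_k = h_k - h_{k-1}` for
`0 ≤ k ≤ d/2`, with `h_{-1} = 0`. -/
noncomputable def truncG (d : ℤ) (h : Polynomial ℚ) : Polynomial ℚ :=
  ∑ k ∈ Finset.range (d.toNat / 2 + 1),
    Polynomial.C (h.coeff k - if k = 0 then 0 else h.coeff (k - 1)) * Polynomial.X ^ k

/-- Fuelled recursion computing the toric `h`-polynomial of the interval `[F,G]`
of a face lattice (with `F` playing the role of the empty face):
`h([F,G],t) = ∑_{F ≤ G' < G} g([F,G'],t) · (t-1)^{dim G - dim G' - 1}`. -/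
noncomputable def relHAux : ℕ → Set V → Set V → Polynomial ℚ
  | 0, _, _ => 1
  | n + 1, F, G =>
      if G = F then 1
      else ∑ᶠ G' ∈ {G' : Set V | IsFace G G' ∧ F ⊆ G' ∧ G' ≠ G},
        truncG (pdim G' - pdim F - 1) (relHAux n F G') *
          (Polynomial.X - 1) ^ (pdim G - pdim G' - 1).toNat

/-- The toric `h`-polynomial of the interval `[F,G]` in a face lattice. -/
noncomputable def relH (F G : Set V) : Polynomial ℚ := relHAux (pdim G + 1).toNat F G

/-- The toric `g`-polynomial of the interval `[F,G]` in a face lattice;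
`relG F P` is the polynomial `g(P/F, t)`. -/
noncomputable def relG (F G : Set V) : Polynomial ℚ :=
  truncG (pdim G - pdim F - 1) (relH F G)

/-- The toric `h`-polynomial `h(P,t)` of a polytope `P`. -/
noncomputable def toricH (P : Set V) : Polynomial ℚ := relH ∅ P

/-- The toric `g`-polynomial `g(P,t)` of a polytope `P`. -/
noncomputable def toricG (P : Set V) : Polynomial ℚ := relG ∅ P

end PolytopeDefs

namespace Stenson

lemma reflect_X_sub_one_pow (n : ℕ) : reflect n ((X - 1 : ℚ[X]) ^ n) = (1 - X) ^ n := by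
  induction n with
  | zero => ext j; simp [coeff_reflect, coeff_one, revAt]
  | succ n ih =>
    rw [pow_succ, reflect_mul _ _ (F := n) (G := 1), ih, pow_succ]
    · congr 1
      have h1 : (X - 1 : ℚ[X]) = C 1 * X ^ 1 - C 1 * X ^ 0 := by simp
      rw [h1, reflect_sub]
      simp only [reflect_C_mul_X_pow]
      rw [revAt_le le_rfl, revAt_le (Nat.zero_le 1)]; simp
    · refine (natDegree_pow_le).trans ?_
      have : (X - 1 : ℚ[X]).natDegree = 1 := by
        have := natDegree_X_sub_C (1 : ℚ); simpa using this
      rw [this]; simp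
    · have := natDegree_X_sub_C (1 : ℚ); simp at this; rw [this]

noncomputable def Mop (n : ℕ) (f : ℚ[X]) : ℚ[X] := (X - 1) * derivative f - C (n : ℚ) * f

lemma Mop_mul (a b : ℕ) (f g : ℚ[X]) : Mop (a + b) (f * g) = Mop a f * g + f * Mop b g := by
  simp only [Mop, derivative_mul, Nat.cast_add, C_add]; ring

lemma Mop_pow (n : ℕ) : Mop n ((X - 1) ^ n) = 0 := by
  induction n with
  | zero => simp [Mop]
  | succ n ih =>
    rw [pow_succ, Mop_mul, ih]; simp [Mop]

lemma Mop_coeff (n : ℕ) (f : ℚ[X]) (j : ℕ) :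
    (Mop n f).coeff j = ((j : ℚ) - n) * f.coeff j - (j + 1) * f.coeff (j + 1) := by
  have : Mop n f = X * derivative f - derivative f - C (n : ℚ) * f := by rw [Mop]; ring
  rw [this]
  cases j with
  | zero => simp [coeff_derivative]; ring
  | succ j => simp [coeff_derivative]; ring

lemma Mop_reflect (n : ℕ) (f : ℚ[X]) (hf : f.natDegree ≤ n + 1) :
    reflect n (Mop (n + 1) f) = Mop (n + 1) (reflect (n + 1) f) := by
  ext j
  rw [coeff_reflect, Mop_coeff, Mop_coeff, coeff_reflect, coeff_reflect]
  have hz : ∀ m, n + 1 < m → f.coeff m = 0 := fun m hm => coeff_eq_zero_of_natDegree_lt (by omega)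
  rcases lt_trichotomy j (n + 1) with h | h | h
  · obtain ⟨m, rfl⟩ : ∃ m, n = j + m := ⟨n - j, by omega⟩
    rw [revAt_le (by omega), revAt_le (by omega), revAt_le (by omega)]
    have e1 : j + m - j = m := by omega
    have e2 : j + m + 1 - j = m + 1 := by omega
    have e3 : j + m + 1 - (j + 1) = m := by omega
    rw [e1, e2, e3]; push_cast; ring
  · subst h
    rw [revAt_eq_self_of_lt (by omega), revAt_le (by omega), revAt_eq_self_of_lt (by omega),
      hz (n + 1 + 1) (by omega)]
    simp
  · rw [revAt_eq_self_of_lt (by omega), revAt_eq_self_of_lt (by omega), revAt_eq_self_of_lt (by omega),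
      hz j (by omega), hz (j + 1) (by omega)]

section comb
variable {L : Type*} [Fintype L] [PartialOrder L]


/-- closed interval -/
noncomputable def ci (x y : L) : Finset L := Finset.univ.filter (fun z => x ≤ z ∧ z ≤ y)
/-- half-open interval -/
noncomputable def ho (x y : L) : Finset L := Finset.univ.filter (fun z => x ≤ z ∧ z < y)

lemma mem_ci {x y z : L} : z ∈ ci x y ↔ x ≤ z ∧ z ≤ y := by simp [ci]
lemma mem_ho {x y z : L} : z ∈ ho x y ↔ x ≤ z ∧ z < y := by simp [ho]

lemma sum_ci {M : Type*} [AddCommMonoid M] {x y : L} (h : x ≤ y) (f : L → M) :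
    ∑ z ∈ ci x y, f z = ∑ z ∈ ho x y, f z + f y := by
  have : ci x y = insert y (ho x y) := by
    ext z; simp only [mem_ci, mem_ho, Finset.mem_insert, lt_iff_le_and_ne]
    constructor
    · rintro ⟨a, b⟩; by_cases hz : z = y
      · exact Or.inl hz
      · exact Or.inr ⟨a, b, hz⟩
    · rintro (rfl | ⟨a, b, -⟩)
      · exact ⟨h, le_rfl⟩
      · exact ⟨a, b⟩
  rw [this, Finset.sum_insert (by simp [mem_ho]), add_comm]

variable (ρ : L → ℕ) (hρ : StrictMono ρ)
  (eul : ∀ x y : L, x < y → ∑ z ∈ ci x y, (-1 : ℚ) ^ ρ z = 0)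
  (g : L → L → ℚ[X]) (g_self : ∀ x, g x x = 1)
  (hg : ∀ x y, x < y → ∀ j, (g x y).coeff j = if 2 * j < ρ y - ρ x then
    - (∑ z ∈ ho x y, g x z * (X - 1) ^ (ρ y - ρ z)).coeff j else 0)

include hρ g_self hg in
lemma g_coeff_zero {x y : L} (h : x < y) {j : ℕ} (hj : ρ y - ρ x ≤ 2 * j) : (g x y).coeff j = 0 := by
  rw [hg x y h, if_neg (by omega)]

include hρ g_self hg in
lemma g_deg {x y : L} (h : x ≤ y) : (g x y).natDegree ≤ ρ y - ρ x := by
  rcases h.eq_or_lt with rfl | h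
  · simp [g_self]
  · rw [natDegree_le_iff_coeff_eq_zero]
    intro j hj
    exact g_coeff_zero ρ hρ g g_self hg h (by omega)

lemma natDegree_X_sub_one_pow (n : ℕ) : ((X - 1 : ℚ[X]) ^ n).natDegree ≤ n := by
  refine (natDegree_pow_le).trans ?_
  have : (X - 1 : ℚ[X]).natDegree = 1 := by
    have := natDegree_X_sub_C (1 : ℚ); simpa using this
  rw [this]; simp

lemma reflect_sum' {ι : Type*} (s : Finset ι) (n : ℕ) (f : ι → ℚ[X]) :
    reflect n (∑ i ∈ s, f i) = ∑ i ∈ s, reflect n (f i) := by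
  ext j; simp [coeff_reflect, finsetSum_coeff]

include hρ eul g_self hg in
lemma kls (x : L) : ∀ n y, ρ y = n → x ≤ y → reflect (ρ y - ρ x) (g x y) =
    ∑ z ∈ ci x y, g x z * (X - 1) ^ (ρ y - ρ z) := by
  intro n
  induction n using Nat.strong_induction_on with
  | _ n ih =>
  rintro y rfl hxy
  rcases hxy.eq_or_lt with rfl | hlt
  · have : ci x x = {x} := by ext z; simp [mem_ci, le_antisymm_iff, and_comm]
    rw [this]; simp [g_self]
  set f := ∑ z ∈ ho x y, g x z * (X - 1) ^ (ρ y - ρ z) with hf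
  have hmono := hρ hlt
  have anti : reflect (ρ y - ρ x) f = - f := by
    rw [hf, reflect_sum']
    have step : ∀ z ∈ ho x y, reflect (ρ y - ρ x) (g x z * (X - 1) ^ (ρ y - ρ z)) =
        ∑ w ∈ ci x z, g x w * (X - 1) ^ (ρ y - ρ w) * C ((-1) ^ (ρ y - ρ z)) := by
      intro z hz
      rw [mem_ho] at hz
      have h1 := hρ hz.2
      have h2 := hρ.monotone hz.1
      have : ρ y - ρ x = (ρ z - ρ x) + (ρ y - ρ z) := by omega
      rw [this, reflect_mul _ _ (g_deg ρ hρ g g_self hg hz.1) (natDegree_X_sub_one_pow _),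
        ih (ρ z) h1 z rfl hz.1, reflect_X_sub_one_pow, Finset.sum_mul]
      refine Finset.sum_congr rfl fun w hw => ?_
      rw [mem_ci] at hw
      have h3 := hρ.monotone hw.2
      have : ρ y - ρ w = (ρ z - ρ w) + (ρ y - ρ z) := by omega
      have e : (1 - X : ℚ[X]) = (X - 1) * C (-1) := by simp
      rw [this, pow_add, e, mul_pow, C_pow]; ring
    rw [Finset.sum_congr rfl step, Finset.sum_comm' (t' := ho x y) (s' := fun w => ho w y)]
    · rw [← Finset.sum_neg_distrib]
      refine Finset.sum_congr rfl fun w hw => ?_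
      rw [mem_ho] at hw
      rw [← Finset.mul_sum, ← map_sum]
      have hthis := eul w y hw.2
      rw [sum_ci hw.2.le] at hthis
      have h2 : ∑ z ∈ ho w y, (-1 : ℚ) ^ (ρ y - ρ z) = -1 := by
        have : ∀ z ∈ ho w y, (-1 : ℚ) ^ (ρ y - ρ z) = (-1) ^ ρ y * (-1) ^ ρ z := by
          intro z hz
          rw [mem_ho] at hz
          have h1 := hρ hz.2
          have e : ρ y = (ρ y - ρ z) + ρ z := by omega
          conv_rhs => rw [e, pow_add]
          rw [mul_assoc, ← mul_pow]; simp
        rw [Finset.sum_congr rfl this, ← Finset.mul_sum, eq_neg_of_add_eq_zero_left hthis,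
          mul_neg, ← mul_pow]; simp
      rw [h2]; simp
    · intro z w
      simp only [mem_ho, mem_ci]
      constructor
      · rintro ⟨⟨a, b⟩, c, d⟩; exact ⟨⟨d, b⟩, c, d.trans_lt b⟩
      · rintro ⟨⟨a, b⟩, c, d⟩; exact ⟨⟨c.trans a, b⟩, c, a⟩
  rw [sum_ci hxy, ← hf]
  simp only [Nat.sub_self, pow_zero, mul_one]
  have hco := hg x y hlt
  have hfd : ∀ j, ρ y - ρ x < j → f.coeff j = 0 := by
    intro j hj
    have := congrArg (fun p => coeff p j) anti
    simp only [coeff_reflect, revAt_eq_self_of_lt hj, coeff_neg] at this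
    linarith
  ext j
  have ha := congrArg (fun p => coeff p j) anti
  simp only [coeff_reflect, coeff_neg] at ha
  rw [coeff_reflect, coeff_add, hco, hco, ← hf, ha]
  by_cases hj : ρ y - ρ x < j
  · rw [revAt_eq_self_of_lt hj, hfd j hj]
    simp
  · rw [revAt_le (by omega)] at *
    rcases lt_trichotomy (2 * j) (ρ y - ρ x) with h | h | h
    · rw [if_neg (by omega), if_pos h]; ring
    · have : ρ y - ρ x - j = j := by omega
      rw [this] at ha ⊢
      have h0 : f.coeff j = 0 := by linarith
      simp [h0]
    · rw [if_pos (by omega), if_neg (by omega)]; ring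

noncomputable def cf (x z : L) : ℚ[X] :=
  if Odd (ρ z - ρ x) then
    C ((((ρ z - ρ x) / 2 : ℕ) + 1 : ℚ) * (g x z).coeff ((ρ z - ρ x) / 2)) * X ^ ((ρ z - ρ x) / 2)
  else 0

noncomputable def Sf (x y : L) : ℚ[X] := ∑ z ∈ ci x y, cf ρ g x z * g z y

noncomputable def Qf (x y : L) : ℚ[X] := Mop (ρ y - ρ x) (g x y) + Sf ρ g x y

include hρ eul g_self hg in
lemma Qf_zero (x : L) : ∀ n y, ρ y = n → x ≤ y → Qf ρ g x y = 0 := by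
  intro n
  induction n using Nat.strong_induction_on with
  | _ n ih =>
  rintro y rfl hxy
  rcases hxy.eq_or_lt with rfl | hlt
  · have : ci x x = {x} := by ext z; simp [mem_ci, le_antisymm_iff, and_comm]
    simp [Qf, Sf, cf, this, g_self, Mop]
  have hmono := hρ hlt
  obtain ⟨m, hm⟩ : ∃ m, ρ y - ρ x = m + 1 := ⟨ρ y - ρ x - 1, by omega⟩
  have key : reflect m (Qf ρ g x y) = Qf ρ g x y := by
    have hsum : Qf ρ g x y = ∑ w ∈ ci x y, Qf ρ g x w * (X - 1) ^ (ρ y - ρ w) := by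
      rw [sum_ci hxy, Finset.sum_eq_zero]
      · simp
      · intro w hw
        rw [mem_ho] at hw
        rw [ih (ρ w) (hρ hw.2) w rfl hw.1, zero_mul]
    conv_rhs => rw [hsum]
    have hd := g_deg ρ hρ g g_self hg hxy
    rw [Qf, reflect_add, hm, Mop_reflect _ _ (by omega), ← hm,
      kls ρ hρ eul g g_self hg x _ y rfl hxy]
    simp only [Qf, add_mul, Finset.sum_add_distrib]
    congr 1
    · have : ∀ s : Finset L, ∀ f : L → ℚ[X], Mop (ρ y - ρ x) (∑ z ∈ s, f z) = ∑ z ∈ s, Mop (ρ y - ρ x) (f z) := by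
        intro s f; simp [Mop, Finset.mul_sum, Finset.sum_sub_distrib]
      rw [this]
      refine Finset.sum_congr rfl fun w hw => ?_
      rw [mem_ci] at hw
      have h1 := hρ.monotone hw.1
      have h2 := hρ.monotone hw.2
      have : ρ y - ρ x = (ρ w - ρ x) + (ρ y - ρ w) := by omega
      rw [this, Mop_mul, Mop_pow]; simp
    · rw [Sf, reflect_sum']
      have step : ∀ z ∈ ci x y, reflect m (cf ρ g x z * g z y) =
          ∑ w ∈ ci z y, cf ρ g x z * g z w * (X - 1) ^ (ρ y - ρ w) := by
        intro z hz
        rw [mem_ci] at hz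
        have h1 := hρ.monotone hz.1
        have h2 := hρ.monotone hz.2
        rw [cf]
        split_ifs with ho
        · obtain ⟨i, hi⟩ := ho
          have hi2 : (ρ z - ρ x) / 2 = i := by omega
          rw [hi2]
          have e : m = (i + i) + (ρ y - ρ z) := by omega
          rw [e, reflect_mul _ _ ((natDegree_C_mul_X_pow_le _ _).trans (by omega))
            (g_deg ρ hρ g g_self hg hz.2), reflect_C_mul_X_pow, revAt_le (by omega),
            kls ρ hρ eul g g_self hg z _ y rfl hz.2, Finset.mul_sum]
          simp only [Nat.add_sub_cancel, mul_assoc]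
        · simp
      rw [Finset.sum_congr rfl step, Finset.sum_comm' (t' := ci x y) (s' := fun w => ci x w)]
      · simp only [Sf, Finset.sum_mul]
      · intro z w
        simp only [mem_ci]
        constructor
        · rintro ⟨⟨a, b⟩, c, d⟩; exact ⟨⟨a, c⟩, a.trans c, d⟩
        · rintro ⟨⟨a, b⟩, c, d⟩; exact ⟨⟨a, b.trans d⟩, b, d⟩
  have hi : ∀ j, m ≤ 2 * j → (Qf ρ g x y).coeff j = 0 := by
    intro j hj
    rw [Qf, coeff_add, Mop_coeff, g_coeff_zero ρ hρ g g_self hg hlt (j := j + 1) (by omega),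
      Sf, sum_ci hxy, coeff_add, finsetSum_coeff, Finset.sum_eq_zero]
    · rw [g_self, mul_one, cf]
      split_ifs with hodd
      · obtain ⟨i, hi⟩ := hodd
        have hi2 : (ρ y - ρ x) / 2 = i := by omega
        rw [hi2, coeff_C_mul_X_pow]
        split_ifs with hji
        · subst hji; rw [hi]; push_cast; ring
        · rw [g_coeff_zero ρ hρ g g_self hg hlt (j := j) (by omega)]; ring
      · have : ¬ Odd (m + 1) := by rwa [← hm]
        rw [g_coeff_zero ρ hρ g g_self hg hlt (j := j) ?_]
        · simp
        · rw [Nat.not_odd_iff_even] at this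
          obtain ⟨q, hq⟩ := this
          omega
    · intro z hz
      rw [mem_ho] at hz
      have h1 := hρ.monotone hz.1
      have h2 := hρ hz.2
      rw [cf]
      split_ifs with ho
      · obtain ⟨i, hi⟩ := ho
        have hi2 : (ρ z - ρ x) / 2 = i := by omega
        rw [hi2, mul_assoc, coeff_C_mul, coeff_X_pow_mul']
        split_ifs with hij
        · rw [g_coeff_zero ρ hρ g g_self hg hz.2 (by omega)]; simp
        · simp
      · simp
  ext j
  by_cases hj : m ≤ 2 * j
  · simpa using hi j hj
  · rw [← key, coeff_reflect, revAt_le (by omega)]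
    simpa using hi (m - j) (by omega)

include hρ eul g_self hg in
lemma comb_main (x y : L) (hxy : x ≤ y) (k : ℕ) (hk : ρ y = ρ x + 2 * k + 2) :
    ((k : ℚ) + 2) * (g x y).coeff k = ∑ i ∈ Finset.range (k + 1), ((i : ℚ) + 1) *
      ∑ z ∈ (ci x y).filter (fun z => ρ z = ρ x + 2 * i + 1), (g x z).coeff i * (g z y).coeff (k - i) := by
  have h := congrArg (fun p => coeff p k) (Qf_zero ρ hρ eul g g_self hg x _ y rfl hxy)
  have hlt : x < y := lt_of_le_of_ne hxy (by rintro rfl; omega)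
  simp only [Qf, coeff_add, Mop_coeff, coeff_zero] at h
  rw [g_coeff_zero ρ hρ g g_self hg hlt (j := k + 1) (by omega)] at h
  have e : (Sf ρ g x y).coeff k = ∑ i ∈ Finset.range (k + 1), ((i : ℚ) + 1) *
      ∑ z ∈ (ci x y).filter (fun z => ρ z = ρ x + 2 * i + 1), (g x z).coeff i * (g z y).coeff (k - i) := by
    simp only [Finset.mul_sum, Finset.sum_filter]
    rw [Finset.sum_comm, Sf, finsetSum_coeff]
    refine Finset.sum_congr rfl fun z hz => ?_
    rw [mem_ci] at hz
    have h1 := hρ.monotone hz.1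
    have h2 := hρ.monotone hz.2
    rw [cf]
    split_ifs with ho
    · obtain ⟨i, hi⟩ := ho
      have hi2 : (ρ z - ρ x) / 2 = i := by omega
      rw [hi2, Finset.sum_eq_single i]
      · rw [if_pos (by omega), mul_assoc, coeff_C_mul, coeff_X_pow_mul', if_pos (by omega)]; ring
      · intro j _ hj; rw [if_neg (by omega), mul_zero]
      · intro hi'; rw [Finset.mem_range] at hi'; omega
    · rw [Finset.sum_eq_zero]
      · simp
      · intro i _
        rw [if_neg, mul_zero]
        intro h; apply ho; exact ⟨i, by omega⟩
  rw [← e]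
  have : (((ρ y - ρ x : ℕ)) : ℚ) = 2 * k + 2 := by
    have : ρ y - ρ x = 2 * k + 2 := by omega
    rw [this]; push_cast; ring
  rw [this] at h
  linarith

end comb

section euler
open Filter Topology

def Good (φ : ℝ → ℤ) : Prop := ∃ (φp : ℝ → ℤ) (m : ℤ), (∀ t, ∀ᶠ s in 𝓝[>] t, φ s = φp t) ∧
  (∀ᶠ s in atBot, φ s = m) ∧ ∃ T0 : Finset ℝ, ∀ T, T0 ⊆ T → ∑ t ∈ T, (φ t - φp t) - m = 1

lemma good_sum {ι : Type*} [Fintype ι] (d : ι → ℤ) (φ : ι → ℝ → ℤ) (h : ∀ i, Good (φ i))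
    (h0 : ∀ t, ∑ i, d i * φ i t = 0) : ∑ i, d i = 0 := by
  choose φp m h1 h2 T0 h3 using h
  have a1 : ∀ t, ∑ i, d i * φp i t = 0 := by
    intro t
    have := eventually_all.2 (fun i => h1 i t)
    obtain ⟨s, hs⟩ := this.exists
    rw [← h0 s]
    exact Finset.sum_congr rfl fun i _ => by rw [hs i]
  have a2 : ∑ i, d i * m i = 0 := by
    have := eventually_all.2 h2
    obtain ⟨s, hs⟩ := this.exists
    rw [← h0 s]
    exact Finset.sum_congr rfl fun i _ => by rw [hs i]
  set T := Finset.univ.biUnion T0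
  have : ∀ i, d i = ∑ t ∈ T, (d i * φ i t - d i * φp i t) - d i * m i := by
    intro i
    have := h3 i T (Finset.subset_biUnion_of_mem T0 (Finset.mem_univ i))
    simp only [← mul_sub, ← Finset.mul_sum]
    rw [this, mul_one]
  rw [Finset.sum_congr rfl fun i _ => this i, Finset.sum_sub_distrib, a2, Finset.sum_comm]
  simp only [Finset.sum_sub_distrib, h0, a1]
  simp

lemma good_point (a : ℝ) : Good (fun t => if t = a then 1 else 0) := by
  refine ⟨fun _ => 0, 0, ?_, ?_, {a}, ?_⟩
  · intro t
    rcases lt_or_ge t a with h | h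
    · have : ∀ᶠ s in 𝓝[>] t, s < a := (eventually_lt_nhds h).filter_mono nhdsWithin_le_nhds
      filter_upwards [this] with s hs
      rw [if_neg hs.ne]
    · filter_upwards [self_mem_nhdsWithin] with s hs
      rw [if_neg (ne_of_gt (lt_of_le_of_lt h hs))]
  · filter_upwards [eventually_lt_atBot a] with s hs
    rw [if_neg hs.ne]
  · intro T hT
    simp at hT
    simp [hT]

lemma good_interval (J : Set ℝ) (hJ : IsOpen J) (hc : J.OrdConnected) (hne : J.Nonempty) :
    Good (fun t => if t ∈ J then -1 else 0) := by
  by_cases hb : BddBelow J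
  · set a := sInf J with ha
    have haJ : a ∉ J := by
      intro haJ
      have h1 : ∀ᶠ s in 𝓝[<] a, s ∈ J := (hJ.mem_nhds haJ |> fun h => nhdsWithin_le_nhds h)
      obtain ⟨s, hs, hs'⟩ := (h1.and self_mem_nhdsWithin).exists
      exact absurd (csInf_le hb hs) (not_le.2 hs')
    have low : ∀ s, a < s → ∃ c ∈ J, c < s := fun s hs => exists_lt_of_csInf_lt hne hs
    have lowb : ∀ s, s < a → s ∉ J := fun s hs h => absurd (csInf_le hb h) (not_le.2 hs)
    refine ⟨fun t => if t ∈ J ∨ t = a then -1 else 0, 0, ?_, ?_, {a}, ?_⟩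
    · intro t
      by_cases h1 : t ∈ J
      · have : ∀ᶠ s in 𝓝[>] t, s ∈ J := nhdsWithin_le_nhds (hJ.mem_nhds h1)
        filter_upwards [this] with s hs
        simp [hs, h1]
      by_cases h2 : t = a
      · obtain ⟨b, hb'⟩ := hne
        have hab : a < b := lt_of_le_of_ne (csInf_le hb hb') (by rintro h; exact haJ (h ▸ hb'))
        rw [h2]
        have : ∀ᶠ s in 𝓝[>] a, s < b := (eventually_lt_nhds hab).filter_mono nhdsWithin_le_nhds
        filter_upwards [this, self_mem_nhdsWithin] with s hs hs'
        obtain ⟨c, hc1, hc2⟩ := low s hs'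
        have : s ∈ J := hc.out hc1 hb' ⟨hc2.le, hs.le⟩
        simp [this]
      · rcases lt_or_gt_of_ne h2 with h | h
        · have : ∀ᶠ s in 𝓝[>] t, s < a := (eventually_lt_nhds h).filter_mono nhdsWithin_le_nhds
          filter_upwards [this] with s hs
          simp [h1, h2, lowb s hs]
        · filter_upwards [self_mem_nhdsWithin] with s hs
          have : s ∉ J := by
            intro hsJ
            obtain ⟨c, hc1, hc2⟩ := low t h
            exact h1 (hc.out hc1 hsJ ⟨hc2.le, le_of_lt hs⟩)
          simp [h1, h2, this]
    · filter_upwards [eventually_lt_atBot a] with s hs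
      simp [lowb s hs]
    · intro T hT
      simp only [Finset.singleton_subset_iff] at hT
      have : ∀ t ∈ T, ((if t ∈ J then -1 else 0) - (if t ∈ J ∨ t = a then -1 else 0) : ℤ) =
          if t = a then 1 else 0 := by
        intro t _
        by_cases h : t = a
        · subst h; simp [haJ]
        · simp [h]
      rw [Finset.sum_congr rfl this]; simp [hT]
  · have low : ∀ s, ∃ c ∈ J, c < s := by
      intro s; rw [not_bddBelow_iff] at hb; exact hb s
    refine ⟨fun t => if t ∈ J then -1 else 0, -1, ?_, ?_, ∅, ?_⟩
    · intro t
      by_cases h1 : t ∈ J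
      · have : ∀ᶠ s in 𝓝[>] t, s ∈ J := nhdsWithin_le_nhds (hJ.mem_nhds h1)
        filter_upwards [this] with s hs
        simp [hs, h1]
      · filter_upwards [self_mem_nhdsWithin] with s hs
        have : s ∉ J := by
          intro hsJ
          obtain ⟨c, hc1, hc2⟩ := low t
          exact h1 (hc.out hc1 hsJ ⟨hc2.le, le_of_lt hs⟩)
        simp [h1, this]
    · obtain ⟨b, hb'⟩ := hne
      filter_upwards [eventually_lt_atBot b] with s hs
      obtain ⟨c, hc1, hc2⟩ := low s
      have : s ∈ J := hc.out hc1 hb' ⟨hc2.le, hs.le⟩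
      simp [this]
    · intro T _
      simp

variable {W : Type*} [AddCommGroup W] [Module ℝ W]

/-- relatively open convex sets -/
def ROC (C : Set W) : Prop := Convex ℝ C ∧ ∀ x ∈ C, ∀ y ∈ C, ∃ ε : ℝ, 0 < ε ∧ x + ε • (x - y) ∈ C

lemma ROC.slice {C : Set W} (h : ROC C) (l : W →ₗ[ℝ] ℝ) (t : ℝ) : ROC (C ∩ {x | l x = t}) := by
  refine ⟨h.1.inter ?_, ?_⟩
  · intro x hx y hy a b _ _ hab
    simp only [Set.mem_ofPred_eq] at *
    rw [map_add, map_smul, map_smul, hx, hy, ← add_smul, hab, one_smul]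
  · rintro x ⟨hx, hx'⟩ y ⟨hy, hy'⟩
    obtain ⟨ε, h0, h1⟩ := h.2 x hx y hy
    refine ⟨ε, h0, h1, ?_⟩
    simp only [Set.mem_ofPred_eq] at *
    rw [map_add, map_smul, map_sub, hx', hy']; simp

lemma conv_seg {C : Set W} (h : Convex ℝ C) {x d : W} (hx : x ∈ C) {a s : ℝ} (hs : 0 ≤ s) (hsa : s ≤ a)
    (hd : x + a • d ∈ C) : x + s • d ∈ C := by
  rcases hs.eq_or_lt with rfl | hs
  · simpa using hx
  have ha : 0 < a := hs.trans_le hsa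
  have := h hx hd (a := 1 - s / a) (b := s / a) (by rw [sub_nonneg, div_le_one ha]; exact hsa)
    (by positivity) (by ring)
  convert this using 1
  rw [smul_add, smul_smul, div_mul_cancel₀ _ ha.ne', sub_smul, one_smul]; abel

lemma ROC.core {C : Set W} (h : ROC C) {x : W} (hx : x ∈ C) {d : W} (hd : d ∈ vectorSpan ℝ C) :
    ∃ ε : ℝ, 0 < ε ∧ ∀ s : ℝ, |s| ≤ ε → x + s • d ∈ C := by
  rw [vectorSpan_eq_span_vsub_set_right ℝ hx] at hd
  induction hd using Submodule.span_induction with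
  | mem d hd =>
    obtain ⟨y, hy, rfl⟩ := hd
    obtain ⟨ε, h0, h1⟩ := h.2 x hx y hy
    refine ⟨min 1 ε, by positivity, ?_⟩
    intro s hs
    have hs1 := hs.trans (min_le_left _ _)
    have hs2 := hs.trans (min_le_right _ _)
    rw [abs_le] at hs1 hs2
    simp only [vsub_eq_sub]
    rcases le_total 0 s with hs0 | hs0
    · refine conv_seg h.1 hx hs0 hs1.2 ?_
      simpa using hy
    · have := conv_seg h.1 hx (s := -s) (by linarith) (by linarith) h1
      convert this using 2
      rw [← neg_sub x y, smul_neg, neg_smul]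
  | zero => exact ⟨1, one_pos, fun s _ => by simpa using hx⟩
  | add d e _ _ hd he =>
    obtain ⟨a, ha, ha'⟩ := hd
    obtain ⟨b, hb, hb'⟩ := he
    refine ⟨min a b / 2, by positivity, ?_⟩
    intro s hs
    have h2 : |2 * s| ≤ min a b := by rw [abs_mul, abs_two]; linarith
    have := h.1 (ha' (2 * s) (h2.trans (min_le_left _ _))) (hb' (2 * s) (h2.trans (min_le_right _ _)))
      (by norm_num : (0 : ℝ) ≤ 1 / 2) (by norm_num : (0 : ℝ) ≤ 1 / 2) (by norm_num)
    convert this using 1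
    module
  | smul c d _ hd =>
    obtain ⟨a, ha, ha'⟩ := hd
    refine ⟨a / (|c| + 1), by positivity, ?_⟩
    intro s hs
    rw [smul_smul]
    apply ha'
    rw [abs_mul]
    rw [le_div_iff₀ (by positivity)] at hs
    have := abs_nonneg s
    nlinarith

lemma ROC.vectorSpan_slice {C : Set W} (h : ROC C) (l : W →ₗ[ℝ] ℝ) {t : ℝ} {x : W} (hx : x ∈ C)
    (hxt : l x = t) : vectorSpan ℝ (C ∩ {x | l x = t}) = vectorSpan ℝ C ⊓ LinearMap.ker l := by
  apply le_antisymm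
  · refine le_inf (vectorSpan_mono ℝ Set.inter_subset_left) ?_
    rw [vectorSpan, Submodule.span_le]
    rintro _ ⟨y, hy, z, hz, rfl⟩
    simp only [Set.mem_inter_iff, Set.mem_ofPred_eq] at hy hz
    simp [hy.2, hz.2]
  · rintro d ⟨hd, hdl⟩
    obtain ⟨ε, h0, h1⟩ := h.core hx hd
    have h2 := h1 ε (abs_of_pos h0).le
    have hm : ε • d ∈ vectorSpan ℝ (C ∩ {x | l x = t}) := by
      have : ε • d = (x + ε • d) -ᵥ x := by simp
      rw [this]
      refine vsub_mem_vectorSpan ℝ ⟨h2, ?_⟩ ⟨hx, hxt⟩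
      have : l d = 0 := hdl
      simp [this, hxt]
    have := Submodule.smul_mem _ ε⁻¹ hm
    rwa [smul_smul, inv_mul_cancel₀ h0.ne', one_smul] at this

lemma finrank_inf_ker (D : Submodule ℝ W) [FiniteDimensional ℝ D] (l : W →ₗ[ℝ] ℝ)
    (h : ∃ d ∈ D, l d ≠ 0) : Module.finrank ℝ (D ⊓ LinearMap.ker l : Submodule ℝ W) + 1 =
      Module.finrank ℝ D := by
  have h1 := LinearMap.finrank_range_add_finrank_ker (l.domRestrict D)
  have h2 : LinearMap.range (l.domRestrict D) = ⊤ := by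
    rw [LinearMap.range_eq_top]
    apply LinearMap.surjective
    obtain ⟨d, hd, hl⟩ := h
    intro h0
    apply hl
    exact LinearMap.congr_fun h0 ⟨d, hd⟩
  have h3 : (LinearMap.ker (l.domRestrict D)).map D.subtype = D ⊓ LinearMap.ker l := by
    ext d
    simp only [Submodule.mem_map, LinearMap.mem_ker, Submodule.mem_inf]
    constructor
    · rintro ⟨y, hy, rfl⟩; exact ⟨y.2, hy⟩
    · rintro ⟨hd, hl⟩; exact ⟨⟨d, hd⟩, hl, rfl⟩
  rw [← h3, Submodule.finrank_map_subtype_eq]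
  rw [h2, finrank_top, Module.finrank_self] at h1
  omega

/-- Euler characteristic of a relatively open convex set -/
noncomputable def eu (C : Set W) : ℤ :=
  if C.Nonempty then (-1) ^ Module.finrank ℝ (vectorSpan ℝ C) else 0

lemma ROC.good {C : Set W} (h : ROC C) [FiniteDimensional ℝ (vectorSpan ℝ C)] (l : W →ₗ[ℝ] ℝ) :
    ∃ φ : ℝ → ℤ, Good φ ∧ ∀ t, eu (C ∩ {x | l x = t}) = eu C * φ t := by
  by_cases hne : C.Nonempty
  swap
  · refine ⟨_, good_point 0, fun t => ?_⟩
    rw [Set.not_nonempty_iff_eq_empty] at hne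
    subst hne
    simp [eu]
  obtain ⟨x, hx⟩ := hne
  have nes : ∀ t, (C ∩ {x | l x = t}).Nonempty ↔ t ∈ l '' C := by
    intro t; rfl
  by_cases hconst : ∀ y ∈ C, l y = l x
  · refine ⟨_, good_point (l x), fun t => ?_⟩
    by_cases ht : t = l x
    · have : C ∩ {y | l y = t} = C := by
        rw [Set.inter_eq_left]; intro y hy; rw [ht]; exact hconst y hy
      rw [this, if_pos ht, mul_one]
    · rw [if_neg ht, mul_zero, eu, if_neg]
      rintro ⟨y, hy, hy'⟩
      exact ht (by rw [← hy', hconst y hy])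
  · push Not at hconst
    obtain ⟨y, hy, hyx⟩ := hconst
    have hcv : (l '' C).OrdConnected := (h.1.linear_image l).ordConnected
    have hop : IsOpen (l '' C) := by
      rw [isOpen_iff_mem_nhds]
      rintro _ ⟨z, hz, rfl⟩
      obtain ⟨w, hw, hwz⟩ : ∃ w ∈ C, l w ≠ l z := by
        by_cases hh : l x = l z
        · exact ⟨y, hy, fun h' => hyx (h'.trans hh.symm)⟩
        · exact ⟨x, hx, hh⟩
      obtain ⟨ε, h0, h1⟩ := h.2 z hz w hw
      have e : l (z + ε • (z - w)) = l z + ε * (l z - l w) := by simp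
      rcases lt_or_gt_of_ne hwz with h2 | h2
      · refine mem_of_superset (Icc_mem_nhds h2 (b := l (z + ε • (z - w))) ?_)
          (hcv.out ⟨w, hw, rfl⟩ ⟨_, h1, rfl⟩)
        rw [e]; nlinarith
      · refine mem_of_superset (Icc_mem_nhds (a := l (z + ε • (z - w))) ?_ h2)
          (hcv.out ⟨_, h1, rfl⟩ ⟨w, hw, rfl⟩)
        rw [e]; nlinarith
    refine ⟨_, good_interval (l '' C) hop hcv ⟨_, x, hx, rfl⟩, fun t => ?_⟩
    by_cases ht : t ∈ l '' C
    · rw [eu, if_pos ((nes t).2 ht), if_pos ht, eu, if_pos ⟨x, hx⟩]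
      obtain ⟨z, hz, hzt⟩ := ht
      rw [h.vectorSpan_slice l hz hzt, ← finrank_inf_ker (vectorSpan ℝ C) l
        ⟨y -ᵥ x, vsub_mem_vectorSpan ℝ hy hx, by simpa [sub_eq_zero] using hyx⟩]
      rw [pow_succ]; ring
    · rw [eu, if_neg (by rwa [nes]), if_neg ht, mul_zero]

theorem euler_lin {ι : Type*} [Fintype ι] (l : ℕ → W →ₗ[ℝ] ℝ) (c : ι → ℤ) (n : ℕ) :
    ∀ C : ι → Set W, (∀ i, ROC (C i)) → (∀ i, FiniteDimensional ℝ (vectorSpan ℝ (C i))) →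
    (∀ i j, ∀ x ∈ C i, ∀ y ∈ C j, (∀ k < n, l k x = l k y) → x = y) →
    (∀ x, ∑ i, c i * (if x ∈ C i then 1 else 0) = 0) → ∑ i, c i * eu (C i) = 0 := by
  induction n with
  | zero =>
    intro C _ _ hs h0
    by_cases hne : ∃ i, (C i).Nonempty
    · obtain ⟨j, x, hx⟩ := hne
      refine Eq.trans (Finset.sum_congr rfl fun i _ => ?_) (h0 x)
      congr 1
      by_cases hi : x ∈ C i
      · have : C i = {x} := by
          ext y; constructor
          · intro hy; exact hs i i y hy x hi (by simp)
          · rintro rfl; exact hi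
        rw [this, eu, if_pos (Set.singleton_nonempty x), vectorSpan_singleton]; simp
      · rw [if_neg hi, eu, if_neg]
        rintro ⟨y, hy⟩
        exact hi (hs i j y hy x hx (by simp) ▸ hy)
    · push Not at hne
      refine Finset.sum_eq_zero fun i _ => ?_
      rw [hne i]; simp [eu]
  | succ n ih =>
    intro C hC hfd hs h0
    have step : ∀ t, ∑ i, c i * eu (C i ∩ {x | l n x = t}) = 0 := by
      intro t
      apply ih
      · exact fun i => (hC i).slice _ _
      · intro i
        have := hfd i
        exact Submodule.finiteDimensional_of_le (vectorSpan_mono ℝ Set.inter_subset_left)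
      · rintro i j x ⟨hx, hx'⟩ y ⟨hy, hy'⟩ hk
        refine hs i j x hx y hy fun k hkn => ?_
        rcases (Nat.lt_succ_iff_lt_or_eq.1 hkn) with h | rfl
        · exact hk k h
        · exact hx'.trans hy'.symm
      · intro x
        by_cases hx : l n x = t
        · refine Eq.trans (Finset.sum_congr rfl fun i _ => ?_) (h0 x)
          simp [hx]
        · refine Finset.sum_eq_zero fun i _ => ?_
          simp [hx]
    have hg : ∀ i, ∃ φ : ℝ → ℤ, Good φ ∧ ∀ t, eu (C i ∩ {x | l n x = t}) = eu (C i) * φ t := by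
      intro i
      have := hfd i
      exact (hC i).good (l n)
    choose φ hφ hφ' using hg
    apply good_sum (fun i => c i * eu (C i)) φ hφ
    intro t
    rw [← step t]
    refine Finset.sum_congr rfl fun i _ => ?_
    rw [hφ', mul_assoc]

end euler

section config
variable {ι W : Type*} [AddCommGroup W] [Module ℝ W] (v : ι → W)

/-- `A` is a face of the vector configuration indexed by `G` -/
def CF (G A : Finset ι) : Prop :=
  A ⊆ G ∧ ∃ l : W →ₗ[ℝ] ℝ, (∀ i ∈ G, 0 ≤ l (v i)) ∧ ∀ i ∈ G, (i ∈ A ↔ l (v i) = 0)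

def sp (A : Finset ι) : Submodule ℝ W := Submodule.span ℝ (v '' (A : Set ι))

def pos (A : Finset ι) : Set W := {x | ∃ a : ι → ℝ, (∀ i ∈ A, 0 < a i) ∧ x = ∑ i ∈ A, a i • v i}
def nn (A : Finset ι) : Set W := {x | ∃ a : ι → ℝ, (∀ i ∈ A, 0 ≤ a i) ∧ x = ∑ i ∈ A, a i • v i}

lemma small (A : Finset ι) (a b : ι → ℝ) (ha : ∀ i ∈ A, 0 < a i) :
    ∃ ε : ℝ, 0 < ε ∧ ∀ i ∈ A, ε * b i < a i := by
  induction A using Finset.induction_on with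
  | empty => exact ⟨1, one_pos, by simp⟩
  | insert i A _ ih =>
    obtain ⟨ε, h0, h1⟩ := ih fun j hj => ha j (Finset.mem_insert_of_mem hj)
    have hi := ha i (Finset.mem_insert_self _ _)
    set δ := min ε (a i / (|b i| + 1)) with hδ
    have hδ0 : 0 < δ := by positivity
    refine ⟨δ, hδ0, ?_⟩
    intro j hj
    rw [Finset.mem_insert] at hj
    rcases hj with rfl | hj
    · have h2 : δ ≤ a j / (|b j| + 1) := min_le_right _ _
      rw [le_div_iff₀ (by positivity)] at h2
      have := le_abs_self (b j)
      nlinarith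
    · have h2 : δ ≤ ε := min_le_left _ _
      have h3 := h1 j hj
      have h4 := ha j (Finset.mem_insert_of_mem hj)
      rcases le_total 0 (b j) with h | h
      · nlinarith
      · nlinarith

variable {v}

lemma v_mem_sp {A : Finset ι} {i : ι} (hi : i ∈ A) : v i ∈ sp v A :=
  Submodule.subset_span ⟨i, hi, rfl⟩

lemma sum_mem_sp (A : Finset ι) (a : ι → ℝ) : ∑ i ∈ A, a i • v i ∈ sp v A :=
  Submodule.sum_mem _ fun _ hi => Submodule.smul_mem _ _ (v_mem_sp hi)

lemma mem_sp_iff {A : Finset ι} {x : W} : x ∈ sp v A ↔ ∃ a : ι → ℝ, x = ∑ i ∈ A, a i • v i := by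
  constructor
  · intro hx
    rw [sp] at hx
    induction hx using Submodule.span_induction with
    | mem x hx =>
      obtain ⟨i, hi, rfl⟩ := hx
      refine ⟨fun j => if j = i then 1 else 0, ?_⟩
      have hi' : i ∈ A := hi
      simp [ite_smul, hi']
    | zero => exact ⟨0, by simp⟩
    | add x y _ _ hx hy =>
      obtain ⟨a, rfl⟩ := hx
      obtain ⟨b, rfl⟩ := hy
      exact ⟨a + b, by simp [add_smul, Finset.sum_add_distrib]⟩
    | smul c x _ hx =>
      obtain ⟨a, rfl⟩ := hx
      exact ⟨c • a, by simp [Finset.smul_sum, smul_smul]⟩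
  · rintro ⟨a, rfl⟩; exact sum_mem_sp A a

instance sp_fd (A : Finset ι) : FiniteDimensional ℝ (sp v A) :=
  FiniteDimensional.span_of_finite ℝ (A.finite_toSet.image v)

lemma pos_ROC (A : Finset ι) : ROC (pos v A) := by
  constructor
  · rintro _ ⟨a, ha, rfl⟩ _ ⟨b, hb, rfl⟩ s t hs ht hst
    refine ⟨fun i => s * a i + t * b i, fun i hi => ?_, ?_⟩
    · have h1 := ha i hi
      have h2 := hb i hi
      rcases hs.eq_or_lt with rfl | hs
      · have : t = 1 := by linarith
        subst this; simpa using h2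
      · have := mul_pos hs h1
        have := mul_nonneg ht h2.le
        linarith
    · simp [add_smul, Finset.sum_add_distrib, Finset.smul_sum, smul_smul]
  · rintro _ ⟨a, ha, rfl⟩ _ ⟨b, hb, rfl⟩
    obtain ⟨ε, h0, h1⟩ := small A a b ha
    refine ⟨ε, h0, fun i => a i + ε * (a i - b i), fun i hi => ?_, ?_⟩
    · have := h1 i hi
      have := mul_pos h0 (ha i hi)
      linarith
    · rw [← Finset.sum_sub_distrib, Finset.smul_sum, ← Finset.sum_add_distrib]
      refine Finset.sum_congr rfl fun i _ => ?_
      module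

lemma pos_sub_sp (A : Finset ι) : pos v A ⊆ sp v A := by
  rintro _ ⟨a, _, rfl⟩; exact sum_mem_sp A a

lemma pos_nonempty (A : Finset ι) : (pos v A).Nonempty := ⟨_, fun _ => 1, by simp, rfl⟩

lemma pos_vectorSpan (A : Finset ι) : vectorSpan ℝ (pos v A) = sp v A := by
  apply le_antisymm
  · rw [vectorSpan, Submodule.span_le]
    rintro _ ⟨x, hx, y, hy, rfl⟩
    exact Submodule.sub_mem _ (pos_sub_sp A hx) (pos_sub_sp A hy)
  · rw [sp, Submodule.span_le]
    rintro _ ⟨i, hi, rfl⟩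
    have hi' : i ∈ A := hi
    have h1 : ∑ j ∈ A, (1 : ℝ) • v j ∈ pos v A := ⟨fun _ => 1, by simp, rfl⟩
    have h2 : ∑ j ∈ A, (1 + if j = i then 1 else 0 : ℝ) • v j ∈ pos v A :=
      ⟨_, by intro j _; split_ifs <;> norm_num, rfl⟩
    have := vsub_mem_vectorSpan ℝ h2 h1
    convert this using 1
    simp [add_smul, Finset.sum_add_distrib, ite_smul, hi']

lemma pos_eu (A : Finset ι) : eu (pos v A) = (-1) ^ Module.finrank ℝ (sp v A) := by
  rw [eu, if_pos (pos_nonempty A), pos_vectorSpan]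

lemma nn_add_pos {A : Finset ι} {x y : W} (hx : x ∈ nn v A) (hy : y ∈ pos v A) : x + y ∈ pos v A := by
  obtain ⟨a, ha, rfl⟩ := hx
  obtain ⟨b, hb, rfl⟩ := hy
  refine ⟨fun i => a i + b i, fun i hi => ?_, by simp [add_smul, Finset.sum_add_distrib]⟩
  exact add_pos_of_nonneg_of_pos (ha i hi) (hb i hi)

lemma nn_smul {A : Finset ι} {x : W} (hx : x ∈ nn v A) {c : ℝ} (hc : 0 ≤ c) : c • x ∈ nn v A := by
  obtain ⟨a, ha, rfl⟩ := hx
  exact ⟨fun i => c * a i, fun i hi => mul_nonneg hc (ha i hi), by simp [Finset.smul_sum, smul_smul]⟩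

lemma nn_add {A : Finset ι} {x y : W} (hx : x ∈ nn v A) (hy : y ∈ nn v A) : x + y ∈ nn v A := by
  obtain ⟨a, ha, rfl⟩ := hx
  obtain ⟨b, hb, rfl⟩ := hy
  refine ⟨fun i => a i + b i, fun i hi => ?_, by simp [add_smul, Finset.sum_add_distrib]⟩
  exact add_nonneg (ha i hi) (hb i hi)

lemma pos_smul {A : Finset ι} {x : W} (hx : x ∈ pos v A) {c : ℝ} (hc : 0 < c) : c • x ∈ pos v A := by
  obtain ⟨a, ha, rfl⟩ := hx
  exact ⟨fun i => c * a i, fun i hi => mul_pos hc (ha i hi), by simp [Finset.smul_sum, smul_smul]⟩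

lemma pos_sub_nn {A : Finset ι} : pos v A ⊆ nn v A := by
  rintro _ ⟨a, ha, rfl⟩; exact ⟨a, fun i hi => (ha i hi).le, rfl⟩

lemma farkas {A : Finset ι} {z : W} (hz : z ∈ nn v A) (hz' : z ∉ pos v A) :
    ∃ l : W →ₗ[ℝ] ℝ, (∀ i ∈ A, 0 ≤ l (v i)) ∧ l z = 0 ∧ ∃ i ∈ A, l (v i) ≠ 0 := by
  set u : W := ∑ i ∈ A, (1 : ℝ) • v i with hu
  have hupos : u ∈ pos v A := ⟨fun _ => 1, by simp, rfl⟩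
  have hzero : (0 : W) ∉ pos v A := fun h => hz' (by simpa using nn_add_pos hz h)
  have hu0 : u ≠ 0 := fun h => hzero (h ▸ hupos)
  let E := sp v A
  have huE : u ∈ E := pos_sub_sp A hupos
  have hzE : z ∈ E := by obtain ⟨a, _, rfl⟩ := hz; exact sum_mem_sp A a
  let s : PointedCone ℝ E :=
    { carrier := {e | ∃ c : ℝ, (e : W) + c • z ∈ nn v A}
      zero_mem' := ⟨0, fun _ => 0, by simp, by simp⟩
      add_mem' := by
        rintro e f ⟨c, hc⟩ ⟨d, hd⟩
        refine ⟨c + d, ?_⟩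
        convert nn_add hc hd using 1
        simp only [Submodule.coe_add]; module
      smul_mem' := by
        rintro ⟨r, hr⟩ e ⟨c, hc⟩
        refine ⟨r * c, ?_⟩
        convert nn_smul hc hr using 1
        have : ((⟨r, hr⟩ : {c : ℝ // 0 ≤ c}) • e : E) = r • e := rfl
        rw [this, Submodule.coe_smul]
        module }
  have hs : ∀ e : E, e ∈ s ↔ ∃ c : ℝ, (e : W) + c • z ∈ nn v A := fun e => Iff.rfl
  have huE0 : (⟨u, huE⟩ : E) ≠ 0 := fun h => hu0 (congrArg Subtype.val h)
  let f : E →ₗ.[ℝ] ℝ := LinearPMap.mkSpanSingleton (⟨u, huE⟩ : E) (1 : ℝ) huE0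
  have hfdom : f.domain = Submodule.span ℝ {(⟨u, huE⟩ : E)} := rfl
  have hfu : ∀ (b : ℝ) (h : b • (⟨u, huE⟩ : E) ∈ f.domain), f ⟨b • (⟨u, huE⟩ : E), h⟩ = b := by
    intro b h
    have := LinearPMap.mkSpanSingleton'_apply (⟨u, huE⟩ : E) (1 : ℝ)
      (fun c hc => (smul_eq_zero.1 hc).elim (fun h => by simp [h]) (fun h => absurd h huE0)) b h
    exact this.trans (by simp)
  obtain ⟨g, hg1, hg2⟩ := riesz_extension s f (by
    rintro ⟨e, he⟩ hes
    obtain ⟨b, rfl⟩ := Submodule.mem_span_singleton.1 (hfdom ▸ he)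
    rw [hfu]
    rw [hs] at hes
    obtain ⟨c, hc⟩ := hes
    by_contra hb
    push Not at hb
    have h1 : c • z ∈ pos v A := by
      have := nn_add_pos hc (pos_smul hupos (c := -b) (by linarith))
      convert this using 1
      simp only [Submodule.coe_smul]; module
    rcases lt_or_ge 0 c with hc0 | hc0
    · apply hz'
      have := pos_smul h1 (inv_pos.2 hc0)
      rwa [smul_smul, inv_mul_cancel₀ hc0.ne', one_smul] at this
    · apply hzero
      have := nn_add_pos (nn_smul hz (c := -c) (by linarith)) h1
      simpa using this) (by
    rintro ⟨y, hy⟩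
    obtain ⟨a, ha⟩ := mem_sp_iff.1 hy
    refine ⟨⟨(∑ i ∈ A, |a i|) • (⟨u, huE⟩ : E), hfdom ▸ Submodule.smul_mem _ _ (Submodule.mem_span_singleton_self _)⟩, ?_⟩
    rw [hs]
    refine ⟨0, fun i => (∑ i ∈ A, |a i|) + a i, fun i hi => ?_, ?_⟩
    · have := Finset.single_le_sum (f := fun i => |a i|) (fun i _ => abs_nonneg _) hi
      have h2 := neg_abs_le (a i)
      linarith
    · simp only [Submodule.coe_add, Submodule.coe_smul, ha, hu, Finset.smul_sum, add_smul, zero_smul,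
        one_smul, add_zero, Finset.sum_add_distrib])
  obtain ⟨l, hl⟩ := LinearMap.exists_extend g
  have hle : ∀ e (he : e ∈ E), l e = g ⟨e, he⟩ := fun e he => by rw [← hl]; rfl
  have hvi : ∀ i ∈ A, 0 ≤ l (v i) := by
    intro i hi
    rw [hle _ (v_mem_sp hi)]
    apply hg2
    rw [hs]
    refine ⟨0, fun j => if j = i then 1 else 0, fun j _ => ?_, ?_⟩
    · dsimp only; split_ifs <;> norm_num
    · simp [ite_smul, hi]
  have hlu : l u = 1 := by
    rw [hle _ huE]
    have h1 : (1 : ℝ) • (⟨u, huE⟩ : E) ∈ f.domain := hfdom ▸ Submodule.smul_mem _ _ (Submodule.mem_span_singleton_self _)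
    have := hg1 ⟨_, h1⟩
    rw [hfu] at this
    simpa using this
  refine ⟨l, hvi, ?_, ?_⟩
  · rw [hle _ hzE]
    have z0 : (0 : W) ∈ nn v A := ⟨fun _ => 0, by simp, by simp⟩
    have h1 := hg2 ⟨z, hzE⟩ ((hs _).2 ⟨-1, by simpa using z0⟩)
    have h2 := hg2 (-⟨z, hzE⟩) ((hs _).2 ⟨1, by simpa using z0⟩)
    rw [map_neg] at h2
    linarith
  · by_contra hcon
    push Not at hcon
    have : l u = 0 := by
      rw [hu, map_sum]
      exact Finset.sum_eq_zero fun i hi => by rw [map_smul, hcon i hi, smul_zero]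
    rw [this] at hlu
    norm_num at hlu

lemma CF.refl (G : Finset ι) : CF v G G := ⟨subset_rfl, 0, by simp, by simp⟩

lemma CF.trans {G A B : Finset ι} (h1 : CF v G A) (h2 : CF v A B) : CF v G B := by
  obtain ⟨hAG, l, hl, hl'⟩ := h1
  obtain ⟨hBA, m, hm, hm'⟩ := h2
  obtain ⟨ε, h0, h1⟩ := small (G \ A) (fun i => l (v i)) (fun i => - m (v i)) (by
    intro i hi
    rw [Finset.mem_sdiff] at hi
    exact lt_of_le_of_ne (hl i hi.1) fun h => hi.2 ((hl' i hi.1).2 h.symm))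
  refine ⟨hBA.trans hAG, l + ε • m, ?_, ?_⟩
  · intro i hi
    simp only [LinearMap.add_apply, LinearMap.smul_apply, smul_eq_mul]
    by_cases hiA : i ∈ A
    · have := hl i hi
      have := mul_nonneg h0.le (hm i hiA)
      linarith
    · have := h1 i (Finset.mem_sdiff.2 ⟨hi, hiA⟩)
      linarith
  · intro i hi
    simp only [LinearMap.add_apply, LinearMap.smul_apply, smul_eq_mul]
    by_cases hiA : i ∈ A
    · rw [hm' i hiA, (hl' i hi).1 hiA]
      simp [h0.ne']
    · have := h1 i (Finset.mem_sdiff.2 ⟨hi, hiA⟩)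
      constructor
      · intro h; exact absurd (hBA h) hiA
      · intro h; linarith

lemma CF.restrict {G A B : Finset ι} (h1 : CF v G B) (hA : A ⊆ G) (hB : B ⊆ A) : CF v A B := by
  obtain ⟨_, l, hl, hl'⟩ := h1
  exact ⟨hB, l, fun i hi => hl i (hA hi), fun i hi => hl' i (hA hi)⟩

lemma exists_face_pos (G : Finset ι) {z : W} (hz : z ∈ nn v G) : ∃ A, CF v G A ∧ z ∈ pos v A := by
  have key : ∀ n (A : Finset ι), A.card = n → CF v G A → z ∈ nn v A → ∃ A, CF v G A ∧ z ∈ pos v A := by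
    intro n
    induction n using Nat.strong_induction_on with
    | _ n ih =>
    rintro A rfl hA hzA
    by_cases hp : z ∈ pos v A
    · exact ⟨A, hA, hp⟩
    obtain ⟨l, hl, hlz, i, hi, hi0⟩ := farkas hzA hp
    have hCF : CF v A (A.filter (fun i => l (v i) = 0)) :=
      ⟨Finset.filter_subset _ _, l, hl, fun j hj => by simp [hj]⟩
    refine ih _ ?_ _ rfl (hA.trans hCF) ?_
    · apply Finset.card_lt_card
      rw [Finset.ssubset_iff_of_subset (Finset.filter_subset _ _)]
      exact ⟨i, hi, by simp [hi0]⟩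
    · obtain ⟨a, ha, rfl⟩ := hzA
      refine ⟨a, fun j hj => ha j (Finset.mem_filter.1 hj).1, ?_⟩
      rw [Finset.sum_filter]
      refine Finset.sum_congr rfl fun j hj => ?_
      split_ifs with h
      · rfl
      · rw [map_sum] at hlz
        have := (Finset.sum_eq_zero_iff_of_nonneg (fun k hk => by
          rw [map_smul, smul_eq_mul]; exact mul_nonneg (ha k hk) (hl k hk))).1 hlz j hj
        rw [map_smul, smul_eq_mul, mul_eq_zero] at this
        rw [this.resolve_right h, zero_smul]
  exact key _ G rfl (CF.refl G) hz

lemma exists_max (G : Finset ι) (hG : G.Nonempty) (l : W →ₗ[ℝ] ℝ) (hl : ∀ i ∈ G, 0 < l (v i))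
    {x : W} (hx : x ∈ pos v G) : ∃ s : ℝ, 0 < s ∧ x - s • (∑ i ∈ G, v i) ∈ nn v G ∧
      x - s • (∑ i ∈ G, v i) ∉ pos v G := by
  obtain ⟨b0, hb0, hxb⟩ := hx
  let φ : (G → ℝ) →ₗ[ℝ] W := ∑ i : G, (LinearMap.proj i).smulRight (v i)
  have hφ : ∀ b, φ b = ∑ i : G, b i • v i := by intro b; simp [φ]
  have hφ' : ∀ b : ι → ℝ, φ (fun i => b i) = ∑ i ∈ G, b i • v i := by
    intro b; rw [hφ, ← Finset.sum_coe_sort G (fun i => b i • v i)]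
  let B : Set (G → ℝ) := {b | (∀ i, 0 ≤ b i) ∧ φ b = x}
  have hB0 : (fun i : G => b0 i) ∈ B := ⟨fun i => (hb0 i i.2).le, by rw [hφ', hxb]⟩
  have hclosed : IsClosed B := by
    have h1 : IsClosed {b : G → ℝ | ∀ i, 0 ≤ b i} := by
      simp only [Set.ofPred_forall]
      exact isClosed_iInter fun i => isClosed_le continuous_const (continuous_apply i)
    have h2 : IsClosed {b : G → ℝ | φ b = x} := by
      have hk : IsClosed ((LinearMap.ker φ : Submodule ℝ (G → ℝ)) : Set (G → ℝ)) :=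
        Submodule.closed_of_finiteDimensional _
      have : {b : G → ℝ | φ b = x} = (fun b => b - (fun i : G => b0 i)) ⁻¹' (LinearMap.ker φ : Set (G → ℝ)) := by
        ext b
        simp only [Set.mem_ofPred_eq, Set.mem_preimage, SetLike.mem_coe, LinearMap.mem_ker, map_sub, hB0.2, sub_eq_zero]
      rw [this]
      exact hk.preimage (by fun_prop)
    exact h1.inter h2
  have hcomp : IsCompact B := by
    refine IsCompact.of_isClosed_subset (isCompact_Icc (a := (0 : G → ℝ)) (b := fun i => l x / l (v i))) hclosed ?_
    rintro b ⟨hb, hbx⟩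
    refine ⟨fun i => hb i, fun i => ?_⟩
    rw [le_div_iff₀ (hl i i.2), ← hbx, hφ, map_sum]
    have := Finset.single_le_sum (f := fun i : G => l (b i • v i)) (fun i _ => by
      rw [map_smul, smul_eq_mul]; exact mul_nonneg (hb i) (hl i i.2).le) (Finset.mem_univ i)
    simpa using this
  have hne : (Finset.univ : Finset G).Nonempty := ⟨⟨_, hG.choose_spec⟩, Finset.mem_univ _⟩
  obtain ⟨b, hb, hmax⟩ := hcomp.exists_isMaxOn (f := fun b => Finset.univ.inf' hne (fun i => b i)) ⟨_, hB0⟩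
    (Continuous.continuousOn (by
      apply Continuous.finset_inf'_apply
      intro i _; fun_prop))
  set s := Finset.univ.inf' hne (fun i => b i) with hs
  have hsb : ∀ i, s ≤ b i := fun i => Finset.inf'_le _ (Finset.mem_univ i)
  have hs0 : 0 < s := by
    have h1 := hmax hB0
    simp only [Set.mem_ofPred_eq] at h1
    refine lt_of_lt_of_le ?_ h1
    rw [Finset.lt_inf'_iff]
    intro i _; exact hb0 i i.2
  have hsum : ∀ (a : ι → ℝ), ∑ i ∈ G, a i • v i = x - s • (∑ i ∈ G, v i) ↔ φ (fun i => a i + s) = x := by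
    intro a
    rw [hφ' (fun i => a i + s), eq_sub_iff_add_eq]
    simp [add_smul, Finset.sum_add_distrib, Finset.smul_sum]
  refine ⟨s, hs0, ?_, ?_⟩
  · refine ⟨fun i => if h : i ∈ G then b ⟨i, h⟩ - s else 0, fun i hi => ?_, ?_⟩
    · simp only [hi, dite_true]; linarith [hsb ⟨i, hi⟩]
    · symm; rw [hsum, ← hb.2]
      congr 1
      ext i; simp
  · rintro ⟨a, ha, hax⟩
    have h1 := (hsum a).1 hax.symm
    have h2 := hmax (⟨fun i => by have := ha i i.2; linarith, h1⟩ : (fun i : G => a i + s) ∈ B)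
    simp only [Set.mem_ofPred_eq] at h2
    have h3 : s < Finset.univ.inf' hne (fun i : G => a i + s) := by
      rw [Finset.lt_inf'_iff]
      intro i _; have := ha i i.2; linarith
    exact absurd h2 (not_le.2 h3)

lemma pos_disj {G A B : Finset ι} (hA : CF v G A) (hB : CF v G B) {x : W} (h1 : x ∈ pos v A)
    (h2 : x ∈ pos v B) : A = B := by
  have aux : ∀ {A B : Finset ι}, CF v G A → CF v G B → x ∈ pos v A → x ∈ pos v B → B ⊆ A := by
    intro A B hA hB h1 h2
    obtain ⟨hAG, l, hl, hl'⟩ := hA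
    have hx : l x = 0 := by
      obtain ⟨a, ha, rfl⟩ := h1
      rw [map_sum]
      exact Finset.sum_eq_zero fun i hi => by rw [map_smul, (hl' i (hAG hi)).1 hi, smul_zero]
    obtain ⟨b, hb, rfl⟩ := h2
    intro i hi
    rw [map_sum] at hx
    have := (Finset.sum_eq_zero_iff_of_nonneg (fun k hk => by
      rw [map_smul, smul_eq_mul]; exact mul_nonneg (hb k hk).le (hl k (hB.1 hk)))).1 hx i hi
    rw [map_smul, smul_eq_mul, mul_eq_zero] at this
    exact (hl' i (hB.1 hi)).2 (this.resolve_left (hb i hi).ne')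
  exact subset_antisymm (aux hB hA h2 h1) (aux hA hB h1 h2)

/-- configuration with an extra vector -/
def vx (v : ι → W) (u : W) : Option ι → W := fun o => o.elim u v

lemma mem_shadow {A : Finset ι} {u x : W} :
    x ∈ pos (vx v u) (Finset.insertNone A) ↔ ∃ s : ℝ, 0 < s ∧ x - s • u ∈ pos v A := by
  constructor
  · rintro ⟨a, ha, rfl⟩
    refine ⟨a none, ha _ (by simp), fun i => a (some i), fun i hi => ha _ (by simpa using hi), ?_⟩
    rw [Finset.sum_insertNone]; simp [vx]
  · rintro ⟨s, hs, a, ha, hx⟩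
    refine ⟨fun o => o.elim s a, ?_, ?_⟩
    · rintro (_ | i) hi
      · exact hs
      · exact ha i (by simpa using hi)
    · rw [Finset.sum_insertNone]
      simp only [vx, Option.elim]
      rw [← hx]; abel

lemma sp_shadow_finrank {G A : Finset ι} (hA : CF v G A) (hne : A ≠ G) :
    Module.finrank ℝ (sp (vx v (∑ i ∈ G, v i)) (Finset.insertNone A)) = Module.finrank ℝ (sp v A) + 1 := by
  obtain ⟨hAG, l, hl, hl'⟩ := hA
  set u := ∑ i ∈ G, v i with hu
  have hlu : l u ≠ 0 := by
    intro h
    rw [hu, map_sum, Finset.sum_eq_zero_iff_of_nonneg hl] at h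
    exact hne (subset_antisymm hAG fun i hi => (hl' i hi).2 (h i hi))
  have hker : ∀ x ∈ sp v A, l x = 0 := by
    intro x hx
    obtain ⟨a, rfl⟩ := mem_sp_iff.1 hx
    rw [map_sum]
    exact Finset.sum_eq_zero fun i hi => by rw [map_smul, (hl' i (hAG hi)).1 hi, smul_zero]
  rw [← finrank_inf_ker (sp (vx v u) (Finset.insertNone A)) l
    ⟨u, v_mem_sp (v := vx v u) (i := none) (by simp), hlu⟩]
  have : sp (vx v u) (Finset.insertNone A) ⊓ LinearMap.ker l = sp v A := by
    apply le_antisymm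
    · rintro x ⟨hx, hx'⟩
      obtain ⟨a, rfl⟩ := mem_sp_iff.1 hx
      rw [Finset.sum_insertNone] at hx' ⊢
      simp only [vx, Option.elim] at hx' ⊢
      have h1 := sum_mem_sp (v := v) A (fun i => a (some i))
      rw [SetLike.mem_coe, LinearMap.mem_ker, map_add, hker _ h1, add_zero, map_smul, smul_eq_mul, mul_eq_zero] at hx'
      rw [hx'.resolve_right hlu, zero_smul, zero_add]
      exact h1
    · intro x hx
      refine ⟨?_, hker x hx⟩
      rw [sp] at hx
      refine Submodule.span_le.2 ?_ hx
      rintro _ ⟨i, hi, rfl⟩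
      exact v_mem_sp (v := vx v u) (i := some i) (by simpa using hi)
  rw [this]

lemma exists_sep (U : Submodule ℝ W) [FiniteDimensional ℝ U] :
    ∃ (n : ℕ) (l : ℕ → W →ₗ[ℝ] ℝ), ∀ x ∈ U, ∀ y ∈ U, (∀ k < n, l k x = l k y) → x = y := by
  let b := Module.finBasis ℝ U
  have : ∀ k : Fin (Module.finrank ℝ U), ∃ l : W →ₗ[ℝ] ℝ, l.comp U.subtype = b.coord k :=
    fun k => LinearMap.exists_extend _
  choose l hl using this
  refine ⟨Module.finrank ℝ U, fun k => if h : k < Module.finrank ℝ U then l ⟨k, h⟩ else 0, ?_⟩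
  intro x hx y hy h
  have : (⟨x, hx⟩ : U) = ⟨y, hy⟩ := by
    apply b.ext_elem
    intro k
    have h1 := h k k.2
    simp only [k.2, dite_true] at h1
    have h2 : ∀ z (hz : z ∈ U), l k z = b.repr ⟨z, hz⟩ k := by
      intro z hz
      have := LinearMap.congr_fun (hl k) ⟨z, hz⟩
      simpa using this
    rw [← h2, ← h2]; exact h1
  exact congrArg Subtype.val this

theorem euler_pointed (G : Finset ι) (hG : G.Nonempty) (l : W →ₗ[ℝ] ℝ) (hl : ∀ i ∈ G, 0 < l (v i)) :
    ∑ A ∈ G.powerset.filter (CF v G), (-1 : ℤ) ^ Module.finrank ℝ (sp v A) = 0 := by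
  set T := G.powerset.filter (CF v G) with hT
  have memT : ∀ A, A ∈ T ↔ CF v G A := by
    intro A; rw [hT, Finset.mem_filter, Finset.mem_powerset]
    exact ⟨fun h => h.2, fun h => ⟨h.1, h⟩⟩
  set u := ∑ i ∈ G, v i with hu
  have hupos : u ∈ pos v G := ⟨fun _ => 1, by simp, by simp [hu]⟩
  let C : Finset ι → Set W := fun A => if A = G then pos v G else pos (vx v u) (Finset.insertNone A)
  let c : Finset ι → ℤ := fun A => if A = G then 1 else -1
  obtain ⟨n, L, hL⟩ := exists_sep (sp v G)
  have hCsub : ∀ A, CF v G A → C A ⊆ pos v G := by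
    intro A hA x hx
    simp only [C] at hx
    split_ifs at hx with h
    · exact hx
    · rw [mem_shadow] at hx
      obtain ⟨s, hs, hx⟩ := hx
      have h1 : x - s • u ∈ nn v G := by
        obtain ⟨a, ha, hax⟩ := hx
        refine ⟨fun i => if i ∈ A then a i else 0, fun i _ => ?_, ?_⟩
        · dsimp only; split_ifs with hi
          · exact (ha i hi).le
          · exact le_rfl
        · rw [hax]
          simp only [ite_smul, zero_smul]
          rw [← Finset.sum_filter, Finset.filter_mem_eq_inter, Finset.inter_eq_right.2 hA.1]
      have := nn_add_pos h1 (pos_smul hupos hs)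
      simpa using this
  have main := euler_lin (ι := T) L (fun A => c A) n (fun A => C A) (fun A => by
      simp only [C]; split_ifs
      · exact pos_ROC _
      · exact pos_ROC _) (fun A => by
      by_cases h : (A : Finset ι) = G
      · have h' : C A = pos v G := if_pos h
        rw [h', pos_vectorSpan]; infer_instance
      · have h' : C A = pos (vx v u) (Finset.insertNone A) := if_neg h
        rw [h', pos_vectorSpan]; infer_instance) (fun A B x hx y hy h =>
        hL x (pos_sub_sp G (hCsub _ ((memT _).1 A.2) hx)) y (pos_sub_sp G (hCsub _ ((memT _).1 B.2) hy)) h) (by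
      intro x
      rw [Finset.sum_coe_sort T (fun A => c A * if x ∈ C A then 1 else 0)]
      by_cases hx : x ∈ pos v G
      swap
      · refine Finset.sum_eq_zero fun A hA => ?_
        rw [if_neg fun h => hx (hCsub A ((memT A).1 hA) h), mul_zero]
      obtain ⟨s, hs, hz1, hz2⟩ := exists_max G hG l hl hx
      obtain ⟨A0, hA0, hzA0⟩ := exists_face_pos G hz1
      have hA0G : A0 ≠ G := by rintro rfl; exact hz2 hzA0
      have uniq : ∀ A, CF v G A → A ≠ G → x ∈ C A → A = A0 := by
        intro A hA hAG hxA
        simp only [C, if_neg hAG] at hxA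
        rw [mem_shadow] at hxA
        obtain ⟨s', hs', hxA⟩ := hxA
        have aux : ∀ {A B : Finset ι} {s t : ℝ}, CF v G A → A ≠ G → CF v G B → s < t →
            x - s • u ∈ pos v A → x - t • u ∈ pos v B → False := by
          intro A B s t hA hAG hB hst h1 h2
          apply hAG
          refine pos_disj hA (CF.refl G) h1 ?_
          have h3 : x - t • u ∈ nn v G := by
            obtain ⟨a, ha, hax⟩ := h2
            refine ⟨fun i => if i ∈ B then a i else 0, fun i _ => ?_, ?_⟩
            · dsimp only; split_ifs with hi
              · exact (ha i hi).le
              · exact le_rfl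
            · rw [hax]
              simp only [ite_smul, zero_smul]
              rw [← Finset.sum_filter, Finset.filter_mem_eq_inter, Finset.inter_eq_right.2 hB.1]
          have := nn_add_pos h3 (pos_smul hupos (sub_pos.2 hst))
          convert this using 1
          module
        rcases lt_trichotomy s s' with h | h | h
        · exact (aux hA0 hA0G hA h hzA0 hxA).elim
        · subst h; exact pos_disj hA hA0 hxA hzA0
        · exact (aux hA hAG hA0 h hxA hzA0).elim
      have hxA0 : x ∈ C A0 := by
        simp only [C, if_neg hA0G]; rw [mem_shadow]; exact ⟨s, hs, hzA0⟩
      rw [Finset.sum_eq_add G A0 hA0G.symm]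
      · simp only [c, if_neg hA0G, if_pos hxA0]
        simp [C, hx]
      · rintro A hA ⟨h1, h2⟩
        rw [if_neg fun h => h2 (uniq A ((memT A).1 hA) h1 h), mul_zero]
      · intro h; exact absurd ((memT G).2 (CF.refl G)) h
      · intro h; exact absurd ((memT A0).2 hA0) h)
  rw [Finset.sum_coe_sort T (fun A => c A * eu (C A))] at main
  rw [← main]
  refine Finset.sum_congr rfl fun A hA => ?_
  simp only [c, C]
  split_ifs with h
  · rw [h, pos_eu, one_mul]
  · rw [pos_eu, sp_shadow_finrank ((memT A).1 hA) h, pow_succ]; ring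

end config

section interval
variable {ι W : Type*} [AddCommGroup W] [Module ℝ W] {v : ι → W}

lemma CF.ker {S F : Finset ι} {l : W →ₗ[ℝ] ℝ} (hFS : F ⊆ S) (hl' : ∀ i ∈ S, (i ∈ F ↔ l (v i) = 0)) :
    sp v F ≤ LinearMap.ker l := by
  rw [sp, Submodule.span_le]
  rintro _ ⟨i, hi, rfl⟩
  exact (hl' i (hFS hi)).1 hi

lemma sp_union (F A : Finset ι) : sp v (A ∪ F) = sp v A ⊔ sp v F := by
  rw [sp, sp, sp, Finset.coe_union, Set.image_union, Submodule.span_union]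

lemma sp_quot (F A : Finset ι) : sp (fun i => (sp v F).mkQ (v i)) A = (sp v A).map (sp v F).mkQ := by
  rw [sp, sp.eq_1 v A, Submodule.map_span, Set.image_image]
  rfl

lemma finrank_quot (F A : Finset ι) :
    Module.finrank ℝ (sp (fun i => (sp v F).mkQ (v i)) A) + Module.finrank ℝ (sp v F)
      = Module.finrank ℝ (sp v (A ∪ F)) := by
  have h := LinearMap.finrank_range_add_finrank_ker ((sp v F).mkQ.domRestrict (sp v (A ∪ F)))
  rw [← h]
  congr 1
  · have : LinearMap.range ((sp v F).mkQ.domRestrict (sp v (A ∪ F))) = sp (fun i => (sp v F).mkQ (v i)) A := by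
      rw [LinearMap.range_domRestrict, sp_union, Submodule.map_sup, Submodule.mkQ_map_self, sup_bot_eq, sp_quot]
    rw [this]
  · have : LinearMap.ker ((sp v F).mkQ.domRestrict (sp v (A ∪ F))) = (sp v F).comap (sp v (A ∪ F)).subtype := by
      rw [LinearMap.ker_domRestrict, Submodule.ker_mkQ]
    rw [this]
    have hle : sp v F ≤ sp v (A ∪ F) := by rw [sp_union]; exact le_sup_right
    exact (LinearEquiv.finrank_eq (Submodule.comapSubtypeEquivOfLe hle)).symm

lemma CF_quot {S F G A : Finset ι} (hF : CF v S F) (hG : CF v S G) (hFG : F ⊆ G) (hA : A ⊆ G \ F) :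
    CF (fun i => (sp v F).mkQ (v i)) (G \ F) A ↔ CF v S (A ∪ F) := by
  have hdis : ∀ i ∈ A, i ∉ F := fun i hi => (Finset.mem_sdiff.1 (hA hi)).2
  constructor
  · rintro ⟨_, l, hl, hl'⟩
    refine hG.trans ⟨Finset.union_subset (hA.trans Finset.sdiff_subset) hFG, l.comp (sp v F).mkQ, ?_, ?_⟩
    · intro i hi
      by_cases hiF : i ∈ F
      · rw [LinearMap.comp_apply, Submodule.mkQ_apply, (Submodule.Quotient.mk_eq_zero _).2 (v_mem_sp hiF), map_zero]
      · exact hl i (Finset.mem_sdiff.2 ⟨hi, hiF⟩)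
    · intro i hi
      by_cases hiF : i ∈ F
      · rw [LinearMap.comp_apply, Submodule.mkQ_apply, (Submodule.Quotient.mk_eq_zero _).2 (v_mem_sp hiF), map_zero]
        simp [hiF]
      · rw [LinearMap.comp_apply, ← hl' i (Finset.mem_sdiff.2 ⟨hi, hiF⟩)]
        simp [hiF]
  · rintro ⟨hs, l, hl, hl'⟩
    have hk : sp v F ≤ LinearMap.ker l := le_trans (by rw [sp_union]; exact le_sup_right) (CF.ker hs hl')
    refine ⟨hA, (sp v F).liftQ l hk, ?_, ?_⟩
    · intro i hi
      exact hl i (hG.1 (Finset.mem_sdiff.1 hi).1)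
    · intro i hi
      have := hl' i (hG.1 (Finset.mem_sdiff.1 hi).1)
      change i ∈ A ↔ l (v i) = 0
      rw [← this]
      simp [(Finset.mem_sdiff.1 hi).2]

theorem euler_interval {S F G : Finset ι} (hF : CF v S F) (hG : CF v S G) (hFG : F ⊂ G) :
    ∑ H ∈ S.powerset.filter (fun H => CF v S H ∧ F ⊆ H ∧ H ⊆ G), (-1 : ℤ) ^ Module.finrank ℝ (sp v H) = 0 := by
  have hne : (G \ F).Nonempty := Finset.sdiff_nonempty.2 hFG.2
  obtain ⟨l, hl, hl'⟩ := hF.2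
  have hk := CF.ker hF.1 hl'
  have h := euler_pointed (v := fun i => (sp v F).mkQ (v i)) (G \ F) hne ((sp v F).liftQ l hk) (by
    intro i hi
    rw [Finset.mem_sdiff] at hi
    rw [Submodule.mkQ_apply, Submodule.liftQ_apply]
    have := hl i (hG.1 hi.1)
    exact lt_of_le_of_ne this fun h => hi.2 ((hl' i (hG.1 hi.1)).2 h.symm))
  have h2 : ∑ H ∈ S.powerset.filter (fun H => CF v S H ∧ F ⊆ H ∧ H ⊆ G), (-1 : ℤ) ^ Module.finrank ℝ (sp v H)
      = (∑ A ∈ (G \ F).powerset.filter (CF (fun i => (sp v F).mkQ (v i)) (G \ F)),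
        (-1 : ℤ) ^ Module.finrank ℝ (sp (fun i => (sp v F).mkQ (v i)) A)) * (-1) ^ Module.finrank ℝ (sp v F) := by
    rw [Finset.sum_mul]
    symm
    refine Finset.sum_bij' (fun A _ => A ∪ F) (fun H _ => H \ F) ?_ ?_ ?_ ?_ ?_
    · intro A hA
      rw [Finset.mem_filter, Finset.mem_powerset] at hA ⊢
      have := (CF_quot hF hG hFG.1 hA.1).1 hA.2
      exact ⟨this.1, this, Finset.subset_union_right, Finset.union_subset (hA.1.trans Finset.sdiff_subset) hFG.1⟩
    · intro H hH
      rw [Finset.mem_filter, Finset.mem_powerset] at hH ⊢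
      obtain ⟨h1, h2, h3, h4⟩ := hH
      have h5 : H \ F ⊆ G \ F := Finset.sdiff_subset_sdiff h4 subset_rfl
      refine ⟨h5, (CF_quot hF hG hFG.1 h5).2 ?_⟩
      rwa [Finset.sdiff_union_of_subset h3]
    · intro A hA
      rw [Finset.mem_filter, Finset.mem_powerset] at hA
      rw [Finset.union_sdiff_right, Finset.sdiff_eq_self_iff_disjoint]
      exact Finset.disjoint_left.2 fun i hi => (Finset.mem_sdiff.1 (hA.1 hi)).2
    · intro H hH
      rw [Finset.mem_filter] at hH
      exact Finset.sdiff_union_of_subset hH.2.2.1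
    · intro A hA
      rw [← pow_add, finrank_quot]
  rw [h2, h, zero_mul]

end interval

section hull
variable {V : Type*} [AddCommGroup V] [Module ℝ V]

/-- homogenization -/
def hv (x : V) : V × ℝ := (x, 1)

/-- convex hull of a finset -/
def cv (A : Finset V) : Set V := convexHull ℝ (A : Set V)

lemma cv_empty : cv (∅ : Finset V) = ∅ := by simp [cv]

lemma cv_eq_empty {A : Finset V} : cv A = ∅ ↔ A = ∅ := by
  rw [cv, convexHull_eq_empty, Finset.coe_eq_empty]

lemma sub_cv {A : Finset V} {i : V} (hi : i ∈ A) : i ∈ cv A := subset_convexHull ℝ _ hi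

lemma cv_mono {A B : Finset V} (h : A ⊆ B) : cv A ⊆ cv B :=
  convexHull_mono (Finset.coe_subset.2 h)

lemma key_nonneg {S A : Finset V} {L : V × ℝ →ₗ[ℝ] ℝ} (hA : A ⊆ S) (hL : ∀ i ∈ S, 0 ≤ L (hv i))
    (hL' : ∀ i ∈ S, (i ∈ A ↔ L (hv i) = 0)) {x : V} (hx : x ∈ cv S) :
    0 ≤ L (hv x) ∧ (L (hv x) = 0 ↔ x ∈ cv A) := by
  have ex : ∀ (B : Finset V) (w : V → ℝ), ∑ i ∈ B, w i = 1 → L (hv (∑ i ∈ B, w i • i)) = ∑ i ∈ B, w i * L (hv i) := by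
    intro B w hw
    have : hv (∑ i ∈ B, w i • i) = ∑ i ∈ B, w i • hv i := by
      ext
      · simp [hv, Prod.fst_sum]
      · simp [hv, Prod.snd_sum, hw]
    rw [this, map_sum]
    simp
  rw [cv, Finset.mem_convexHull'] at hx
  obtain ⟨w, hw0, hw1, rfl⟩ := hx
  have e := ex S w hw1
  refine ⟨?_, ?_, ?_⟩
  · rw [e]; exact Finset.sum_nonneg fun i hi => mul_nonneg (hw0 i hi) (hL i hi)
  · intro h
    rw [e, Finset.sum_eq_zero_iff_of_nonneg fun i hi => mul_nonneg (hw0 i hi) (hL i hi)] at h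
    have hz : ∀ i ∈ S, i ∉ A → w i = 0 := fun i hi hiA =>
      (mul_eq_zero.1 (h i hi)).resolve_right fun h0 => hiA ((hL' i hi).2 h0)
    rw [cv, Finset.mem_convexHull']
    refine ⟨w, fun i hi => hw0 i (hA hi), ?_, ?_⟩
    · rw [← hw1]; exact Finset.sum_subset hA hz
    · exact Finset.sum_subset hA fun i hi hiA => by rw [hz i hi hiA, zero_smul]
  · intro h
    rw [cv, Finset.mem_convexHull'] at h
    obtain ⟨w', hw0', hw1', h⟩ := h
    rw [← h, ex A w' hw1']
    exact Finset.sum_eq_zero fun i hi => by rw [(hL' i (hA hi)).1 hi, mul_zero]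

lemma mem_of_cv {S A : Finset V} (h : CF hv S A) {i : V} (hi : i ∈ S) (hiA : i ∈ cv A) : i ∈ A := by
  obtain ⟨hA, L, hL, hL'⟩ := h
  exact (hL' i hi).2 ((key_nonneg hA hL hL' (sub_cv hi)).2.2 hiA)

lemma cv_sub_iff {S A B : Finset V} (hA : CF hv S A) (hB : CF hv S B) : cv A ⊆ cv B ↔ A ⊆ B :=
  ⟨fun h _ hi => mem_of_cv hB (hA.1 hi) (h (sub_cv hi)), cv_mono⟩

lemma cv_inj {S A B : Finset V} (hA : CF hv S A) (hB : CF hv S B) (h : cv A = cv B) : A = B :=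
  subset_antisymm ((cv_sub_iff hA hB).1 h.subset) ((cv_sub_iff hB hA).1 h.symm.subset)

lemma CF_empty (S : Finset V) : CF hv S ∅ :=
  ⟨Finset.empty_subset _, LinearMap.snd ℝ V ℝ, by simp [hv], by simp [hv]⟩

lemma isFace_iff {S : Finset V} {F : Set V} : IsFace (cv S) F ↔ ∃ A, CF hv S A ∧ F = cv A := by
  constructor
  · rintro (rfl | rfl | ⟨l, hF⟩)
    · exact ⟨S, CF.refl S, rfl⟩
    · exact ⟨∅, CF_empty S, cv_empty.symm⟩
    · by_cases hne : F = ∅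
      · exact ⟨∅, CF_empty S, by rw [hne, cv_empty]⟩
      obtain ⟨x0, hx0⟩ := Set.nonempty_iff_ne_empty.2 hne
      have hx0' : x0 ∈ cv S ∧ ∀ y ∈ cv S, l y ≤ l x0 := by rw [hF] at hx0; exact hx0
      let L : V × ℝ →ₗ[ℝ] ℝ := (l x0) • LinearMap.snd ℝ V ℝ - l.comp (LinearMap.fst ℝ V ℝ)
      have hL : ∀ x, L (hv x) = l x0 - l x := by intro x; simp [L, hv]
      have h1 : S.filter (fun i => L (hv i) = 0) ⊆ S := Finset.filter_subset _ _
      have h2 : ∀ i ∈ S, 0 ≤ L (hv i) := by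
        intro i hi; rw [hL]; linarith [hx0'.2 i (sub_cv hi)]
      have h3 : ∀ i ∈ S, (i ∈ S.filter (fun i => L (hv i) = 0) ↔ L (hv i) = 0) := by
        intro i hi; simp [hi]
      refine ⟨S.filter (fun i => L (hv i) = 0), ⟨h1, L, h2, h3⟩, ?_⟩
      ext x
      rw [hF]
      constructor
      · rintro ⟨hx, hx'⟩
        refine (key_nonneg h1 h2 h3 hx).2.1 ?_
        rw [hL]; linarith [hx' x0 hx0'.1, hx0'.2 x hx]
      · intro hx
        have hxS := cv_mono h1 hx
        have := (key_nonneg h1 h2 h3 hxS).2.2 hx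
        rw [hL] at this
        exact ⟨hxS, fun y hy => by linarith [hx0'.2 y hy]⟩
  · rintro ⟨A, ⟨hA, L, hL, hL'⟩, rfl⟩
    rcases A.eq_empty_or_nonempty with rfl | ⟨a, ha⟩
    · right; left; exact cv_empty
    right; right
    let l : V →ₗ[ℝ] ℝ := -(L.comp (LinearMap.inl ℝ V ℝ))
    have hl : ∀ x, L (hv x) = L (0, 1) - l x := by
      intro x
      have : hv x = (0, 1) + LinearMap.inl ℝ V ℝ x := by simp [hv]
      rw [this, map_add]; simp [l]
    refine ⟨l, ?_⟩
    have ha0 := (hL' a (hA ha)).1 ha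
    rw [hl] at ha0
    ext x
    constructor
    · intro hx
      have hxS := cv_mono hA hx
      refine ⟨hxS, fun y hy => ?_⟩
      have h1 := (key_nonneg hA hL hL' hxS).2.2 hx
      have h2 := (key_nonneg hA hL hL' hy).1
      rw [hl] at h1 h2
      linarith
    · rintro ⟨hxS, hx⟩
      refine (key_nonneg hA hL hL' hxS).2.1 ?_
      have h1 := hx a (sub_cv (hA ha))
      have h2 := (key_nonneg hA hL hL' hxS).1
      rw [hl] at h2 ⊢
      linarith

lemma pdim_cv (A : Finset V) : pdim (cv A) = (Module.finrank ℝ (sp hv A) : ℤ) - 1 := by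
  rw [pdim]
  split_ifs with h
  · rw [cv_eq_empty] at h
    subst h
    have : sp hv (∅ : Finset V) = ⊥ := by simp [sp]
    rw [this]; simp
  · have hne : A.Nonempty := Finset.nonempty_iff_ne_empty.2 fun h' => h (cv_eq_empty.2 h')
    obtain ⟨p, hp⟩ := hne
    rw [← finrank_inf_ker (sp hv A) (LinearMap.snd ℝ V ℝ) ⟨hv p, v_mem_sp hp, by simp [hv]⟩]
    rw [cv, affineSpan_convexHull, direction_affineSpan]
    have : sp hv A ⊓ LinearMap.ker (LinearMap.snd ℝ V ℝ) = (vectorSpan ℝ (A : Set V)).map (LinearMap.inl ℝ V ℝ) := by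
      apply le_antisymm
      · rintro x ⟨hx, hx'⟩
        obtain ⟨a, rfl⟩ := mem_sp_iff.1 hx
        have h0 : ∑ i ∈ A, a i = 0 := by
          have : (∑ i ∈ A, a i • hv i).2 = 0 := hx'
          simpa [hv, Prod.snd_sum] using this
        refine ⟨∑ i ∈ A, a i • (i - p), ?_, ?_⟩
        · exact Submodule.sum_mem _ fun i hi => Submodule.smul_mem _ _
            (vsub_mem_vectorSpan ℝ (Finset.mem_coe.2 hi) (Finset.mem_coe.2 hp))
        · ext
          · simp [hv, Prod.fst_sum, smul_sub, Finset.sum_sub_distrib, ← Finset.sum_smul, h0]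
          · simp [hv, Prod.snd_sum, h0]
      · rw [Submodule.map_le_iff_le_comap, vectorSpan, Submodule.span_le]
        rintro _ ⟨x, hx, y, hy, rfl⟩
        have e : LinearMap.inl ℝ V ℝ (x - y) = hv x - hv y := by simp [hv]
        refine ⟨?_, ?_⟩
        · change LinearMap.inl ℝ V ℝ (x - y) ∈ sp hv A
          rw [e]
          exact Submodule.sub_mem _ (v_mem_sp hx) (v_mem_sp hy)
        · simp
    rw [this, (Submodule.equivMapOfInjective (LinearMap.inl ℝ V ℝ) LinearMap.inl_injective _).finrank_eq.symm]
    push_cast; ring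

end hull

section final
variable {V : Type*} [AddCommGroup V] [Module ℝ V]

/-- the face lattice, in terms of vertex sets -/
abbrev FL (S : Finset V) := {A : Finset V // CF hv S A}

instance (S : Finset V) : Finite (FL S) :=
  Finite.of_injective (fun A : FL S => (⟨A.1, Finset.mem_powerset.2 A.2.1⟩ : {B // B ∈ S.powerset}))
    fun A B h => Subtype.ext (congrArg (fun C => C.1) h)

noncomputable instance (S : Finset V) : Fintype (FL S) := Fintype.ofFinite _

noncomputable def rk (S : Finset V) (A : FL S) : ℕ := Module.finrank ℝ (sp hv A.1)

variable {S : Finset V}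

lemma pdim_rk (A : FL S) : pdim (cv A.1) = (rk S A : ℤ) - 1 := pdim_cv A.1

lemma rk_strictMono : StrictMono (rk S) := by
  intro A B hAB
  have hAB' : A.1 ⊂ B.1 := hAB
  obtain ⟨hA, l, hl, hl'⟩ := A.2
  obtain ⟨i, hiB, hiA⟩ := Finset.exists_of_ssubset hAB'
  apply Submodule.finrank_lt_finrank_of_lt
  refine lt_of_le_of_ne (Submodule.span_mono (Set.image_mono (Finset.coe_subset.2 hAB'.1))) ?_
  intro h
  have h1 : hv i ∈ sp hv A.1 := by rw [h]; exact v_mem_sp hiB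
  exact hiA ((hl' i (B.2.1 hiB)).2 (CF.ker hA hl' h1))

lemma eul_FL (x y : FL S) (hxy : x < y) : ∑ z ∈ ci x y, (-1 : ℚ) ^ rk S z = 0 := by
  have h := euler_interval x.2 y.2 hxy
  have h2 : ((∑ H ∈ S.powerset.filter (fun H => CF hv S H ∧ x.1 ⊆ H ∧ H ⊆ y.1),
      (-1 : ℤ) ^ Module.finrank ℝ (sp hv H) : ℤ) : ℚ) = 0 := by rw [h]; simp
  rw [← h2]
  push_cast
  refine Finset.sum_bij (fun z _ => z.1) ?_ ?_ ?_ ?_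
  · intro z hz
    rw [mem_ci] at hz
    rw [Finset.mem_filter, Finset.mem_powerset]
    exact ⟨z.2.1, z.2, hz.1, hz.2⟩
  · intro a _ b _ h; exact Subtype.ext h
  · intro H hH
    rw [Finset.mem_filter] at hH
    exact ⟨⟨H, hH.2.1⟩, (mem_ci).2 ⟨hH.2.2.1, hH.2.2.2⟩, rfl⟩
  · intro z _; rfl

lemma cv_FL_inj : Function.Injective (fun z : FL S => cv z.1) :=
  fun a b h => Subtype.ext (cv_inj a.2 b.2 h)

lemma face_set (x y : FL S) : {G' : Set V | IsFace (cv y.1) G' ∧ cv x.1 ⊆ G' ∧ G' ≠ cv y.1}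
    = (fun z : FL S => cv z.1) '' (ho x y : Finset (FL S)) := by
  ext G'
  constructor
  · rintro ⟨h1, h2, h3⟩
    obtain ⟨A, hA, rfl⟩ := isFace_iff.1 h1
    have hA' : CF hv S A := y.2.trans hA
    refine ⟨⟨A, hA'⟩, ?_, rfl⟩
    rw [Finset.mem_coe, mem_ho]
    refine ⟨(cv_sub_iff x.2 hA').1 h2, lt_of_le_of_ne hA.1 ?_⟩
    intro h; apply h3; rw [← h]
  · rintro ⟨z, hz, rfl⟩
    rw [Finset.mem_coe, mem_ho] at hz
    refine ⟨isFace_iff.2 ⟨z.1, z.2.restrict y.2.1 hz.2.le, rfl⟩, cv_mono hz.1, ?_⟩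
    intro h; exact hz.2.ne (cv_FL_inj h)

lemma relHAux_self (n : ℕ) (F : Set V) : relHAux n F F = 1 := by
  cases n <;> simp [relHAux]

lemma relHAux_succ (n : ℕ) (x y : FL S) (hxy : x < y) : relHAux (n + 1) (cv x.1) (cv y.1) =
    ∑ z ∈ ho x y, truncG (pdim (cv z.1) - pdim (cv x.1) - 1) (relHAux n (cv x.1) (cv z.1)) *
      (X - 1) ^ (rk S y - rk S z - 1) := by
  rw [relHAux, if_neg fun h => hxy.ne' (cv_FL_inj h), face_set, finsum_mem_image cv_FL_inj.injOn,
    finsum_mem_coe_finset]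
  refine Finset.sum_congr rfl fun z hz => ?_
  congr 2
  rw [pdim_rk, pdim_rk]
  omega

lemma fuel (n : ℕ) : ∀ (m : ℕ) (x y : FL S), x ≤ y → rk S y ≤ n → rk S y ≤ m →
    relHAux n (cv x.1) (cv y.1) = relHAux m (cv x.1) (cv y.1) := by
  induction n with
  | zero =>
    intro m x y hxy h1 h2
    have : x = y := by
      by_contra h
      have := rk_strictMono (lt_of_le_of_ne hxy h)
      omega
    rw [this, relHAux_self, relHAux_self]
  | succ n ih =>
    intro m x y hxy h1 h2
    rcases hxy.eq_or_lt with rfl | hlt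
    · rw [relHAux_self, relHAux_self]
    have h0 := rk_strictMono hlt
    obtain ⟨m, rfl⟩ : ∃ m', m = m' + 1 := ⟨m - 1, by omega⟩
    rw [relHAux_succ _ _ _ hlt, relHAux_succ _ _ _ hlt]
    refine Finset.sum_congr rfl fun z hz => ?_
    rw [mem_ho] at hz
    have := rk_strictMono hz.2
    rw [ih m x z hz.1 (by omega) (by omega)]

lemma relH_eq (x y : FL S) (hxy : x < y) : relH (cv x.1) (cv y.1) =
    ∑ z ∈ ho x y, relG (cv x.1) (cv z.1) * (X - 1) ^ (rk S y - rk S z - 1) := by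
  have h0 := rk_strictMono hxy
  obtain ⟨r, hr⟩ : ∃ r, rk S y = r + 1 := ⟨rk S y - 1, by omega⟩
  have : (pdim (cv y.1) + 1).toNat = r + 1 := by rw [pdim_rk]; omega
  rw [relH, this, relHAux_succ _ _ _ hxy]
  refine Finset.sum_congr rfl fun z hz => ?_
  rw [mem_ho] at hz
  have := rk_strictMono hz.2
  have e : (pdim (cv z.1) + 1).toNat = rk S z := by rw [pdim_rk]; omega
  rw [relG, relH, e, fuel r (rk S z) x z hz.1 (by omega) le_rfl]

lemma truncG_coeff (d : ℤ) (h : ℚ[X]) (j : ℕ) : (truncG d h).coeff j =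
    if j < d.toNat / 2 + 1 then h.coeff j - (if j = 0 then 0 else h.coeff (j - 1)) else 0 := by
  rw [truncG, finsetSum_coeff]
  simp only [coeff_C_mul_X_pow]
  rw [Finset.sum_ite_eq]
  simp only [Finset.mem_range]

lemma relG_self (x : FL S) : relG (cv x.1) (cv x.1) = 1 := by
  rw [relG, relH, relHAux_self]
  ext j
  rw [truncG_coeff]
  have : (pdim (cv x.1) - pdim (cv x.1) - 1).toNat / 2 + 1 = 1 := by simp
  rw [this, coeff_one]
  rcases j with _ | j <;> simp [coeff_one]

lemma relG_coeff (x y : FL S) (hxy : x < y) (j : ℕ) : (relG (cv x.1) (cv y.1)).coeff j =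
    if 2 * j < rk S y - rk S x then
      -(∑ z ∈ ho x y, relG (cv x.1) (cv z.1) * (X - 1) ^ (rk S y - rk S z)).coeff j else 0 := by
  have h0 := rk_strictMono hxy
  have e : ∑ z ∈ ho x y, relG (cv x.1) (cv z.1) * (X - 1) ^ (rk S y - rk S z)
      = (X - 1) * relH (cv x.1) (cv y.1) := by
    rw [relH_eq x y hxy, Finset.mul_sum]
    refine Finset.sum_congr rfl fun z hz => ?_
    rw [mem_ho] at hz
    have := rk_strictMono hz.2
    obtain ⟨r, hr⟩ : ∃ r, rk S y - rk S z = r + 1 := ⟨rk S y - rk S z - 1, by omega⟩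
    rw [hr, Nat.add_sub_cancel, pow_succ]; ring
  rw [e, relG, truncG_coeff]
  have hc : (j < (pdim (cv y.1) - pdim (cv x.1) - 1).toNat / 2 + 1) ↔ 2 * j < rk S y - rk S x := by
    rw [pdim_rk, pdim_rk]; omega
  simp only [hc]
  refine if_congr Iff.rfl ?_ rfl
  rw [sub_mul, one_mul, coeff_sub]
  cases j with
  | zero => simp
  | succ j => rw [coeff_X_mul]; simp

lemma final_aux (S : Finset V) (k : ℕ) (hdim : pdim (cv S) = (2 * k + 1 : ℤ)) :
    ((k : ℚ) + 2) * (toricG (cv S)).coeff k =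
      ∑ i ∈ Finset.range (k + 1), ((i : ℚ) + 1) *
        ∑ᶠ F ∈ {F : Set V | IsFace (cv S) F ∧ pdim F = (2 * i : ℤ)},
          (toricG F).coeff i * (relG F (cv S)).coeff (k - i) := by
  let x : FL S := ⟨∅, CF_empty S⟩
  let y : FL S := ⟨S, CF.refl S⟩
  have hx0 : rk S x = 0 := by
    have h := pdim_rk x
    have h1 : pdim (cv x.1) = -1 := by rw [show x.1 = ∅ from rfl, cv_empty, pdim, if_pos rfl]
    omega
  have hy : rk S y = rk S x + 2 * k + 2 := by
    have h := pdim_rk y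
    have h1 : pdim (cv y.1) = _ := hdim
    omega
  have hxy : x ≤ y := Finset.empty_subset _
  have main := comb_main (rk S) rk_strictMono eul_FL (fun a b => relG (cv a.1) (cv b.1)) relG_self relG_coeff
    x y hxy k hy
  have hG : ∀ F : Set V, toricG F = relG (cv x.1) F := by
    intro F; rw [toricG, show x.1 = ∅ from rfl, cv_empty]
  have hyS : cv y.1 = cv S := rfl
  rw [hG, ← hyS, main]
  refine Finset.sum_congr rfl fun i hi => ?_
  congr 1
  have hset : {F : Set V | IsFace (cv y.1) F ∧ pdim F = (2 * i : ℤ)} = (fun z : FL S => cv z.1) ''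
      ((ci x y).filter (fun z => rk S z = rk S x + 2 * i + 1) : Finset (FL S)) := by
    ext F
    constructor
    · rintro ⟨h1, h2⟩
      obtain ⟨A, hA, rfl⟩ := isFace_iff.1 h1
      refine ⟨⟨A, hA⟩, ?_, rfl⟩
      rw [Finset.mem_coe, Finset.mem_filter, mem_ci]
      refine ⟨⟨Finset.empty_subset _, hA.1⟩, ?_⟩
      have := pdim_rk (⟨A, hA⟩ : FL S)
      have h2' : pdim (cv (⟨A, hA⟩ : FL S).1) = _ := h2
      omega
    · rintro ⟨z, hz, rfl⟩
      rw [Finset.mem_coe, Finset.mem_filter, mem_ci] at hz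
      refine ⟨isFace_iff.2 ⟨z.1, z.2, rfl⟩, ?_⟩
      have := pdim_rk z
      change pdim (cv z.1) = _
      omega
  rw [hset, finsum_mem_image cv_FL_inj.injOn, finsum_mem_coe_finset]
  refine Finset.sum_congr rfl fun z hz => ?_
  rw [hG]

end final
end Stenson

/-- Stenson's identity (odd-dimensional case of Kalai's identity): for a
polytope of odd dimension `d = 2k+1`,
`(k+2)·g_k(P) = ∑_{i=0}^{k} (i+1) ∑_{dim F = 2i} g_i(F)·g_{k-i}(P/F)`. -/
theorem stenson_identity {V : Type*} [AddCommGroup V] [Module ℝ V]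
    (P : Set V) (hP : IsPolytope P) (k : ℕ) (hdim : pdim P = (2 * k + 1 : ℤ)) :
    ((k : ℚ) + 2) * (toricG P).coeff k =
      ∑ i ∈ Finset.range (k + 1), ((i : ℚ) + 1) *
        ∑ᶠ F ∈ {F : Set V | IsFace P F ∧ pdim F = (2 * i : ℤ)},
          (toricG F).coeff i * (relG F P).coeff (k - i) := by
  obtain ⟨S, rfl⟩ := hP
  exact Stenson.final_aux S k hdim
end

section
/- (Stanley; toric Dehn–Sommerville relations) For every polytope P of dimension d and every integer k with 0 ≤ k ≤ d, one has h_k(P) = h_{d−k}(P). -/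
open Classical Polynomial

/-! ### Euler characteristic of relatively open convex sets -/
section EulerChar

variable {V : Type*} [AddCommGroup V] [Module ℝ V]

def RO (S : Set V) : Prop :=
  Convex ℝ S ∧ ∀ x ∈ S, ∀ y ∈ S, ∃ ε : ℝ, 0 < ε ∧ x + ε • (x - y) ∈ S

lemma RO.conv {S : Set V} (h : RO S) {x y : V} (hx : x ∈ S) (hy : y ∈ S) (a b : ℝ)
    (ha : 0 ≤ a) (hb : 0 ≤ b) (hab : a + b = 1) : a • x + b • y ∈ S := h.1 hx hy ha hb hab

lemma RO.reach {S : Set V} (h : RO S) {x u : V} (hx : x ∈ S) (hu : u ∈ vectorSpan ℝ S) :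
    ∃ δ : ℝ, 0 < δ ∧ x + δ • u ∈ S := by
  rw [vectorSpan_eq_span_vsub_set_right ℝ hx] at hu
  induction hu using Submodule.span_induction with
  | mem u hu =>
    obtain ⟨y, hy, rfl⟩ := hu
    exact ⟨1, one_pos, by simpa using hy⟩
  | zero => exact ⟨1, one_pos, by simpa using hx⟩
  | add u v _ _ hu hv =>
    obtain ⟨d, hd, hu⟩ := hu
    obtain ⟨e, he, hv⟩ := hv
    refine ⟨d * e / (d + e), by positivity, ?_⟩
    have := h.conv hu hv (e / (d + e)) (d / (d + e)) (by positivity) (by positivity)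
      (by field_simp; ring)
    convert this using 1
    match_scalars <;> field_simp
    ring
  | smul a u _ hu =>
    obtain ⟨d, hd, hu⟩ := hu
    rcases lt_trichotomy a 0 with ha | ha | ha
    · obtain ⟨ε, hε, h'⟩ := h.2 x hx _ hu
      refine ⟨ε * d / (-a), div_pos (by positivity) (by linarith), ?_⟩
      convert h' using 1
      have : a ≠ 0 := ha.ne
      match_scalars <;> field_simp
      ring
    · exact ⟨1, one_pos, by simpa [ha] using hx⟩
    · refine ⟨d / a, by positivity, ?_⟩
      convert hu using 1
      match_scalars <;> field_simp

lemma RO.reach_le {S : Set V} (h : RO S) {x u : V} (hx : x ∈ S) (hu : u ∈ vectorSpan ℝ S) :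
    ∃ δ : ℝ, 0 < δ ∧ ∀ t : ℝ, 0 ≤ t → t ≤ δ → x + t • u ∈ S := by
  obtain ⟨d, hd, h1⟩ := h.reach hx hu
  refine ⟨d, hd, fun t ht htd => ?_⟩
  have := h.conv hx h1 (1 - t / d) (t / d) (by
    rw [sub_nonneg, div_le_one hd]; exact htd) (by positivity) (by ring)
  convert this using 1
  match_scalars <;> field_simp
  ring

noncomputable def eul (S : Set V) : ℤ :=
  if S = ∅ then 0 else (-1) ^ Module.finrank ℝ (vectorSpan ℝ S)

def slc (a : V →ₗ[ℝ] ℝ) (S : Set V) (c : EReal) : Set V := {x | x ∈ S ∧ ((a x : ℝ) : EReal) = c}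

lemma RO.slice {S : Set V} (h : RO S) (a : V →ₗ[ℝ] ℝ) (c : EReal) : RO (slc a S c) := by
  refine ⟨?_, ?_⟩
  · intro x hx y hy s t hs ht hst
    refine ⟨h.1 hx.1 hy.1 hs ht hst, ?_⟩
    have : a x = a y := by
      have := hx.2.trans hy.2.symm; exact_mod_cast this
    rw [← hx.2]; simp only [map_add, map_smul, smul_eq_mul, ← this]
    rw [← add_mul, hst, one_mul]
  · intro x hx y hy
    obtain ⟨ε, h0, h1⟩ := h.2 x hx.1 y hy.1
    refine ⟨ε, h0, h1, ?_⟩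
    have : a x = a y := by
      have := hx.2.trans hy.2.symm; exact_mod_cast this
    rw [← hx.2]; simp [this]

lemma RO.eul_slice {S : Set V} (h : RO S) (a : V →ₗ[ℝ] ℝ) (c : EReal)
    [FiniteDimensional ℝ (vectorSpan ℝ S)]
    (hne : (slc a S c).Nonempty) (hnc : ∃ x ∈ S, ∃ y ∈ S, a x ≠ a y) :
    eul (slc a S c) = - eul S := by
  obtain ⟨x, hx⟩ := hne
  have e1 : vectorSpan ℝ (slc a S c) = vectorSpan ℝ S ⊓ LinearMap.ker a := by
    apply le_antisymm
    · apply le_inf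
      · exact vectorSpan_mono ℝ (fun y hy => hy.1)
      · rw [vectorSpan_eq_span_vsub_set_right ℝ hx, Submodule.span_le]
        rintro _ ⟨y, hy, rfl⟩
        have : a y = a x := by
          have := hy.2.trans hx.2.symm; exact_mod_cast this
        simp [this]
    · rintro u ⟨hu, hk⟩
      obtain ⟨d, hd, hd'⟩ := h.reach hx.1 hu
      have hk : a u = 0 := hk
      have hm : x + d • u ∈ slc a S c := ⟨hd', by rw [← hx.2]; simp [hk]⟩
      have := vsub_mem_vectorSpan ℝ hm hx
      simp only [vsub_eq_sub, add_sub_cancel_left] at this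
      exact (Submodule.smul_mem_iff _ hd.ne').1 this
  have e2 : Module.finrank ℝ (vectorSpan ℝ S) = Module.finrank ℝ (vectorSpan ℝ (slc a S c)) + 1 := by
    set D := vectorSpan ℝ S
    have r := LinearMap.finrank_range_add_finrank_ker (a.comp D.subtype)
    have k : Module.finrank ℝ (LinearMap.ker (a.comp D.subtype)) = Module.finrank ℝ (D ⊓ LinearMap.ker a : Submodule ℝ V) := by
      rw [LinearMap.ker_comp]
      rw [← Submodule.map_comap_subtype]
      exact (LinearEquiv.finrank_eq (Submodule.equivMapOfInjective D.subtype D.injective_subtype _))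
    have k2 : LinearMap.range (a.comp D.subtype) = ⊤ := by
      rw [LinearMap.range_eq_top]
      apply LinearMap.surjective
      obtain ⟨y, hy, z, hz, hyz⟩ := hnc
      intro h0
      have := LinearMap.congr_fun h0 ⟨y - z, vsub_mem_vectorSpan ℝ hy hz⟩
      simp [sub_eq_zero] at this
      exact hyz this
    rw [k2, finrank_top, k, ← e1] at r
    simp at r
    omega
  have n1 : slc a S c ≠ ∅ := Set.Nonempty.ne_empty ⟨x, hx⟩
  have n2 : S ≠ ∅ := Set.Nonempty.ne_empty ⟨x, hx.1⟩
  rw [eul, if_neg n1, eul, if_neg n2, e2, pow_succ]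
  ring

lemma RO.interval {S : Set V} (h : RO S) (a : V →ₗ[ℝ] ℝ)
    (hnc : ∃ x ∈ S, ∃ y ∈ S, a x ≠ a y) :
    ∃ α β : EReal, α < β ∧ ∀ c, (slc a S c).Nonempty ↔ α < c ∧ c < β := by
  set T : Set EReal := (fun x => ((a x : ℝ) : EReal)) '' S
  have hlt : ∀ x ∈ S, ∃ y ∈ S, a y < a x := by
    intro x hx
    obtain ⟨y, hy, hxy⟩ : ∃ y ∈ S, a y ≠ a x := by
      by_contra! hh
      obtain ⟨y, hy, z, hz, h0⟩ := hnc
      exact h0 ((hh y hy).trans (hh z hz).symm)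
    rcases lt_or_gt_of_ne hxy with h1 | h1
    · exact ⟨y, hy, h1⟩
    · obtain ⟨ε, h0, h2⟩ := h.2 x hx y hy
      refine ⟨_, h2, ?_⟩
      simp
      nlinarith
  have hgt : ∀ x ∈ S, ∃ y ∈ S, a x < a y := by
    intro x hx
    obtain ⟨y, hy, hxy⟩ := hlt x hx
    obtain ⟨ε, h0, h2⟩ := h.2 x hx y hy
    refine ⟨_, h2, ?_⟩
    simp
    nlinarith
  have key : ∀ c, (slc a S c).Nonempty ↔ sInf T < c ∧ c < sSup T := by
    intro c
    constructor
    · rintro ⟨x, hx, rfl⟩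
      obtain ⟨y, hy, h1⟩ := hlt x hx
      obtain ⟨z, hz, h2⟩ := hgt x hx
      exact ⟨lt_of_le_of_lt (sInf_le ⟨y, hy, rfl⟩) (EReal.coe_lt_coe_iff.2 h1),
        lt_of_lt_of_le (EReal.coe_lt_coe_iff.2 h2) (le_sSup ⟨z, hz, rfl⟩)⟩
    · rintro ⟨h1, h2⟩
      rw [sInf_lt_iff] at h1
      rw [lt_sSup_iff] at h2
      obtain ⟨_, ⟨y, hy, rfl⟩, h1⟩ := h1
      obtain ⟨_, ⟨z, hz, rfl⟩, h2⟩ := h2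
      induction c with
      | bot => simp at h1
      | top => simp at h2
      | coe c =>
        have h1 : a y < c := EReal.coe_lt_coe_iff.1 h1
        have h2 : c < a z := EReal.coe_lt_coe_iff.1 h2
        have h3 : 0 < a z - a y := by linarith
        refine ⟨((a z - c) / (a z - a y)) • y + ((c - a y) / (a z - a y)) • z,
          h.1 hy hz (div_nonneg (by linarith) h3.le) (div_nonneg (by linarith) h3.le)
            (by field_simp; ring), ?_⟩
        congr 1
        simp
        field_simp
        ring
  refine ⟨sInf T, sSup T, ?_, key⟩
  obtain ⟨y, hy, _⟩ := hnc
  have := (key (a y)).1 ⟨y, hy, rfl⟩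
  exact this.1.trans this.2

lemma step_functional {X : Type*} [LinearOrder X] [DenselyOrdered X] (T : Finset X) :
    ∃ L : (X → ℤ) →ₗ[ℤ] ℤ,
      (∀ α ∈ T, ∀ β ∈ T, α < β → L (fun c => if α < c ∧ c < β then 1 else 0) = -1) ∧
      (∀ c₀ ∈ T, (∃ β ∈ T, c₀ < β) → L (fun c => if c = c₀ then 1 else 0) = 1) := by
  have hs : ∀ c : X, ∃ s : X, c ≤ s ∧ (∀ c' ∈ T, c < c' → s < c') ∧
      ((∃ β ∈ T, c < β) → c < s) := by
    intro c
    by_cases h : (T.filter (c < ·)).Nonempty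
    · have hm := Finset.min'_mem _ h
      rw [Finset.mem_filter] at hm
      obtain ⟨s, h1, h2⟩ := exists_between hm.2
      refine ⟨s, h1.le, fun c' hc' hcc => lt_of_lt_of_le h2 (Finset.min'_le _ _ ?_), fun _ => h1⟩
      simp [hc', hcc]
    · rw [Finset.not_nonempty_iff_eq_empty, Finset.filter_eq_empty_iff] at h
      exact ⟨c, le_rfl, fun c' hc' hcc => absurd hcc (h hc'), fun ⟨β, h1, h2⟩ => absurd h2 (h h1)⟩
  choose s hs1 hs2 hs3 using hs
  refine ⟨∑ c ∈ T, ((LinearMap.proj c : (X → ℤ) →ₗ[ℤ] ℤ) - LinearMap.proj (s c)), ?_, ?_⟩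
  · intro α hα β hβ hab
    simp only [LinearMap.sum_apply, LinearMap.sub_apply, LinearMap.proj_apply]
    rw [Finset.sum_eq_single_of_mem α hα]
    · have := hs2 α β hβ hab
      have := hs3 α ⟨β, hβ, hab⟩
      simp [*]
    · intro c hc hne
      have : (α < c ∧ c < β) ↔ (α < s c ∧ s c < β) := by
        constructor
        · rintro ⟨h1, h2⟩
          exact ⟨h1.trans_le (hs1 c), hs2 c β hβ h2⟩
        · rintro ⟨h1, h2⟩
          refine ⟨?_, (hs1 c).trans_lt h2⟩
          by_contra h3
          exact lt_asymm h1 (hs2 c α hα (lt_of_le_of_ne (not_lt.1 h3) hne))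
      simp [this]
  · intro c₀ h0 hβ
    simp only [LinearMap.sum_apply, LinearMap.sub_apply, LinearMap.proj_apply]
    rw [Finset.sum_eq_single_of_mem c₀ h0]
    · simp [(hs3 c₀ hβ).ne']
    · intro c hc hne
      have : s c ≠ c₀ := by
        rcases lt_or_gt_of_ne hne with h | h
        · exact (hs2 c c₀ h0 h).ne
        · exact (h.trans_le (hs1 c)).ne'
      simp [hne, this]

theorem eul_relation {ι : Type*} (I : Finset ι) (L : List (V →ₗ[ℝ] ℝ)) :
    ∀ (S : ι → Set V) (n : ι → ℤ), (∀ i ∈ I, RO (S i)) →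
      (∀ i ∈ I, FiniteDimensional ℝ (vectorSpan ℝ (S i))) →
      (∀ i ∈ I, ∀ j ∈ I, ∀ x ∈ S i, ∀ y ∈ S j, (∀ a ∈ L, a x = a y) → x = y) →
      (∀ x, ∑ i ∈ I, n i * (if x ∈ S i then 1 else 0) = 0) →
      ∑ i ∈ I, n i * eul (S i) = 0 := by
  induction L with
  | nil =>
    intro S n _ _ hsep hsum
    by_cases hne : ∃ i ∈ I, (S i).Nonempty
    · obtain ⟨i, hi, x, hx⟩ := hne
      refine Eq.trans ?_ (hsum x)
      refine Finset.sum_congr rfl fun j hj => ?_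
      congr 1
      by_cases hxj : x ∈ S j
      · have : S j = {x} := by
          ext y
          exact ⟨fun hy => (hsep j hj i hi y hy x hx (by simp)), fun hy => by rw [hy]; exact hxj⟩
        rw [this, eul, vectorSpan_singleton]; simp
      · have : S j = ∅ := by
          ext y
          simp only [Set.mem_empty_iff_false, iff_false]
          intro hy
          exact hxj (hsep j hj i hi y hy x hx (by simp) ▸ hy)
        simp [eul, this]
    · push Not at hne
      apply Finset.sum_eq_zero
      intro i hi
      simp [eul, hne i hi]
  | cons a L ih =>
    intro S n hRO hfd hsep hsum
    have hsl : ∀ c : EReal, ∑ i ∈ I, n i * eul (slc a (S i) c) = 0 := by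
      intro c
      apply ih
      · exact fun i hi => (hRO i hi).slice a c
      · intro i hi
        have := hfd i hi
        exact Submodule.finiteDimensional_of_le (vectorSpan_mono ℝ (fun x hx => hx.1) :
          vectorSpan ℝ (slc a (S i) c) ≤ vectorSpan ℝ (S i))
      · intro i hi j hj x hx y hy hh
        refine hsep i hi j hj x hx.1 y hy.1 ?_
        intro b hb
        rcases List.mem_cons.1 hb with rfl | hb
        · have := hx.2.trans hy.2.symm
          exact_mod_cast this
        · exact hh b hb
      · intro x
        by_cases hc : ((a x : ℝ) : EReal) = c
        · refine Eq.trans ?_ (hsum x)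
          refine Finset.sum_congr rfl fun j hj => ?_
          simp [slc, hc]
        · simp [slc, hc]
    have hform : ∀ i ∈ I, (∃ α β : EReal, α < β ∧
          (fun c => eul (slc a (S i) c)) = (-eul (S i)) • fun c => if α < c ∧ c < β then 1 else 0) ∨
        (∃ c₀ : EReal, c₀ < ⊤ ∧
          (fun c => eul (slc a (S i) c)) = (eul (S i)) • fun c => if c = c₀ then 1 else 0) := by
      intro i hi
      have := hfd i hi
      by_cases hnc : ∃ x ∈ S i, ∃ y ∈ S i, a x ≠ a y
      · left
        obtain ⟨α, β, h1, h2⟩ := (hRO i hi).interval a hnc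
        refine ⟨α, β, h1, ?_⟩
        funext c
        by_cases hc : (slc a (S i) c).Nonempty
        · simp [(hRO i hi).eul_slice a c hc hnc, (h2 c).1 hc]
        · have h3 := hc
          rw [h2] at h3
          rw [Set.not_nonempty_iff_eq_empty] at hc
          simp only [Pi.smul_apply, h3, if_false]
          simp [eul, hc]
      · right
        push Not at hnc
        rcases (S i).eq_empty_or_nonempty with h | ⟨x, hx⟩
        · refine ⟨0, by simp, ?_⟩
          funext c
          simp [h, slc, eul]
        · refine ⟨a x, EReal.coe_lt_top _, ?_⟩
          funext c
          by_cases hc : c = a x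
          · have : slc a (S i) c = S i := by
              ext y
              refine ⟨fun h => h.1, fun h => ⟨h, ?_⟩⟩
              rw [hc, hnc y h x hx]
            rw [this]
            simp [hc]
          · have : slc a (S i) c = ∅ := by
              ext y
              simp only [Set.mem_empty_iff_false, iff_false]
              rintro ⟨h3, h4⟩
              rw [hnc y h3 x hx] at h4
              exact hc h4.symm
            rw [this]
            simp [hc, eul]
    have hT : ∃ T : Finset EReal, ∀ i ∈ I, (∃ α ∈ T, ∃ β ∈ T, α < β ∧
          (fun c => eul (slc a (S i) c)) = (-eul (S i)) • fun c => if α < c ∧ c < β then 1 else 0) ∨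
        (∃ c₀ ∈ T, (∃ β ∈ T, c₀ < β) ∧
          (fun c => eul (slc a (S i) c)) = (eul (S i)) • fun c => if c = c₀ then 1 else 0) := by
      have : ∀ i, ∃ T : Finset EReal, i ∈ I → (∃ α ∈ T, ∃ β ∈ T, α < β ∧
          (fun c => eul (slc a (S i) c)) = (-eul (S i)) • fun c => if α < c ∧ c < β then 1 else 0) ∨
        (∃ c₀ ∈ T, (∃ β ∈ T, c₀ < β) ∧
          (fun c => eul (slc a (S i) c)) = (eul (S i)) • fun c => if c = c₀ then 1 else 0) := by
        intro i
        by_cases hi : i ∈ I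
        · rcases hform i hi with ⟨α, β, h1, h2⟩ | ⟨c₀, h1, h2⟩
          · exact ⟨{α, β}, fun _ => Or.inl ⟨α, by simp, β, by simp, h1, h2⟩⟩
          · exact ⟨{c₀, ⊤}, fun _ => Or.inr ⟨c₀, by simp, ⟨⊤, by simp, h1⟩, h2⟩⟩
        · exact ⟨∅, fun h => absurd h hi⟩
      choose T hT using this
      refine ⟨I.biUnion T, fun i hi => ?_⟩
      have hsub : T i ⊆ I.biUnion T := Finset.subset_biUnion_of_mem T hi
      rcases hT i hi with ⟨α, ha, β, hb, h1⟩ | ⟨c₀, h0, ⟨β, hb, h1⟩, h2⟩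
      · exact Or.inl ⟨α, hsub ha, β, hsub hb, h1⟩
      · exact Or.inr ⟨c₀, hsub h0, ⟨β, hsub hb, h1⟩, h2⟩
    obtain ⟨T, hT⟩ := hT
    obtain ⟨Λ, hΛ1, hΛ2⟩ := step_functional T
    have hΛ : ∀ i ∈ I, Λ (fun c => eul (slc a (S i) c)) = eul (S i) := by
      intro i hi
      rcases hT i hi with ⟨α, ha, β, hb, h1, h2⟩ | ⟨c₀, h0, h1, h2⟩
      · rw [h2, map_smul, hΛ1 α ha β hb h1]; simp
      · rw [h2, map_smul, hΛ2 c₀ h0 h1]; simp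
    have hz : ∑ i ∈ I, n i • (fun c => eul (slc a (S i) c)) = 0 := by
      funext c
      simpa using hsl c
    have := congrArg Λ hz
    rw [map_sum, map_zero] at this
    rw [← this]
    refine Finset.sum_congr rfl fun i hi => ?_
    rw [map_smul, hΛ i hi, smul_eq_mul]

end EulerChar

/-! ### Faces of polytopes -/
section Faces

variable {V : Type*} [AddCommGroup V] [Module ℝ V]

lemma hull_le {S : Set V} {l : V →ₗ[ℝ] ℝ} {M : ℝ} (h : ∀ s ∈ S, l s ≤ M) {x : V}
    (hx : x ∈ convexHull ℝ S) : l x ≤ M :=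
  convexHull_min (t := {x | l x ≤ M}) h (convex_halfSpace_le l.isLinear M) hx

lemma hull_ge {S : Set V} {l : V →ₗ[ℝ] ℝ} {M : ℝ} (h : ∀ s ∈ S, M ≤ l s) {x : V}
    (hx : x ∈ convexHull ℝ S) : M ≤ l x :=
  convexHull_min (t := {x | M ≤ l x}) h (convex_halfSpace_ge l.isLinear M) hx

lemma face_iff (P F : Set V) : IsFace P F ↔
    ∃ (l : V →ₗ[ℝ] ℝ) (M : ℝ), (∀ y ∈ P, l y ≤ M) ∧ F = {x | x ∈ P ∧ l x = M} := by
  constructor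
  · rintro (h | h | ⟨l, h⟩)
    · exact ⟨0, 0, by simp, by simp [h]⟩
    · exact ⟨0, 1, by simp, by simp [h]⟩
    · rcases F.eq_empty_or_nonempty with h0 | ⟨x, hx⟩
      · exact ⟨0, 1, by simp, by simp [h0]⟩
      · have hx' := hx
        rw [h] at hx'
        refine ⟨l, l x, hx'.2, ?_⟩
        rw [h]
        ext y
        exact ⟨fun hy => ⟨hy.1, le_antisymm (hx'.2 y hy.1) (hy.2 x hx'.1)⟩,
          fun hy => ⟨hy.1, fun z hz => hy.2 ▸ hx'.2 z hz⟩⟩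
  · rintro ⟨l, M, h1, h2⟩
    rcases F.eq_empty_or_nonempty with h0 | ⟨x, hx⟩
    · exact Or.inr (Or.inl h0)
    · right; right
      rw [h2] at hx
      refine ⟨l, ?_⟩
      rw [h2]
      ext y
      refine ⟨fun hy => ⟨hy.1, fun z hz => hy.2 ▸ h1 z hz⟩,
        fun hy => ⟨hy.1, le_antisymm (h1 y hy.1) ?_⟩⟩
      rw [← hx.2]
      exact hy.2 x hx.1

lemma IsFace.sub {P F : Set V} (h : IsFace P F) : F ⊆ P := by
  obtain ⟨l, M, _, rfl⟩ := (face_iff P F).1 h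
  exact fun x hx => hx.1

lemma IsFace.self (P : Set V) : IsFace P P := Or.inl rfl

lemma IsFace.bot (P : Set V) : IsFace P ∅ := Or.inr (Or.inl rfl)

lemma IsFace.restrict {P E F : Set V} (hE : IsFace P E) (hF : IsFace P F) (h : E ⊆ F) :
    IsFace F E := by
  obtain ⟨l, M, h1, h2⟩ := (face_iff P E).1 hE
  rw [face_iff]
  refine ⟨l, M, fun y hy => h1 y (hF.sub hy), ?_⟩
  ext x
  refine ⟨fun hx => ⟨h hx, ?_⟩, fun hx => ?_⟩
  · rw [h2] at hx; exact hx.2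
  · rw [h2]; exact ⟨hF.sub hx.1, hx.2⟩

lemma IsFace.inter {P E F : Set V} (hE : IsFace P E) (hF : IsFace P F) : IsFace P (E ∩ F) := by
  obtain ⟨l, M, h1, h2⟩ := (face_iff P E).1 hE
  obtain ⟨l', M', h1', h2'⟩ := (face_iff P F).1 hF
  rw [face_iff]
  refine ⟨l + l', M + M', fun y hy => add_le_add (h1 y hy) (h1' y hy), ?_⟩
  rw [h2, h2']
  ext x
  constructor
  · rintro ⟨⟨ha, hb⟩, ⟨-, hc⟩⟩
    exact ⟨ha, by simp [hb, hc]⟩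
  · rintro ⟨ha, hb⟩
    have := h1 x ha
    have := h1' x ha
    simp at hb
    exact ⟨⟨ha, by linarith⟩, ⟨ha, by linarith⟩⟩

lemma hull_filter (S : Finset V) (l : V →ₗ[ℝ] ℝ) (M : ℝ) (h : ∀ s ∈ S, l s ≤ M) :
    {x | x ∈ convexHull ℝ (S : Set V) ∧ l x = M} =
      convexHull ℝ ((S.filter (fun s => l s = M) : Finset V) : Set V) := by
  ext x
  constructor
  · rintro ⟨hx, hM⟩
    rw [Finset.mem_convexHull'] at hx ⊢
    obtain ⟨w, w0, w1, rfl⟩ := hx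
    have hz : ∑ s ∈ S, w s * (M - l s) = 0 := by
      simp only [mul_sub, Finset.sum_sub_distrib, ← Finset.sum_mul, w1]
      simp at hM
      rw [hM]; ring
    rw [Finset.sum_eq_zero_iff_of_nonneg
      (fun s hs => mul_nonneg (w0 s hs) (by linarith [h s hs]))] at hz
    have hw : ∀ s ∈ S, w s ≠ 0 → l s = M := by
      intro s hs h0
      have := hz s hs
      rw [mul_eq_zero] at this
      rcases this with h | h
      · exact absurd h h0
      · linarith
    refine ⟨w, fun y hy => w0 y (Finset.mem_filter.1 hy).1, ?_, ?_⟩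
    · rw [← w1]
      exact Finset.sum_filter_of_ne hw
    · exact Finset.sum_filter_of_ne (fun s hs h0 => hw s hs (fun h1 => h0 (by simp [h1])))
  · intro hx
    refine ⟨convexHull_mono (fun y hy => by simp at hy; exact hy.1) hx, ?_⟩
    apply le_antisymm
    · exact hull_le (fun s hs => by simp at hs; exact hs.2.le) hx
    · exact hull_ge (fun s hs => by simp at hs; exact hs.2.ge) hx

lemma face_hull {S : Finset V} {F : Set V} (h : IsFace (convexHull ℝ (S : Set V)) F) :
    ∃ T ⊆ S, F = convexHull ℝ (T : Set V) := by
  obtain ⟨l, M, h1, h2⟩ := (face_iff _ _).1 h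
  refine ⟨S.filter (fun s => l s = M), Finset.filter_subset _ _, ?_⟩
  rw [h2, hull_filter S l M (fun s hs => h1 s (subset_convexHull ℝ _ hs))]

lemma IsFace.polytope {P F : Set V} (hP : IsPolytope P) (h : IsFace P F) : IsPolytope F := by
  obtain ⟨S, rfl⟩ := hP
  obtain ⟨T, _, h⟩ := face_hull h
  exact ⟨T, h⟩

lemma faces_finite {P : Set V} (hP : IsPolytope P) : {F | IsFace P F}.Finite := by
  obtain ⟨S, rfl⟩ := hP
  apply ((S.powerset.image (fun T : Finset V => convexHull ℝ (T : Set V))).finite_toSet).subset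
  intro F hF
  obtain ⟨T, h1, h2⟩ := face_hull hF
  simp only [Finset.coe_image, Set.mem_image]
  exact ⟨T, by simpa using h1, h2.symm⟩

lemma IsFace.trans {P E F : Set V} (hP : IsPolytope P) (hF : IsFace P F) (hE : IsFace F E) :
    IsFace P E := by
  obtain ⟨S, rfl⟩ := hP
  obtain ⟨l, M, h1, h2⟩ := (face_iff _ F).1 hF
  obtain ⟨l', M', h1', h2'⟩ := (face_iff _ E).1 hE
  have h1S : ∀ s ∈ S, l s ≤ M := fun s hs => h1 s (subset_convexHull ℝ _ hs)
  rw [hull_filter S l M h1S] at h2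
  have h1S' : ∀ s ∈ S, l s = M → l' s ≤ M' := fun s hs h => h1' s (by
    rw [h2]; exact subset_convexHull ℝ _ (by simp [hs, h]))
  rw [h2, hull_filter _ l' M' (by simpa using h1S')] at h2'
  obtain ⟨N, hN⟩ : ∃ N : ℝ, ∀ s ∈ S, l s < M → l' s - M' < N * (M - l s) := by
    have : ∀ᶠ N : ℝ in Filter.atTop, ∀ s ∈ S, l s < M → l' s - M' < N * (M - l s) := by
      rw [Filter.eventually_all_finset]
      intro s hs
      by_cases h : l s < M
      · filter_upwards [Filter.eventually_gt_atTop ((l' s - M') / (M - l s))] with N hN _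
        rwa [div_lt_iff₀ (by linarith)] at hN
      · simp [h]
    exact this.exists
  have hle : ∀ s ∈ S, (N • l + l') s ≤ N * M + M' := by
    intro s hs
    simp only [LinearMap.add_apply, LinearMap.smul_apply, smul_eq_mul]
    rcases lt_or_eq_of_le (h1S s hs) with h | h
    · linarith [hN s hs h]
    · rw [h]; linarith [h1S' s hs h]
  rw [face_iff]
  refine ⟨N • l + l', N * M + M', fun y hy => hull_le hle hy, ?_⟩
  rw [hull_filter S _ _ hle, h2', Finset.filter_filter]
  congr 2
  apply Finset.filter_congr
  intro s hs
  simp only [LinearMap.add_apply, LinearMap.smul_apply, smul_eq_mul]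
  constructor
  · rintro ⟨h, h'⟩; rw [h, h']
  · intro h
    rcases lt_or_eq_of_le (h1S s hs) with h3 | h3
    · linarith [hN s hs h3]
    · rw [h3] at h; exact ⟨h3, by linarith⟩

/-- relative interior -/
def rint (P : Set V) : Set V := {x | x ∈ P ∧ ∀ F, IsFace P F → x ∈ F → F = P}

lemma rint_const {P : Set V} {x : V} (hx : x ∈ rint P) {l : V →ₗ[ℝ] ℝ} {M : ℝ}
    (h : ∀ y ∈ P, l y ≤ M) (hM : l x = M) : ∀ y ∈ P, l y = M := by
  have := hx.2 {x | x ∈ P ∧ l x = M} ((face_iff _ _).2 ⟨l, M, h, rfl⟩) ⟨hx.1, hM⟩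
  intro y hy
  rw [← this] at hy
  exact hy.2

lemma exists_rint {P : Set V} (hP : IsPolytope P) {x : V} (hx : x ∈ P) :
    ∃ F, IsFace P F ∧ x ∈ rint F := by
  have hfin : {F | IsFace P F ∧ x ∈ F}.Finite := (faces_finite hP).subset fun F h => h.1
  obtain ⟨F, hF⟩ := hfin.exists_minimal ⟨P, IsFace.self P, hx⟩
  refine ⟨F, hF.prop.1, hF.prop.2, fun G hG hxG => ?_⟩
  exact hF.eq_of_le ⟨hF.prop.1.trans hP hG, hxG⟩ hG.sub

lemma rint_sub_face {P E F : Set V} (hE : IsFace P E) (hF : IsFace P F) {x : V} (hx : x ∈ rint E)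
    (hxF : x ∈ F) : E ⊆ F := by
  have := hx.2 (E ∩ F) ((hE.inter hF).restrict hE Set.inter_subset_left) ⟨hx.1, hxF⟩
  exact Set.inter_eq_left.1 this

lemma rint_unique {P E F : Set V} (hE : IsFace P E) (hF : IsFace P F) {x : V} (hx : x ∈ rint E)
    (hxF : x ∈ rint F) : E = F :=
  (rint_sub_face hE hF hx hxF.1).antisymm (rint_sub_face hF hE hxF hx.1)

lemma IsPolytope.convex {P : Set V} (hP : IsPolytope P) : Convex ℝ P := by
  obtain ⟨S, rfl⟩ := hP
  exact convex_convexHull ℝ _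

lemma IsPolytope.conv {P : Set V} (hP : IsPolytope P) {x y : V} (hx : x ∈ P) (hy : y ∈ P)
    (a b : ℝ) (ha : 0 ≤ a) (hb : 0 ≤ b) (hab : a + b = 1) : a • x + b • y ∈ P :=
  hP.convex hx hy ha hb hab

lemma rint_comb {P : Set V} (hP : IsPolytope P) {x y : V} (hx : x ∈ rint P) (hy : y ∈ P)
    (a b : ℝ) (ha : 0 < a) (hb : 0 ≤ b) (hab : a + b = 1) : a • x + b • y ∈ rint P := by
  refine ⟨hP.conv hx.1 hy a b ha.le hb hab, fun F hF hm => ?_⟩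
  obtain ⟨l, M, h1, rfl⟩ := (face_iff _ _).1 hF
  refine hx.2 _ hF ⟨hx.1, le_antisymm (h1 x hx.1) ?_⟩
  have h2 := hm.2
  have h3 := h1 y hy
  simp at h2
  have : a * M ≤ a * l x := by
    have : b * l y ≤ b * M := mul_le_mul_of_nonneg_left h3 hb
    have : M = a * M + b * M := by rw [← add_mul, hab, one_mul]
    linarith
  exact le_of_mul_le_mul_left this ha

lemma rint_stiemke {S : Finset V} {x : V} (hx : x ∈ rint (convexHull ℝ (S : Set V))) :
    ∃ v : V → ℝ, (∀ s ∈ S, 1 ≤ v s) ∧ ∑ s ∈ S, v s • (s - x) = 0 := by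
  set U : Submodule ℝ V := Submodule.span ℝ ((fun s => s - x) '' (S : Set V)) with hU
  have hmemU : ∀ s ∈ S, s - x ∈ U := fun s hs => Submodule.subset_span ⟨s, hs, rfl⟩
  obtain ⟨C, hC⟩ := U.exists_isCompl
  let K : PointedCone ℝ V :=
    { carrier := {v | ∃ w : V → ℝ, (∀ s ∈ S, 0 ≤ w s) ∧ v - ∑ s ∈ S, w s • (s - x) ∈ C}
      add_mem' := by
        rintro a b ⟨w, h1, h2⟩ ⟨w', h1', h2'⟩
        refine ⟨w + w', fun s hs => add_nonneg (h1 s hs) (h1' s hs), ?_⟩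
        have := C.add_mem h2 h2'
        convert this using 1
        simp only [Pi.add_apply, add_smul, Finset.sum_add_distrib]
        abel
      zero_mem' := ⟨0, by simp, by simp⟩
      smul_mem' := by
        rintro c a ⟨w, h1, h2⟩
        refine ⟨fun s => c.1 * w s, fun s hs => mul_nonneg c.2 (h1 s hs), ?_⟩
        have := C.smul_mem c.1 h2
        convert this using 1
        simp only [smul_sub, Finset.smul_sum, mul_smul]
        rfl }
  have hK : ∀ v, v ∈ K ↔ ∃ w : V → ℝ, (∀ s ∈ S, 0 ≤ w s) ∧ v - ∑ s ∈ S, w s • (s - x) ∈ C :=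
    fun v => Iff.rfl
  set u : V := ∑ s ∈ S, (s - x) with hu
  by_cases hneg : -u ∈ K
  · obtain ⟨w, h1, h2⟩ := (hK _).1 hneg
    have h3 : -u - ∑ s ∈ S, w s • (s - x) ∈ U :=
      U.sub_mem (U.neg_mem (U.sum_mem hmemU)) (U.sum_mem fun s hs => U.smul_mem _ (hmemU s hs))
    have h4 := Submodule.disjoint_def.1 hC.disjoint _ h3 h2
    refine ⟨fun s => 1 + w s, fun s hs => by linarith [h1 s hs], ?_⟩
    simp only [add_smul, one_smul, Finset.sum_add_distrib]
    rw [← neg_eq_zero, ← h4, hu]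
    abel
  · exfalso
    have hu0 : u ≠ 0 := by
      intro h; apply hneg; rw [h, neg_zero]; exact K.zero_mem
    obtain ⟨g, hg1, hg2⟩ := riesz_extension K (LinearPMap.mkSpanSingleton u (1 : ℝ) hu0) (by
        rintro ⟨y, hy⟩ hyK
        obtain ⟨c, rfl⟩ := Submodule.mem_span_singleton.1 hy
        rw [LinearPMap.mkSpanSingleton'_apply]
        simp only [smul_eq_mul, mul_one, RingHom.id_apply]
        by_contra! hc
        apply hneg
        have := K.smul_mem (r := (-c)⁻¹) (inv_nonneg.2 (by linarith)) hyK
        convert this using 1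
        change -u = (-c)⁻¹ • c • u
        rw [smul_smul, inv_neg, neg_mul, inv_mul_cancel₀ hc.ne, neg_one_smul]) (by
        intro y
        obtain ⟨a, ha, c, hc, rfl⟩ := Submodule.mem_sup.1 (show y ∈ U ⊔ C by
          rw [hC.sup_eq_top]; trivial)
        rw [hU, Submodule.mem_span_image_finset_iff_exists_fun'] at ha
        obtain ⟨b, rfl⟩ := ha
        obtain ⟨N, hN⟩ : ∃ N : ℝ, ∀ s ∈ S, 0 ≤ N + b s := by
          have : ∀ᶠ N : ℝ in Filter.atTop, ∀ s ∈ S, 0 ≤ N + b s := by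
            rw [Filter.eventually_all_finset]
            intro s hs
            filter_upwards [Filter.eventually_ge_atTop (- b s)] with N hN
            linarith
          exact this.exists
        refine ⟨⟨N • u, Submodule.mem_span_singleton.2 ⟨N, rfl⟩⟩, ?_⟩
        rw [hK]
        refine ⟨fun s => N + b s, hN, ?_⟩
        convert hc using 1
        simp only [add_smul, Finset.sum_add_distrib, ← Finset.smul_sum]
        rw [← hu]
        abel)
    have hs0 : ∀ s ∈ S, 0 ≤ g (s - x) := by
      intro s hs
      apply hg2
      rw [hK]
      refine ⟨fun t => if t = s then 1 else 0, fun t _ => by positivity, ?_⟩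
      simp [hs]
    have hmax : ∀ y ∈ convexHull ℝ (S : Set V), (-g) y ≤ (-g) x := fun y hy =>
      hull_le (fun s hs => by have := hs0 s hs; simp at this; simpa using this) hy
    have hc := rint_const hx hmax rfl
    have : g u = 0 := by
      rw [hu, map_sum]
      apply Finset.sum_eq_zero
      intro s hs
      have := hc s (subset_convexHull ℝ _ hs)
      simp at this
      simp [this]
    have h1 := hg1 ⟨u, Submodule.mem_span_singleton_self u⟩
    simp only [this] at h1
    have h2 := LinearPMap.mkSpanSingleton_apply ℝ ℝ (σ := RingHom.id ℝ) hu0 (1 : ℝ)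
    rw [← h1] at h2
    norm_num at h2

lemma rint_open {P : Set V} (hP : IsPolytope P) {x y : V} (hx : x ∈ rint P) (hy : y ∈ P) :
    ∃ ε : ℝ, 0 < ε ∧ x + ε • (x - y) ∈ P := by
  obtain ⟨S, rfl⟩ := hP
  obtain ⟨v, v1, v2⟩ := rint_stiemke hx
  rw [Finset.mem_convexHull'] at hy
  obtain ⟨w, w0, w1, rfl⟩ := hy
  have hle : ∀ s ∈ S, w s ≤ 1 := fun s hs => w1 ▸ Finset.single_le_sum w0 hs
  have hW : 0 < ∑ s ∈ S, v s := by
    apply Finset.sum_pos (fun s hs => by linarith [v1 s hs])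
    by_contra h
    rw [Finset.not_nonempty_iff_eq_empty] at h
    simp [h] at w1
  set W := ∑ s ∈ S, v s with hWd
  have hxW : W • x = ∑ s ∈ S, v s • s := by
    simp only [smul_sub, Finset.sum_sub_distrib, ← Finset.sum_smul, ← hWd] at v2
    exact (sub_eq_zero.1 v2).symm
  refine ⟨1 / W, by positivity, ?_⟩
  rw [Finset.mem_convexHull']
  refine ⟨fun s => v s / W + 1 / W * (v s / W - w s), fun s hs => ?_, ?_, ?_⟩
  · have h1 := v1 s hs
    have h2 := hle s hs
    have : 0 ≤ (v s - w s) / W := div_nonneg (by linarith) hW.le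
    have : 0 ≤ 1 / W * (v s / W) := by positivity
    calc (0:ℝ) ≤ (v s - w s) / W + 1 / W * (v s / W) := by linarith
      _ = _ := by ring
  · rw [Finset.sum_add_distrib, ← Finset.mul_sum, Finset.sum_sub_distrib, ← Finset.sum_div, w1,
      ← hWd]
    field_simp
    ring
  · have hx' : x = ∑ s ∈ S, (v s / W) • s := by
      rw [← one_smul ℝ x, ← inv_mul_cancel₀ hW.ne', mul_smul, hxW, Finset.smul_sum]
      refine Finset.sum_congr rfl fun s hs => ?_
      rw [smul_smul]; congr 1; ring
    simp only [add_smul, mul_smul, sub_smul, Finset.sum_add_distrib, ← Finset.smul_sum,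
      Finset.sum_sub_distrib]
    rw [← hx']

lemma rint_open_le {P : Set V} (hP : IsPolytope P) {x y : V} (hx : x ∈ rint P) (hy : y ∈ P) :
    ∃ ε : ℝ, 0 < ε ∧ x + ε • (x - y) ∈ rint P := by
  obtain ⟨ε, h0, h1⟩ := rint_open hP hx hy
  refine ⟨ε / 2, by positivity, ?_⟩
  have := rint_comb hP hx h1 (1 / 2) (1 / 2) (by norm_num) (by norm_num) (by norm_num)
  convert this using 1
  match_scalars <;> ring

lemma rint_RO {P : Set V} (hP : IsPolytope P) : RO (rint P) := by
  refine ⟨?_, fun x hx y hy => rint_open_le hP hx hy.1⟩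
  intro x hx y hy a b ha hb hab
  rcases ha.eq_or_lt with h | h
  · subst h
    have : b = 1 := by linarith
    subst this
    simpa using hy
  · exact rint_comb hP hx hy.1 a b h hb hab

lemma rint_nonempty {P : Set V} (hP : IsPolytope P) (hne : P.Nonempty) : (rint P).Nonempty := by
  obtain ⟨S, rfl⟩ := hP
  rw [convexHull_nonempty_iff, Finset.coe_nonempty] at hne
  have hn : (0:ℝ) < S.card := by exact_mod_cast hne.card_pos
  refine ⟨∑ s ∈ S, (S.card : ℝ)⁻¹ • s, ?_, ?_⟩
  · rw [Finset.mem_convexHull']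
    exact ⟨fun _ => (S.card : ℝ)⁻¹, fun _ _ => by positivity, by simp [hn.ne'], rfl⟩
  · intro F hF hm
    obtain ⟨l, M, h1, rfl⟩ := (face_iff _ _).1 hF
    have h1S : ∀ s ∈ S, l s ≤ M := fun s hs => h1 s (subset_convexHull ℝ _ hs)
    have hz : ∑ s ∈ S, (M - l s) = 0 := by
      have := hm.2
      simp only [map_sum, map_smul, smul_eq_mul, ← Finset.mul_sum] at this
      rw [inv_mul_eq_iff_eq_mul₀ hn.ne'] at this
      simp [this]
    rw [Finset.sum_eq_zero_iff_of_nonneg (fun s hs => by linarith [h1S s hs])] at hz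
    ext x
    refine ⟨fun h => h.1, fun h => ⟨h, le_antisymm (h1 x h) ?_⟩⟩
    exact hull_ge (fun s hs => by linarith [hz s hs]) h

lemma rint_sub (P : Set V) : rint P ⊆ P := fun _ h => h.1

lemma affineSpan_rint {P : Set V} (hP : IsPolytope P) (hne : P.Nonempty) :
    affineSpan ℝ (rint P) = affineSpan ℝ P := by
  apply le_antisymm (affineSpan_mono ℝ (rint_sub P))
  rw [affineSpan_le]
  intro s hs
  obtain ⟨c, hc⟩ := rint_nonempty hP hne
  have hm := rint_comb hP hc hs (1 / 2) (1 / 2) (by norm_num) (by norm_num) (by norm_num)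
  have := AffineMap.lineMap_mem (2 : ℝ) (subset_affineSpan ℝ _ hc) (subset_affineSpan ℝ _ hm)
  rw [AffineMap.lineMap_apply] at this
  simp only [vsub_eq_sub, vadd_eq_add] at this
  rw [SetLike.mem_coe]
  convert this using 1
  match_scalars <;> ring

lemma finiteDim {P : Set V} (hP : IsPolytope P) : FiniteDimensional ℝ (vectorSpan ℝ P) := by
  obtain ⟨S, rfl⟩ := hP
  rw [← direction_affineSpan, affineSpan_convexHull, direction_affineSpan]
  exact finiteDimensional_vectorSpan_of_finite ℝ S.finite_toSet

lemma pdim_of_nonempty {P : Set V} (h : P.Nonempty) :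
    pdim P = Module.finrank ℝ (vectorSpan ℝ P) := by
  rw [pdim, if_neg h.ne_empty, direction_affineSpan]

lemma pdim_ge (P : Set V) : -1 ≤ pdim P := by
  rw [pdim]; split_ifs <;> omega

lemma pdim_lt {P F : Set V} (hP : IsPolytope P) (hF : IsFace P F) (hne : F ≠ P) :
    pdim F < pdim P := by
  rcases F.eq_empty_or_nonempty with rfl | hFn
  · rw [pdim_of_nonempty (Set.nonempty_iff_ne_empty.2 hne.symm)]
    simp [pdim]
    omega
  · rw [pdim_of_nonempty hFn, pdim_of_nonempty (hFn.mono hF.sub)]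
    obtain ⟨l, M, h1, h2⟩ := (face_iff _ _).1 hF
    have := finiteDim hP
    norm_cast
    apply Submodule.finrank_lt_finrank_of_lt
    refine lt_of_le_of_ne (vectorSpan_mono ℝ hF.sub) ?_
    intro heq
    apply hne
    apply hF.sub.antisymm
    intro y hy
    obtain ⟨x, hx⟩ := hFn
    have h3 : y - x ∈ vectorSpan ℝ F := heq ▸ vsub_mem_vectorSpan ℝ hy (hF.sub hx)
    have h4 : vectorSpan ℝ F ≤ LinearMap.ker l := by
      rw [vectorSpan_eq_span_vsub_set_right ℝ hx, Submodule.span_le]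
      rintro _ ⟨z, hz, rfl⟩
      rw [h2] at hz hx
      simp [hz.2, hx.2]
    have h5 : l (y - x) = 0 := h4 h3
    rw [h2] at hx ⊢
    refine ⟨hy, ?_⟩
    rw [map_sub] at h5
    linarith [hx.2]

lemma line_compact {P : Set V} (hP : IsPolytope P) (p v : V) (hv : v ≠ 0) :
    IsCompact {s : ℝ | p + s • v ∈ P} := by
  obtain ⟨S, rfl⟩ := hP
  obtain ⟨b, hb⟩ : ∃ b : V →ₗ[ℝ] ℝ, b v = 1 := by
    obtain ⟨f, hf⟩ : ∃ f : Module.Dual ℝ V, f v ≠ 0 := by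
      by_contra! h
      exact hv ((Module.forall_dual_apply_eq_zero_iff ℝ v).1 h)
    exact ⟨(f v)⁻¹ • f, by simp [hf]⟩
  let φ : (S → ℝ) →ₗ[ℝ] V := ∑ s : S, (LinearMap.proj s : (S → ℝ) →ₗ[ℝ] ℝ).smulRight (s.1 - p)
  have hφ : ∀ w, φ w = ∑ s : S, w s • (s.1 - p) := fun w => by simp [φ]
  have hφ1 : ∀ w ∈ stdSimplex ℝ S, φ w = (∑ s : S, w s • s.1) - p := by
    intro w hw
    rw [hφ]
    simp only [smul_sub, Finset.sum_sub_distrib, ← Finset.sum_smul, hw.2, one_smul]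
  have hcl : IsClosed ((Submodule.comap φ (ℝ ∙ v) : Submodule ℝ (S → ℝ)) : Set (S → ℝ)) :=
    Submodule.closed_of_finiteDimensional _
  have hK := (isCompact_stdSimplex ℝ S).inter_right hcl
  have := hK.image (f := b.comp φ) (LinearMap.continuous_of_finiteDimensional _)
  convert this using 1
  ext s
  simp only [Set.mem_ofPred_eq, Set.mem_image]
  constructor
  · intro hs
    rw [Finset.mem_convexHull'] at hs
    obtain ⟨w, w0, w1, w2⟩ := hs
    have hw : (fun s : S => w s.1) ∈ stdSimplex ℝ S :=
      ⟨fun s => w0 s.1 s.2, by rw [← w1]; exact Finset.sum_coe_sort S w⟩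
    have h1 := hφ1 _ hw
    rw [Finset.sum_coe_sort S (fun s => w s • s), w2, add_sub_cancel_left] at h1
    refine ⟨fun s => w s.1, ⟨hw, ?_⟩, ?_⟩
    · simp only [Submodule.comap_coe, Set.mem_preimage, SetLike.mem_coe]
      rw [h1]
      exact Submodule.mem_span_singleton.2 ⟨s, rfl⟩
    · rw [LinearMap.comp_apply, h1, map_smul, hb]; simp
  · rintro ⟨w, ⟨hw, hm⟩, rfl⟩
    obtain ⟨c, hc⟩ := Submodule.mem_span_singleton.1 (Submodule.mem_comap.1 hm)
    rw [LinearMap.comp_apply, ← hc, map_smul, hb, smul_eq_mul, mul_one, hc, hφ1 w hw,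
      add_sub_cancel]
    have : (∑ s : S, w s • s.1) ∈ convexHull ℝ (S : Set V) :=
      (convex_convexHull ℝ _).sum_mem (fun s _ => hw.1 s) hw.2
        (fun s _ => subset_convexHull ℝ _ s.2)
    exact this

end Faces

/-! ### The Euler relation for intervals of the face lattice -/
section Euler

variable {V : Type*} [AddCommGroup V] [Module ℝ V]

def cn (z : V) (S : Set V) : Set V := {y | ∃ s : ℝ, 0 < s ∧ ∃ x ∈ S, y = z + s • (x - z)}

lemma cn_RO {z : V} {S : Set V} (h : RO S) : RO (cn z S) := by
  constructor
  · rintro _ ⟨s, hs, x, hx, rfl⟩ _ ⟨s', hs', x', hx', rfl⟩ a b ha hb hab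
    have hpos : 0 < a * s + b * s' := by
      rcases ha.eq_or_lt with h0 | h0
      · have : b = 1 := by linarith
        subst this; rw [← h0]; linarith
      · have := mul_pos h0 hs
        have := mul_nonneg hb hs'.le
        linarith
    refine ⟨a * s + b * s', hpos, _, h.conv hx hx' (a * s / (a * s + b * s'))
      (b * s' / (a * s + b * s')) (by positivity) (by positivity) (by field_simp), ?_⟩
    have hb' : b = 1 - a := by linarith
    subst hb'
    match_scalars <;> field_simp <;> ring
  · rintro _ ⟨s, hs, x, hx, rfl⟩ _ ⟨s', hs', x', hx', rfl⟩
    obtain ⟨d, hd, hd'⟩ := h.reach_le hx (vsub_mem_vectorSpan ℝ hx hx')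
    simp only [vsub_eq_sub] at hd'
    set ε := s / (2 * s') * min d 1 with hε
    have hm : 0 < min d 1 := lt_min hd one_pos
    have hε0 : 0 < ε := by positivity
    have h1 : ε * s' ≤ s / 2 := by
      have : ε * s' = s / 2 * min d 1 := by rw [hε]; field_simp
      rw [this]
      have := min_le_right d 1
      nlinarith
    have h2 : ε * s' ≤ s / 2 * d := by
      have : ε * s' = s / 2 * min d 1 := by rw [hε]; field_simp
      rw [this]
      have := min_le_left d 1
      nlinarith
    have hσ : s / 2 ≤ s + ε * (s - s') := by nlinarith [mul_pos hε0 hs]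
    have hσ0 : 0 < s + ε * (s - s') := by linarith
    refine ⟨ε, hε0, s + ε * (s - s'), hσ0, _, hd' (ε * s' / (s + ε * (s - s'))) (by positivity) ?_, ?_⟩
    · rw [div_le_iff₀ hσ0]
      nlinarith
    · match_scalars <;> field_simp <;> ring

lemma affineSpan_cn {z : V} {S : Set V} (hS : S.Nonempty) :
    affineSpan ℝ (cn z S) = affineSpan ℝ (insert z S) := by
  apply le_antisymm
  · rw [affineSpan_le]
    rintro _ ⟨s, hs, x, hx, rfl⟩
    have := AffineMap.lineMap_mem s (subset_affineSpan ℝ (insert z S) (Set.mem_insert z S))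
      (subset_affineSpan ℝ (insert z S) (Set.mem_insert_of_mem z hx))
    rw [AffineMap.lineMap_apply] at this
    simp only [vsub_eq_sub, vadd_eq_add] at this
    rw [add_comm]
    exact this
  · rw [affineSpan_le]
    have hsub : ∀ x ∈ S, x ∈ cn z S := fun x hx => ⟨1, one_pos, x, hx, by simp⟩
    rintro y (rfl | hy)
    · obtain ⟨x, hx⟩ := hS
      have h2 : y + (2:ℝ) • (x - y) ∈ cn y S := ⟨2, two_pos, x, hx, rfl⟩
      have := AffineMap.lineMap_mem (-1 : ℝ) (subset_affineSpan ℝ _ (hsub x hx))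
        (subset_affineSpan ℝ _ h2)
      rw [AffineMap.lineMap_apply] at this
      simp only [vsub_eq_sub, vadd_eq_add] at this
      rw [SetLike.mem_coe]
      convert this using 1
      match_scalars <;> ring
    · exact subset_affineSpan ℝ _ (hsub y hy)

lemma cn_nonempty {z : V} {S : Set V} (hS : S.Nonempty) : (cn z S).Nonempty :=
  let ⟨x, hx⟩ := hS; ⟨_, 1, one_pos, x, hx, rfl⟩

lemma eul_cn_mem {z : V} {S : Set V} (hS : S.Nonempty) (hz : z ∈ affineSpan ℝ S) :
    eul (cn z S) = eul S := by
  rw [eul, eul, if_neg (cn_nonempty hS).ne_empty, if_neg hS.ne_empty, ← direction_affineSpan,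
    affineSpan_cn hS, affineSpan_insert_eq_affineSpan ℝ hz, direction_affineSpan]

lemma eul_cn_notMem {z : V} {S : Set V} (hS : S.Nonempty) (hz : z ∉ affineSpan ℝ S)
    [FiniteDimensional ℝ (vectorSpan ℝ S)] :
    eul (cn z S) = - eul S := by
  obtain ⟨x, hx⟩ := hS
  have hd : vectorSpan ℝ (cn z S) = vectorSpan ℝ S ⊔ Submodule.span ℝ {z - x} := by
    rw [← direction_affineSpan, affineSpan_cn ⟨x, hx⟩, ← affineSpan_insert_affineSpan,
      AffineSubspace.direction_affineSpan_insert (subset_affineSpan ℝ _ hx), direction_affineSpan,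
      sup_comm]
    rfl
  have hn : z - x ∉ vectorSpan ℝ S := by
    intro h
    apply hz
    rw [← direction_affineSpan] at h
    have := AffineSubspace.vadd_mem_of_mem_direction h (subset_affineSpan ℝ _ hx)
    simpa using this
  have hf : Module.finrank ℝ (vectorSpan ℝ (cn z S)) = Module.finrank ℝ (vectorSpan ℝ S) + 1 := by
    have hz0 : z - x ≠ 0 := fun h => hn (h ▸ Submodule.zero_mem _)
    have := Submodule.finrank_sup_add_finrank_inf_eq (vectorSpan ℝ S) (Submodule.span ℝ {z - x})
    rw [finrank_span_singleton hz0, (Submodule.disjoint_span_singleton' hz0).2 hn |>.eq_bot,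
      finrank_bot, ← hd] at this
    omega
  rw [eul, eul, if_neg (cn_nonempty ⟨x, hx⟩).ne_empty, if_neg (Set.Nonempty.ne_empty ⟨x, hx⟩), hf,
    pow_succ]
  ring

lemma exists_sep (W : Submodule ℝ V) [FiniteDimensional ℝ W] :
    ∃ L : List (V →ₗ[ℝ] ℝ), ∀ v ∈ W, (∀ a ∈ L, a v = 0) → v = 0 := by
  let b := Module.finBasis ℝ W
  have : ∀ i, ∃ g : V →ₗ[ℝ] ℝ, g.comp W.subtype = b.coord i := fun i => (b.coord i).exists_extend
  choose g hg using this
  refine ⟨List.ofFn g, fun v hv h => ?_⟩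
  have : (⟨v, hv⟩ : W) = 0 := by
    rw [← b.forall_coord_eq_zero_iff]
    intro i
    rw [← hg i]
    exact h (g i) (by simp [List.mem_ofFn])
  simpa using congrArg Subtype.val this

/-- rank of a face -/
noncomputable def rk (F : Set V) : ℕ := (pdim F + 1).toNat

lemma rk_empty : rk (∅ : Set V) = 0 := by simp [rk, pdim]

lemma rk_nonempty {F : Set V} (h : F.Nonempty) :
    rk F = Module.finrank ℝ (vectorSpan ℝ F) + 1 := by
  rw [rk, pdim_of_nonempty h]; omega

lemma eul_rint {F : Set V} (hF : IsPolytope F) (h : F.Nonempty) :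
    eul (rint F) = - (-1) ^ rk F := by
  rw [eul, if_neg (rint_nonempty hF h).ne_empty, ← direction_affineSpan, affineSpan_rint hF h,
    direction_affineSpan, rk_nonempty h, pow_succ]
  ring

noncomputable def cn' (z : V) (F : Set V) : Set V := if F = ∅ then {z} else cn z (rint F)

lemma euler_core {P : Set V} (hP : IsPolytope P) (hne : P.Nonempty) {z : V}
    (hz : z ∈ affineSpan ℝ P) (I : Finset (Set V)) (hI : ∀ F ∈ I, IsFace P F ∧ F ≠ P)
    (hzF : ∀ F ∈ I, F.Nonempty → z ∉ affineSpan ℝ F)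
    (hcov : ∀ y, y ∈ cn z (rint P) ↔ ∃ F ∈ I, y ∈ cn' z F)
    (hdisj : ∀ F ∈ I, ∀ G ∈ I, ∀ y, y ∈ cn' z F → y ∈ cn' z G → F = G) :
    ∑ F ∈ I, (-1 : ℤ) ^ rk F + (-1) ^ rk P = 0 := by
  have hPI : P ∉ I := fun h => (hI P h).2 rfl
  have hP0 : P ≠ ∅ := hne.ne_empty
  have hpol : ∀ F ∈ insert P I, IsPolytope F := by
    intro F hF
    rcases Finset.mem_insert.1 hF with rfl | hF
    · exact hP
    · exact (hI F hF).1.polytope hP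
  have hsubP : ∀ F ∈ insert P I, F ⊆ P := by
    intro F hF
    rcases Finset.mem_insert.1 hF with rfl | hF
    · exact subset_rfl
    · exact (hI F hF).1.sub
  have hsub : ∀ F ∈ insert P I, cn' z F ⊆ affineSpan ℝ P := by
    intro F hF
    rw [cn']
    split_ifs with h0
    · simpa using hz
    · have h0 := Set.nonempty_iff_ne_empty.2 h0
      refine (subset_affineSpan ℝ _).trans ?_
      rw [affineSpan_cn (rint_nonempty (hpol F hF) h0)]
      have : affineSpan ℝ (insert z (rint F)) ≤ affineSpan ℝ P := by
        rw [affineSpan_le]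
        rintro y (rfl | hy)
        · exact hz
        · exact subset_affineSpan ℝ _ (hsubP F hF hy.1)
      exact this
  have hdiff : ∀ x ∈ affineSpan ℝ P, ∀ y ∈ affineSpan ℝ P, x - y ∈ vectorSpan ℝ P := by
    intro x hx y hy
    rw [← direction_affineSpan]
    exact AffineSubspace.vsub_mem_direction hx hy
  have hfd := finiteDim hP
  obtain ⟨L, hL⟩ := exists_sep (vectorSpan ℝ P)
  have hfdF : ∀ F ∈ insert P I, FiniteDimensional ℝ (vectorSpan ℝ (rint F)) := by
    intro F hF
    exact Submodule.finiteDimensional_of_le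
      (vectorSpan_mono ℝ ((rint_sub F).trans (hsubP F hF)))
  have key := eul_relation (insert P I) L (cn' z) (fun F => if F = P then 1 else -1)
    (by
      intro F hF
      rw [cn']
      split_ifs with h0
      · refine ⟨convex_singleton z, ?_⟩
        rintro x rfl y rfl
        exact ⟨1, one_pos, by simp⟩
      · exact cn_RO (rint_RO (hpol F hF)))
    (by
      intro F hF
      have : vectorSpan ℝ (cn' z F) ≤ vectorSpan ℝ P := by
        rw [← direction_affineSpan, ← direction_affineSpan]
        exact AffineSubspace.direction_le (affineSpan_le.2 (hsub F hF))
      exact Submodule.finiteDimensional_of_le this)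
    (by
      intro F hF G hG x hx y hy h
      rw [← sub_eq_zero]
      refine hL _ (hdiff x (hsub F hF hx) y (hsub G hG hy)) fun a ha => ?_
      rw [map_sub, h a ha, sub_self])
    (by
      intro y
      rw [Finset.sum_insert hPI]
      have h1 : ∑ F ∈ I, (if F = P then (1:ℤ) else -1) * (if y ∈ cn' z F then 1 else 0) =
          - ∑ F ∈ I, (if y ∈ cn' z F then 1 else 0) := by
        rw [← Finset.sum_neg_distrib]
        refine Finset.sum_congr rfl fun F hF => ?_
        rw [if_neg (hI F hF).2]; ring
      rw [h1, if_pos rfl]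
      have hcP : cn' z P = cn z (rint P) := by rw [cn', if_neg hP0]
      rw [hcP]
      by_cases hy : y ∈ cn z (rint P)
      · obtain ⟨F, hF, hyF⟩ := (hcov y).1 hy
        rw [Finset.sum_eq_single_of_mem F hF]
        · simp [hy, hyF]
        · intro G hG hne
          rw [if_neg]
          exact fun h => hne (hdisj G hG F hF y h hyF)
      · rw [Finset.sum_eq_zero]
        · simp [hy]
        · intro F hF
          rw [if_neg]
          exact fun h => hy ((hcov y).2 ⟨F, hF, h⟩))
  rw [Finset.sum_insert hPI, if_pos rfl] at key
  have e1 : eul (cn' z P) = - (-1) ^ rk P := by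
    rw [cn', if_neg hP0, eul_cn_mem (rint_nonempty hP hne) (by rwa [affineSpan_rint hP hne]),
      eul_rint hP hne]
  have e2 : ∀ F ∈ I, eul (cn' z F) = (-1) ^ rk F := by
    intro F hF
    have hF' := Finset.mem_insert_of_mem (b := P) hF
    rw [cn']
    split_ifs with h0
    · rw [eul, vectorSpan_singleton, h0, rk_empty]; simp
    · have h0 := Set.nonempty_iff_ne_empty.2 h0
      have := hfdF F hF'
      rw [eul_cn_notMem (rint_nonempty (hpol F hF') h0)
        (by rw [affineSpan_rint (hpol F hF') h0]; exact hzF F hF h0), eul_rint (hpol F hF') h0,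
        neg_neg]
  have e3 : ∑ F ∈ I, (if F = P then (1:ℤ) else -1) * eul (cn' z F) = - ∑ F ∈ I, (-1) ^ rk F := by
    rw [← Finset.sum_neg_distrib]
    refine Finset.sum_congr rfl fun F hF => ?_
    rw [if_neg (hI F hF).2, e2 F hF]; ring
  rw [e1, e3] at key
  linarith

lemma affine_const {F : Set V} {l : V →ₗ[ℝ] ℝ} {M : ℝ} (h : ∀ x ∈ F, l x = M) {z : V}
    (hz : z ∈ affineSpan ℝ F) : l z = M := by
  refine affineSpan_induction (p := fun z => l z = M) hz h ?_
  intro c u v w hu hv hw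
  simp [hu, hv, hw]

lemma euler_bot {P : Set V} (hP : IsPolytope P) (hne : P.Nonempty) (I : Finset (Set V))
    (hI : ∀ F, F ∈ I ↔ IsFace P F ∧ F ≠ P) :
    ∑ F ∈ I, (-1 : ℤ) ^ rk F + (-1) ^ rk P = 0 := by
  obtain ⟨p, hp⟩ := rint_nonempty hP hne
  have hlt : ∀ F, IsFace P F → F ≠ P → ∃ (l : V →ₗ[ℝ] ℝ) (M : ℝ), (∀ y ∈ P, l y ≤ M) ∧
      (∀ x ∈ F, l x = M) ∧ l p < M := by
    intro F hF hFP
    obtain ⟨l, M, h1, h2⟩ := (face_iff _ _).1 hF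
    refine ⟨l, M, h1, fun x hx => (h2 ▸ hx : x ∈ {x | x ∈ P ∧ l x = M}).2, lt_of_le_of_ne (h1 p hp.1) fun h => ?_⟩
    exact hFP (hp.2 F hF (by rw [h2]; exact ⟨hp.1, h⟩))
  have hpF : ∀ F, IsFace P F → F ≠ P → p ∉ F := fun F hF hFP h => hFP (hp.2 F hF h)
  refine euler_core hP hne (subset_affineSpan ℝ _ hp.1) I (fun F hF => (hI F).1 hF) ?_ ?_ ?_
  · intro F hF hFn hpF
    obtain ⟨l, M, _, h2, h3⟩ := hlt F ((hI F).1 hF).1 ((hI F).1 hF).2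
    exact h3.ne (affine_const h2 hpF)
  · intro y
    constructor
    · rintro ⟨s, hs, x, hx, rfl⟩
      by_cases hxp : x = p
      · refine ⟨∅, (hI _).2 ⟨IsFace.bot P, hne.ne_empty.symm⟩, ?_⟩
        simp [cn', hxp]
      · have hc := line_compact hP p (x - p) (sub_ne_zero.2 hxp)
        have h1 : (1:ℝ) ∈ {s : ℝ | p + s • (x - p) ∈ P} := by simpa using hx.1
        obtain ⟨t, ht, htm⟩ := hc.exists_isGreatest ⟨1, h1⟩
        have ht1 : 1 ≤ t := htm h1
        obtain ⟨F, hF, hxF⟩ := exists_rint hP (show p + t • (x - p) ∈ P from ht)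
        have hFP : F ≠ P := by
          rintro rfl
          obtain ⟨ε, h0, h2⟩ := rint_open hP hxF hp.1
          have : (1 + ε) * t ∈ {s : ℝ | p + s • (x - p) ∈ F} := by
            have e : p + ((1 + ε) * t) • (x - p) = p + t • (x - p) + ε • (p + t • (x - p) - p) := by
              match_scalars <;> ring
            change p + ((1 + ε) * t) • (x - p) ∈ F
            rw [e]; exact h2
          have := htm this
          nlinarith
        refine ⟨F, (hI F).2 ⟨hF, hFP⟩, ?_⟩
        rw [cn', if_neg (Set.Nonempty.ne_empty ⟨_, hxF.1⟩)]
        refine ⟨s / t, by positivity, _, hxF, ?_⟩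
        match_scalars <;> field_simp <;> ring
    · rintro ⟨F, hF, hy⟩
      rw [cn'] at hy
      split_ifs at hy with h0
      · rw [Set.mem_singleton_iff.1 hy]
        exact ⟨1, one_pos, p, hp, by simp⟩
      · obtain ⟨s, hs, x, hx, rfl⟩ := hy
        refine ⟨2 * s, by positivity, _, rint_comb hP hp (((hI F).1 hF).1.sub hx.1) (1/2) (1/2)
          (by norm_num) (by norm_num) (by norm_num), ?_⟩
        match_scalars <;> ring
  · have hle : ∀ F ∈ I, ∀ G ∈ I, ∀ x ∈ F, ∀ x' ∈ G, ∀ s s' : ℝ, 0 < s → 0 < s' →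
        p + s • (x - p) = p + s' • (x' - p) → s' ≤ s := by
      intro F hF G hG x hx x' hx' s s' hs hs' he
      obtain ⟨l, M, h1, h2, h3⟩ := hlt G ((hI G).1 hG).1 ((hI G).1 hG).2
      have e := congrArg l he
      simp only [map_add, map_smul, map_sub, smul_eq_mul, h2 x' hx'] at e
      have := h1 x (((hI F).1 hF).1.sub hx)
      have : 0 < M - l p := by linarith
      have : s' * (M - l p) ≤ s * (M - l p) := by nlinarith
      exact le_of_mul_le_mul_right this (by linarith)
    have hmix : ∀ G ∈ I, p ∉ cn p (rint G) := by
      rintro G hG ⟨s, hs, x, hx, he⟩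
      have : x - p = 0 := by
        have : s • (x - p) = 0 := by simpa using he.symm
        exact (smul_eq_zero.1 this).resolve_left hs.ne'
      exact hpF G ((hI G).1 hG).1 ((hI G).1 hG).2 (sub_eq_zero.1 this ▸ hx.1)
    intro F hF G hG y hyF hyG
    rw [cn'] at hyF hyG
    split_ifs at hyF hyG with h0 h0' h0'
    · rw [h0, h0']
    · rw [Set.mem_singleton_iff.1 hyF] at hyG
      exact absurd hyG (hmix G hG)
    · rw [Set.mem_singleton_iff.1 hyG] at hyF
      exact absurd hyF (hmix F hF)
    · obtain ⟨s, hs, x, hx, rfl⟩ := hyF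
      obtain ⟨s', hs', x', hx', he⟩ := hyG
      have : s = s' := le_antisymm (hle G hG F hF x' hx'.1 x hx.1 s' s hs' hs he.symm)
        (hle F hF G hG x hx.1 x' hx'.1 s s' hs hs' he)
      subst this
      have : x = x' := by
        have := smul_right_injective V hs.ne' (add_left_cancel he)
        exact sub_left_injective this
      subst this
      exact rint_unique ((hI F).1 hF).1 ((hI G).1 hG).1 hx hx'

lemma euler_ne {P E : Set V} (hP : IsPolytope P) (hE : IsFace P E) (hEP : E ≠ P)
    (hEn : E.Nonempty) (I : Finset (Set V))
    (hI : ∀ F, F ∈ I ↔ IsFace P F ∧ E ⊆ F ∧ F ≠ P) :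
    ∑ F ∈ I, (-1 : ℤ) ^ rk F + (-1) ^ rk P = 0 := by
  have hne : P.Nonempty := hEn.mono hE.sub
  obtain ⟨p, hp⟩ := rint_nonempty (hE.polytope hP) hEn
  obtain ⟨q, hq⟩ := rint_nonempty hP hne
  have hpP : p ∈ P := hE.sub hp.1
  have hl : ∀ F : Set V, ∃ (l : V →ₗ[ℝ] ℝ) (M : ℝ), IsFace P F →
      (∀ y ∈ P, l y ≤ M) ∧ F = {x | x ∈ P ∧ l x = M} := by
    intro F
    by_cases hF : IsFace P F
    · obtain ⟨l, M, h⟩ := (face_iff _ _).1 hF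
      exact ⟨l, M, fun _ => h⟩
    · exact ⟨0, 0, fun h => absurd h hF⟩
  choose l M hl using hl
  have hlM : ∀ F, IsFace P F → ∀ x ∈ F, l F x = M F := by
    intro F hF x hx
    rw [(hl F hF).2] at hx
    exact hx.2
  obtain ⟨ε, hε, hεF⟩ : ∃ ε : ℝ, 0 < ε ∧ ∀ F ∈ {F | IsFace P F}, p ∉ F →
      l F (p - ε • (q - p)) < M F := by
    have : ∀ᶠ ε : ℝ in nhdsWithin 0 (Set.Ioi 0), ∀ F ∈ {F | IsFace P F}, p ∉ F →
      l F (p - ε • (q - p)) < M F := by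
      rw [Filter.eventually_all_finite (faces_finite hP)]
      intro F hF
      by_cases hpF : p ∈ F
      · simp [hpF]
      · have hlt : l F p < M F := by
          refine lt_of_le_of_ne ((hl F hF).1 p hpP) fun h => hpF ?_
          rw [(hl F hF).2]
          exact ⟨hpP, h⟩
        have hpos : 0 < (M F - l F p) / (1 + |l F q - l F p|) :=
          div_pos (by linarith) (by positivity)
        filter_upwards [Ioo_mem_nhdsGT hpos] with ε hε _
        have h2 := hε.2
        rw [lt_div_iff₀ (by positivity)] at h2
        have h3 := neg_abs_le (l F q - l F p)
        have h4 : ε * (-|l F q - l F p|) ≤ ε * (l F q - l F p) :=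
          mul_le_mul_of_nonneg_left h3 hε.1.le
        simp only [map_sub, map_smul, smul_eq_mul]
        nlinarith [hε.1]
    obtain ⟨ε, h1, h2⟩ := (this.and self_mem_nhdsWithin).exists
    exact ⟨ε, h2, h1⟩
  set z := p - ε • (q - p) with hz
  have hzP : z ∈ affineSpan ℝ P := by
    have := AffineMap.lineMap_mem (-ε) (subset_affineSpan ℝ _ hpP) (subset_affineSpan ℝ _ hq.1)
    rw [AffineMap.lineMap_apply] at this
    simp only [vsub_eq_sub, vadd_eq_add] at this
    convert this using 1
    rw [hz]
    match_scalars <;> ring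
  -- faces through p are violated by z
  have hzgt : ∀ F, IsFace P F → F ≠ P → p ∈ F → M F < l F z := by
    intro F hF hFP hpF
    have h1 : l F q < M F := by
      refine lt_of_le_of_ne ((hl F hF).1 q hq.1) fun h => hFP (hq.2 F hF ?_)
      rw [(hl F hF).2]
      exact ⟨hq.1, h⟩
    rw [hz]
    simp only [map_sub, map_smul, smul_eq_mul]
    rw [hlM F hF p hpF]
    nlinarith
  have hpI : ∀ F ∈ I, p ∈ F := fun F hF => ((hI F).1 hF).2.1 hp.1
  have hgtI : ∀ F ∈ I, M F < l F z := fun F hF =>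
    hzgt F ((hI F).1 hF).1 ((hI F).1 hF).2.2 (hpI F hF)
  have hz_notMem : z ∉ P := fun h => by
    have h1 := hzgt E hE hEP hp.1
    have h2 := (hl E hE).1 z h
    linarith
  refine euler_core hP hne hzP I (fun F hF => ⟨((hI F).1 hF).1, ((hI F).1 hF).2.2⟩) ?_ ?_ ?_
  · intro F hF _ hzF
    have := affine_const (hlM F ((hI F).1 hF).1) hzF
    linarith [hgtI F hF]
  · intro y
    constructor
    · rintro ⟨s, hs, x, hx, rfl⟩
      have hxz : x ≠ z := fun h => hz_notMem (h ▸ hx.1)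
      have hc := (line_compact hP z (x - z) (sub_ne_zero.2 hxz)).inter_right
        (isClosed_Ici (a := (0:ℝ)))
      have h1 : (1:ℝ) ∈ {s : ℝ | z + s • (x - z) ∈ P} ∩ Set.Ici 0 := by
        refine ⟨?_, Set.mem_Ici.2 zero_le_one⟩
        change z + (1:ℝ) • (x - z) ∈ P
        simpa using hx.1
      obtain ⟨t, ht, htm⟩ := hc.exists_isLeast ⟨1, h1⟩
      have ht1 : t ≤ 1 := htm h1
      have htP : z + t • (x - z) ∈ P := ht.1
      have ht0 : 0 < t := by
        refine lt_of_le_of_ne ht.2 fun h => hz_notMem ?_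
        rw [← h] at htP
        simpa using htP
      obtain ⟨F, hF, hxF⟩ := exists_rint hP htP
      have hFP : F ≠ P := by
        rintro rfl
        have hv : z - (z + t • (x - z)) ∈ vectorSpan ℝ (rint F) := by
          rw [← direction_affineSpan, affineSpan_rint hP hne]
          exact AffineSubspace.vsub_mem_direction hzP (subset_affineSpan ℝ _ htP)
        obtain ⟨d, hd, hd'⟩ := (rint_RO hP).reach_le hxF hv
        have hm : 0 < min d 1 := lt_min hd one_pos
        have h2 := hd' (min d 1) hm.le (min_le_left _ _)
        have h3 : (1 - min d 1) * t ∈ {s : ℝ | z + s • (x - z) ∈ F} ∩ Set.Ici 0 := by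
          refine ⟨?_, mul_nonneg (by linarith [min_le_right d 1]) ht0.le⟩
          change z + ((1 - min d 1) * t) • (x - z) ∈ F
          convert h2.1 using 1
          match_scalars <;> ring
        have := htm h3
        nlinarith
      have hpF : p ∈ F := by
        by_contra hpF
        have h2 := hεF F hF hpF
        have h3 := hlM F hF _ hxF.1
        have h4 := (hl F hF).1 x hx.1
        simp only [map_add, map_smul, map_sub, smul_eq_mul] at h3
        rcases ht1.lt_or_eq with h5 | h5
        · nlinarith
        · apply hFP
          rw [h5] at hxF
          simp only [one_smul, add_sub_cancel] at hxF
          exact rint_unique hF (IsFace.self P) hxF hx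
      have hEF : E ⊆ F := rint_sub_face hE hF hp hpF
      refine ⟨F, (hI F).2 ⟨hF, hEF, hFP⟩, ?_⟩
      rw [cn', if_neg (Set.Nonempty.ne_empty ⟨_, hxF.1⟩)]
      refine ⟨s / t, by positivity, _, hxF, ?_⟩
      match_scalars <;> field_simp <;> ring
    · rintro ⟨F, hF, hy⟩
      rw [cn', if_neg (Set.Nonempty.ne_empty ⟨p, hpI F hF⟩)] at hy
      obtain ⟨s, hs, x, hx, rfl⟩ := hy
      obtain ⟨η, hη, hη'⟩ := rint_open (((hI F).1 hF).1.polytope hP) hx (hpI F hF)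
      have hη' := ((hI F).1 hF).1.sub hη'
      set δ := η / (1 + ε + ε * η) with hδ
      have hδ0 : 0 < δ := by positivity
      have hδ1 : δ * (1 + ε + ε * η) = η := by rw [hδ]; field_simp
      have h1 : 0 ≤ 1 - δ * ε := by
        have : δ * ε = η * ε / (1 + ε + ε * η) := by rw [hδ]; ring
        rw [this, sub_nonneg, div_le_one (by positivity)]
        nlinarith
      have hw := rint_comb hP hq hη' (δ * ε) (1 - δ * ε) (by positivity) h1 (by ring)
      have hw2 : (δ * ε) • q + (1 - δ * ε) • (x + η • (x - p)) = z + (1 + δ) • (x - z) := by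
        rw [hz]
        match_scalars
        · ring
        · linear_combination -hδ1
        · linear_combination hδ1
      rw [hw2] at hw
      refine ⟨s / (1 + δ), by positivity, _, hw, ?_⟩
      match_scalars <;> field_simp <;> ring
  · have hle : ∀ F ∈ I, ∀ G ∈ I, ∀ x ∈ F, ∀ x' ∈ G, ∀ s s' : ℝ, 0 < s → 0 < s' →
        z + s • (x - z) = z + s' • (x' - z) → s ≤ s' := by
      intro F hF G hG x hx x' hx' s s' hs hs' he
      have h1 := (hl G ((hI G).1 hG).1).1 x (((hI F).1 hF).1.sub hx)
      have h3 := hgtI G hG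
      have e := congrArg (l G) he
      simp only [map_add, map_smul, map_sub, smul_eq_mul, hlM G ((hI G).1 hG).1 x' hx'] at e
      have : s * (l G z - M G) ≤ s' * (l G z - M G) := by nlinarith
      exact le_of_mul_le_mul_right this (by linarith)
    intro F hF G hG y hyF hyG
    rw [cn', if_neg (Set.Nonempty.ne_empty ⟨p, hpI F hF⟩)] at hyF
    rw [cn', if_neg (Set.Nonempty.ne_empty ⟨p, hpI G hG⟩)] at hyG
    obtain ⟨s, hs, x, hx, rfl⟩ := hyF
    obtain ⟨s', hs', x', hx', he⟩ := hyG
    have : s = s' := le_antisymm (hle F hF G hG x hx.1 x' hx'.1 s s' hs hs' he)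
      (hle G hG F hF x' hx'.1 x hx.1 s' s hs' hs he.symm)
    subst this
    have : x = x' := by
      have := smul_right_injective V hs.ne' (add_left_cancel he)
      exact sub_left_injective this
    subst this
    exact rint_unique ((hI F).1 hF).1 ((hI G).1 hG).1 hx hx'

lemma euler {P E : Set V} (hP : IsPolytope P) (hE : IsFace P E) (hEP : E ≠ P) (I : Finset (Set V))
    (hI : ∀ F, F ∈ I ↔ IsFace P F ∧ E ⊆ F ∧ F ≠ P) :
    ∑ F ∈ I, (-1 : ℤ) ^ rk F + (-1) ^ rk P = 0 := by
  rcases E.eq_empty_or_nonempty with rfl | h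
  · exact euler_bot hP (Set.nonempty_iff_ne_empty.2 hEP.symm) I (by simpa using hI)
  · exact euler_ne hP hE hEP h I hI

end Euler

section ToricPart

variable {V : Type*} [AddCommGroup V] [Module ℝ V]

lemma rk_pdim (G : Set V) : pdim G = (rk G : ℤ) - 1 := by
  have := pdim_ge G
  unfold rk; omega

lemma pdim_emp : pdim (∅ : Set V) = -1 := by simp [pdim]

lemma rk_emp : rk (∅ : Set V) = 0 := by simp [rk, pdim_emp]

lemma rk_lt {G F : Set V} (hG : IsPolytope G) (hF : IsFace G F) (hne : F ≠ G) : rk F < rk G := by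
  have := pdim_lt hG hF hne
  rw [rk_pdim, rk_pdim] at this
  omega

lemma rk_le {G F : Set V} (hG : IsPolytope G) (hF : IsFace G F) : rk F ≤ rk G := by
  by_cases h : F = G
  · rw [h]
  · exact (rk_lt hG hF h).le

lemma rk_zero {G : Set V} (h : rk G = 0) : G = ∅ := by
  have := rk_pdim G
  by_contra hne
  rw [h, pdim, if_neg hne] at this
  omega

lemma relHAux_emp (n : ℕ) : relHAux n (∅ : Set V) ∅ = 1 := by
  cases n <;> simp [relHAux]

lemma fuel_indep (n : ℕ) : ∀ (m : ℕ) (G : Set V), IsPolytope G → rk G ≤ n → rk G ≤ m →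
    relHAux n ∅ G = relHAux m ∅ G := by
  induction n with
  | zero =>
    intro m G hG h1 h2
    rw [rk_zero (Nat.le_zero.1 h1), relHAux_emp, relHAux_emp]
  | succ n ih =>
    intro m G hG h1 h2
    cases m with
    | zero => rw [rk_zero (Nat.le_zero.1 h2), relHAux_emp, relHAux_emp]
    | succ m =>
      simp only [relHAux]
      split_ifs with h
      · rfl
      · refine finsum_mem_congr rfl fun F hF => ?_
        have := rk_lt hG hF.1 hF.2.2
        rw [ih m F (hF.1.polytope hG) (by omega) (by omega)]

/-- The finite set of faces. -/
noncomputable def fcs (G : Set V) : Finset (Set V) :=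
  if h : {F | IsFace G F}.Finite then h.toFinset else ∅

lemma mem_fcs {G : Set V} (hG : IsPolytope G) {F : Set V} : F ∈ fcs G ↔ IsFace G F := by
  simp [fcs, faces_finite hG]

/-- The toric g polynomial. -/
noncomputable def gg (G : Set V) : ℚ[X] := truncG (pdim G - pdim (∅ : Set V) - 1) (relH ∅ G)

lemma relH_rec {G : Set V} (hG : IsPolytope G) (hne : G ≠ ∅) :
    relH ∅ G = ∑ F ∈ (fcs G).erase G, gg F * (X - 1) ^ (rk G - rk F - 1) := by
  obtain ⟨n, hn⟩ : ∃ n, rk G = n + 1 :=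
    ⟨rk G - 1, by have : rk G ≠ 0 := fun h => hne (rk_zero h); omega⟩
  have hs : {G' : Set V | IsFace G G' ∧ ∅ ⊆ G' ∧ G' ≠ G} = ((fcs G).erase G : Finset (Set V)) := by
    ext F
    simp only [Set.mem_setOf_eq, Finset.coe_erase, Set.mem_diff, Finset.mem_coe, mem_fcs hG,
      Set.empty_subset, Set.mem_singleton_iff, true_and]
  change relHAux (rk G) ∅ G = _
  rw [hn, relHAux, if_neg hne, hs, finsum_mem_coe_finset]
  refine Finset.sum_congr rfl fun F hF => ?_
  rw [Finset.mem_erase, mem_fcs hG] at hF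
  have h1 := rk_lt hG hF.2 hF.1
  rw [fuel_indep n (rk F) F (hF.2.polytope hG) (by omega) le_rfl]
  have e : (pdim G - pdim F - 1).toNat = n + 1 - rk F - 1 := by
    rw [rk_pdim G, rk_pdim F]; omega
  rw [e]
  rfl

lemma truncG_coeff (d : ℤ) (h : ℚ[X]) (k : ℕ) : (truncG d h).coeff k =
    if k ≤ d.toNat / 2 then h.coeff k - (if k = 0 then 0 else h.coeff (k - 1)) else 0 := by
  simp only [truncG, finset_sum_coeff, coeff_C_mul, coeff_X_pow, mul_ite, mul_one, mul_zero]
  rw [Finset.sum_ite_eq]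
  simp only [Finset.mem_range, Nat.lt_succ_iff]

lemma gg_coeff (G : Set V) (k : ℕ) : (gg G).coeff k =
    if k ≤ (rk G - 1) / 2 then
      (relH ∅ G).coeff k - (if k = 0 then 0 else (relH ∅ G).coeff (k - 1)) else 0 := by
  have e : (pdim G - pdim (∅ : Set V) - 1).toNat = rk G - 1 := by
    rw [rk_pdim G, pdim_emp]; omega
  rw [gg, truncG_coeff, e]

lemma gg_deg (G : Set V) : (gg G).natDegree ≤ rk G := by
  rw [natDegree_le_iff_coeff_eq_zero]
  intro k hk
  rw [gg_coeff, if_neg (by omega)]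

lemma gg_emp : gg (∅ : Set V) = 1 := by
  ext k
  rw [gg_coeff, rk_emp, relH, relHAux_emp, coeff_one]
  rcases k with _ | k <;> simp

lemma deg_X1 (n : ℕ) : ((X - 1 : ℚ[X]) ^ n).natDegree ≤ n := by
  have : (X - 1 : ℚ[X]).natDegree ≤ 1 := by compute_degree
  simpa using natDegree_pow_le_of_le n this

lemma relH_deg {G : Set V} (hG : IsPolytope G) (hne : G ≠ ∅) :
    (relH ∅ G).natDegree ≤ rk G - 1 := by
  rw [relH_rec hG hne]
  refine natDegree_sum_le_of_forall_le _ _ fun F hF => ?_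
  rw [Finset.mem_erase, mem_fcs hG] at hF
  have h1 := rk_lt hG hF.2 hF.1
  refine (natDegree_mul_le_of_le (gg_deg F) (deg_X1 _)).trans ?_
  omega

lemma reflect_X1 : reflect 1 (X - 1 : ℚ[X]) = 1 - X := by
  ext k
  rw [coeff_reflect]
  rcases k with _ | _ | k
  · rw [revAt_le (by omega)]; simp [coeff_one]
  · rw [revAt_le (by omega)]; simp [coeff_one]
  · rw [revAt_eq_self_of_lt (by omega)]; simp [coeff_X, coeff_one]

lemma reflect_X1_pow (n : ℕ) : reflect n ((X - 1 : ℚ[X]) ^ n) = (1 - X) ^ n := by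
  induction n with
  | zero => 
    rw [pow_zero, pow_zero]
    simpa using reflect_one (R := ℚ) 0
  | succ n ih =>
    rw [pow_succ, reflect_mul _ _ (deg_X1 n) (by simpa using deg_X1 1), ih, reflect_X1, pow_succ]

lemma reflect_sum' {ι : Type*} (s : Finset ι) (f : ι → ℚ[X]) (n : ℕ) :
    reflect n (∑ i ∈ s, f i) = ∑ i ∈ s, reflect n (f i) := by
  induction s using Finset.induction_on with
  | empty => simp
  | insert a s ha ih => rw [Finset.sum_insert ha, Finset.sum_insert ha, reflect_add, ih]

lemma poly_step (d : ℕ) (g h : ℚ[X]) (hd : h.natDegree ≤ d) (hs : reflect d h = h)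
    (hg : ∀ k, g.coeff k =
      if k ≤ d / 2 then h.coeff k - (if k = 0 then 0 else h.coeff (k - 1)) else 0) :
    reflect (d + 1) g = (X - 1) * h + g := by
  have sym : ∀ i j, i + j = d → h.coeff i = h.coeff j := by
    intro i j hij
    conv_lhs => rw [← hs]
    rw [coeff_reflect, revAt_le (by omega)]
    congr 1; omega
  have hz : ∀ i, d < i → h.coeff i = 0 := fun i hi =>
    coeff_eq_zero_of_natDegree_lt (lt_of_le_of_lt hd hi)
  ext k
  rw [coeff_add, sub_mul, one_mul, coeff_sub, coeff_reflect]
  rcases k with _ | k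
  · rw [revAt_le (by omega), hg, hg, if_neg (by omega)]
    simp
  rw [coeff_X_mul]
  by_cases h1 : k + 1 ≤ d + 1
  · rw [revAt_le h1]
    by_cases h2 : k + 1 ≤ d / 2
    · rw [hg, hg, if_neg (by omega), if_pos h2]
      simp
    · rw [hg, hg (k + 1), if_neg h2, add_zero]
      split_ifs with h3 h4
      · have : k = d := by omega
        subst this
        rw [hz (k + 1) (by omega), sym k 0 (by omega), h4]
      · rw [sym k (d + 1 - (k + 1)) (by omega), sym (k + 1) (d + 1 - (k + 1) - 1) (by omega)]
      · rw [sym k (k + 1) (by omega), sub_self]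
  · rw [revAt_eq_self_of_lt (by omega), hg, if_neg (by omega), hz k (by omega),
      hz (k + 1) (by omega)]
    simp

lemma key (n : ℕ) : ∀ G : Set V, IsPolytope G → rk G = n →
    reflect (rk G) (gg G) = ∑ F ∈ fcs G, gg F * (X - 1) ^ (rk G - rk F) ∧
    (G ≠ ∅ → reflect (rk G - 1) (relH ∅ G) = relH ∅ G) := by
  induction n using Nat.strong_induction_on with
  | _ n ih =>
  intro G hG hn
  by_cases hne : G = ∅
  · subst hne
    refine ⟨?_, fun h => absurd rfl h⟩
    have : fcs (∅ : Set V) = {∅} := by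
      ext F
      rw [mem_fcs hG, Finset.mem_singleton]
      exact ⟨fun h => Set.subset_empty_iff.1 h.sub, fun h => h ▸ IsFace.self _⟩
    rw [this, Finset.sum_singleton, gg_emp, rk_emp]
    simpa using reflect_one (R := ℚ) 0
  have hr : rk G ≠ 0 := fun h => hne (rk_zero h)
  have hq : (X - 1) * relH ∅ G = ∑ F ∈ (fcs G).erase G, gg F * (X - 1) ^ (rk G - rk F) := by
    rw [relH_rec hG hne, Finset.mul_sum]
    refine Finset.sum_congr rfl fun F hF => ?_
    rw [Finset.mem_erase, mem_fcs hG] at hF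
    have h1 := rk_lt hG hF.2 hF.1
    obtain ⟨c, hc⟩ : ∃ c, rk G - rk F = c + 1 := ⟨rk G - rk F - 1, by omega⟩
    rw [hc, Nat.add_sub_cancel, pow_succ]
    ring
  have hanti : reflect (rk G) ((X - 1) * relH ∅ G) = -((X - 1) * relH ∅ G) := by
    rw [hq, reflect_sum']
    have e1 : ∀ F ∈ (fcs G).erase G, reflect (rk G) (gg F * (X - 1) ^ (rk G - rk F)) =
        ∑ E ∈ fcs F, gg E * (X - 1) ^ (rk G - rk E) * (-1) ^ (rk G - rk F) := by
      intro F hF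
      rw [Finset.mem_erase, mem_fcs hG] at hF
      have h1 := rk_lt hG hF.2 hF.1
      have h2 := hF.2.polytope hG
      conv_lhs => rw [show rk G = rk F + (rk G - rk F) by omega]
      rw [show rk F + (rk G - rk F) - rk F = rk G - rk F by omega,
        reflect_mul _ _ (gg_deg F) (deg_X1 _), (ih (rk F) (hn ▸ h1) F h2 rfl).1, reflect_X1_pow,
        Finset.sum_mul]
      refine Finset.sum_congr rfl fun E hE => ?_
      rw [mem_fcs h2] at hE
      have h3 := rk_le h2 hE
      rw [show (1 - X : ℚ[X]) = (X - 1) * (-1) by ring, mul_pow,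
        show rk G - rk E = (rk F - rk E) + (rk G - rk F) by omega, pow_add]
      ring
    rw [Finset.sum_congr rfl e1]
    rw [Finset.sum_comm' (t' := (fcs G).erase G)
      (s' := fun E => ((fcs G).erase G).filter (fun F => E ⊆ F))]
    · rw [← Finset.sum_neg_distrib]
      refine Finset.sum_congr rfl fun E hE => ?_
      rw [Finset.mem_erase, mem_fcs hG] at hE
      rw [← Finset.mul_sum]
      have eu := euler hG hE.2 hE.1 (((fcs G).erase G).filter (fun F => E ⊆ F)) (by
        intro F
        rw [Finset.mem_filter, Finset.mem_erase, mem_fcs hG]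
        tauto)
      have eu2 := congrArg (Int.cast : ℤ → ℚ[X]) eu
      push_cast at eu2
      have e2 : ∑ F ∈ ((fcs G).erase G).filter (fun F => E ⊆ F), (-1 : ℚ[X]) ^ (rk G - rk F)
          = (-1) ^ rk G * ∑ F ∈ ((fcs G).erase G).filter (fun F => E ⊆ F), (-1 : ℚ[X]) ^ rk F := by
        rw [Finset.mul_sum]
        refine Finset.sum_congr rfl fun F hF => ?_
        rw [Finset.mem_filter, Finset.mem_erase, mem_fcs hG] at hF
        have h1 := rk_le hG hF.1.2
        conv_rhs => rw [show rk G = (rk G - rk F) + rk F by omega, pow_add, mul_assoc,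
          ← mul_pow]
        simp
      rw [e2, eq_neg_of_add_eq_zero_left eu2, mul_neg, ← mul_pow]
      simp
    · intro F E
      rw [Finset.mem_filter, Finset.mem_erase, Finset.mem_erase, mem_fcs hG, mem_fcs hG]
      constructor
      · rintro ⟨⟨h1, h2⟩, h3⟩
        rw [mem_fcs (h2.polytope hG)] at h3
        refine ⟨⟨⟨h1, h2⟩, h3.sub⟩, ?_, h2.trans hG h3⟩
        rintro rfl
        exact h1 (h2.sub.antisymm h3.sub)
      · rintro ⟨⟨⟨h1, h2⟩, h3⟩, h4, h5⟩
        refine ⟨⟨h1, h2⟩, ?_⟩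
        rw [mem_fcs (h2.polytope hG)]
        exact h5.restrict h2 h3
  have hsym : reflect (rk G - 1) (relH ∅ G) = relH ∅ G := by
    have e : rk G = 1 + (rk G - 1) := by omega
    have hX : (1 - X : ℚ[X]) ≠ 0 := by
      intro h
      have := congrArg (fun p => coeff p 0) h
      simp at this
    rw [e, reflect_mul _ _ (by simpa using deg_X1 1) (relH_deg hG hne), reflect_X1] at hanti
    refine mul_left_cancel₀ hX ?_
    rw [hanti]; ring
  refine ⟨?_, fun _ => hsym⟩
  have hps := poly_step (rk G - 1) (gg G) (relH ∅ G) (relH_deg hG hne) hsym (gg_coeff G)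
  rw [Nat.sub_add_cancel (by omega)] at hps
  rw [hps, hq, ← Finset.sum_erase_add _ _ ((mem_fcs hG).2 (IsFace.self G))]
  simp

end ToricPart

/-- Stanley's toric Dehn–Sommerville relations: for every `d`-polytope `P` and
`0 ≤ k ≤ d`, `h_k(P) = h_{d-k}(P)`. -/
theorem toric_dehn_sommerville {V : Type*} [AddCommGroup V] [Module ℝ V]
    (P : Set V) (hP : IsPolytope P) (d : ℕ) (hdim : pdim P = (d : ℤ))
    (k : ℕ) (hk : k ≤ d) :
    (toricH P).coeff k = (toricH P).coeff (d - k) := by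
  have hr : rk P = d + 1 := by have := rk_pdim P; omega
  have hne : P ≠ ∅ := by
    rintro rfl
    rw [rk_emp] at hr; omega
  have h := (key (rk P) P hP rfl).2 hne
  rw [hr, Nat.add_sub_cancel] at h
  change (relH ∅ P).coeff k = (relH ∅ P).coeff (d - k)
  conv_lhs => rw [← h]
  rw [coeff_reflect, revAt_le hk]
end
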